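/- Let n > n₁ ≥ 2 and m > m₁ ≥ 2 be integers with F_n - F_{n₁} = T_m - T_{m₁}. Then min{(n-n₁)·log α, (m-m₁)·log α_T} < 2.03×10^15·log n, where α = (1+√5)/2 and α_T is the unique real root of x³ - x² - x - 1. -/

import Mathlib

/-- The Tribonacci sequence: T 0 = 0, T 1 = T 2 = 1,
    T (k+3) = T (k+2) + T (k+1) + T k. -/
def trib : ℕ → ℤ
  | 0 => 0
  | 1 => 1
  | 2 => 1
  | n + 3 => trib (n + 2) + trib (n + 1) + trib n

set_option linter.all false

/-! ## Kummer -/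

lemma no_root_aux1 (n : ℕ) : ∀ a d : ℤ, d.natAbs ≤ n → a^3 - 2*a^2*d + 2*d^3 = 0 → d = 0 := by
  induction n with
  | zero => intro a d h _; omega
  | succ n ih =>
    intro a d hd h
    have ha : Even a := by
      have : Even (a^3) := ⟨a^2*d - d^3, by linarith⟩
      rwa [Int.even_pow' (by norm_num)] at this
    obtain ⟨a', rfl⟩ := ha
    have hd2 : Even d := by
      have : Even (d^3) := ⟨2*a'^2*d - 2*a'^3, by nlinarith⟩
      rwa [Int.even_pow' (by norm_num)] at this
    obtain ⟨d', rfl⟩ := hd2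
    by_cases h0 : d' = 0
    · simp [h0]
    have := ih a' d' (by omega) (by nlinarith)
    omega

lemma no_root_aux2 (n : ℕ) : ∀ a d : ℤ, d.natAbs ≤ n → a^3 - a^2*d - a*d^2 - d^3 = 0 → d = 0 := by
  induction n with
  | zero => intro a d h _; omega
  | succ n ih =>
    intro a d hd h
    have key : Even a ∧ Even d := by
      rcases Int.even_or_odd' a with ⟨x, rfl | rfl⟩ <;> rcases Int.even_or_odd' d with ⟨y, rfl | rfl⟩
      · exact ⟨⟨x, by ring⟩, ⟨y, by ring⟩⟩
      · exfalso; ring_nf at h; omega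
      · exfalso; ring_nf at h; omega
      · exfalso; ring_nf at h; omega
    obtain ⟨⟨a', rfl⟩, ⟨d', rfl⟩⟩ := key
    by_cases h0 : d' = 0
    · simp [h0]
    have := ih a' d' (by omega) (by nlinarith)
    omega

lemma rat_no_root1 (t : ℚ) : t^3 - 2*t^2 + 2 ≠ 0 := by
  intro h
  have hd : (t.den : ℚ) ≠ 0 := by exact_mod_cast t.den_ne_zero
  have e : t = t.num / t.den := (Rat.num_div_den t).symm
  rw [e] at h
  field_simp at h
  have h' : (t.num:ℤ)^3 - 2*t.num^2*(t.den:ℤ) + 2*(t.den:ℤ)^3 = 0 := by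
    have : ((t.num:ℚ))^3 - 2*t.num^2*(t.den:ℚ) + 2*(t.den:ℚ)^3 = 0 := by linear_combination h
    exact_mod_cast this
  have := no_root_aux1 _ _ _ le_rfl h'
  exact t.den_ne_zero (by exact_mod_cast this)

lemma rat_no_root2 (t : ℚ) : t^3 - t^2 - t - 1 ≠ 0 := by
  intro h
  have hd : (t.den : ℚ) ≠ 0 := by exact_mod_cast t.den_ne_zero
  have e : t = t.num / t.den := (Rat.num_div_den t).symm
  rw [e] at h
  field_simp at h
  have h' : (t.num:ℤ)^3 - t.num^2*(t.den:ℤ) - t.num*(t.den:ℤ)^2 - (t.den:ℤ)^3 = 0 := by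
    have : ((t.num:ℚ))^3 - t.num^2*(t.den:ℚ) - t.num*(t.den:ℚ)^2 - (t.den:ℚ)^3 = 0 := by
      linear_combination h
    exact_mod_cast this
  have := no_root_aux2 _ _ _ le_rfl h'
  exact t.den_ne_zero (by exact_mod_cast this)

lemma om_lin (ω : ℝ) (hω : ω^3 - ω^2 - ω - 1 = 0) (p q r : ℚ)
    (h : (p:ℝ) + q*ω + r*ω^2 = 0) : p = 0 ∧ q = 0 ∧ r = 0 := by
  have irr : ∀ t : ℚ, ω ≠ t := by
    rintro t rfl
    apply rat_no_root2 t
    exact_mod_cast hω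
  have lin : ∀ p q : ℚ, (p:ℝ) + q*ω = 0 → p = 0 ∧ q = 0 := by
    intro p q h
    have hq : q = 0 := by
      by_contra hq
      have hq' : (q:ℝ) ≠ 0 := by exact_mod_cast hq
      apply irr (-p/q)
      push_cast
      field_simp
      linarith
    subst hq
    simp at h
    exact ⟨h, rfl⟩
  by_cases hr : r = 0
  · subst hr
    have := lin p q (by simpa using h)
    exact ⟨this.1, this.2, rfl⟩
  exfalso
  have hr' : (r:ℝ) ≠ 0 := by exact_mod_cast hr
  obtain ⟨s, hs⟩ : ∃ s : ℚ, s = -p/r := ⟨_, rfl⟩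
  obtain ⟨t, ht⟩ : ∃ s : ℚ, s = -q/r := ⟨_, rfl⟩
  have h2 : ω^2 = s + t*ω := by
    rw [hs, ht]; push_cast; field_simp; linarith
  have := lin (s*t-1-s) (s+t^2-1-t) (by
    push_cast
    linear_combination hω - (ω - 1 + t) * h2)
  apply rat_no_root1 t
  obtain ⟨h3, h4⟩ := this
  have : s = 1 + t - t^2 := by linarith
  rw [this] at h3
  linarith

def nrm (p q r : ℚ) : ℚ :=
  p*((p+r)*(p+q+2*r) - (q+r)*(q+2*r)) - q*(r*(p+q+2*r) - (q+r)*(q+r)) + r*(r*(q+2*r)-(p+r)*(q+r))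

lemma nrm_sq (p q r : ℚ) :
    nrm (p^2+2*q*r+r^2) (2*p*q+2*q*r+2*r^2) (q^2+2*p*r+2*q*r+2*r^2) = (nrm p q r)^2 := by
  unfold nrm; ring

lemma five_nsq (x : ℚ) : x^2 ≠ 5 := by
  intro h
  have := Nat.Prime.irrational_sqrt (p := 5) (by norm_num)
  apply this
  refine ⟨|x|, ?_⟩
  have h' : ((x:ℝ))^2 = 5 := by exact_mod_cast h
  push_cast
  rw [← h', Real.sqrt_sq_eq_abs]

lemma sq_coords (ω : ℝ) (hω : ω^3 - ω^2 - ω - 1 = 0) (p q r c A B C : ℚ)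
    (h : (c:ℝ) * ((p:ℝ) + q*ω + r*ω^2)^2 = A + B*ω + C*ω^2) :
    c*(p^2+2*q*r+r^2) = A ∧ c*(2*p*q+2*q*r+2*r^2) = B ∧ c*(q^2+2*p*r+2*q*r+2*r^2) = C := by
  have := om_lin ω hω (c*(p^2+2*q*r+r^2) - A) (c*(2*p*q+2*q*r+2*r^2) - B)
    (c*(q^2+2*p*r+2*q*r+2*r^2)-C) (by
      push_cast
      linear_combination h - c*(2*q*r + r^2 * (ω+1))*hω)
  refine ⟨by linarith [this.1], by linarith [this.2.1], by linarith [this.2.2]⟩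

lemma om_desc (n : ℕ) : ∀ p q r d : ℤ, d.natAbs ≤ n → p^2+2*q*r+r^2 = 0 →
    2*p*q+2*q*r+2*r^2 = d^2 → q^2+2*p*r+2*q*r+2*r^2 = 0 → d = 0 := by
  induction n with
  | zero => intro p q r d h _ _ _; omega
  | succ n ih =>
    intro p q r d hd h1 h2 h3
    have hq : Even q := by
      have : Even (q^2) := ⟨-(p*r+q*r+r^2), by linarith⟩
      rwa [Int.even_pow' (by norm_num)] at this
    have hdd : Even d := by
      have : Even (d^2) := ⟨p*q+q*r+r^2, by linarith⟩
      rwa [Int.even_pow' (by norm_num)] at this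
    obtain ⟨q', rfl⟩ := hq
    have key : Even p ∧ Even r := by
      rcases Int.even_or_odd' p with ⟨x, rfl | rfl⟩ <;> rcases Int.even_or_odd' r with ⟨y, rfl | rfl⟩
      · exact ⟨⟨x, by ring⟩, ⟨y, by ring⟩⟩
      · exfalso; ring_nf at h1; omega
      · exfalso; ring_nf at h1; omega
      · exfalso; ring_nf at h1; omega
    obtain ⟨⟨p', rfl⟩, ⟨r', rfl⟩⟩ := key
    obtain ⟨d', rfl⟩ := hdd
    by_cases h0 : d' = 0
    · simp [h0]
    have := ih p' q' r' d' (by omega) (by nlinarith) (by nlinarith) (by nlinarith)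
    omega

/-- elements of `ℚ(ω)` -/
lemma mem_om (ω : ℝ) (hω : ω^3 - ω^2 - ω - 1 = 0) (x : ℝ)
    (hx : x ∈ IntermediateField.adjoin ℚ {ω}) : ∃ p q r : ℚ, x = (p:ℝ) + q*ω + r*ω^2 := by
  have hint : IsIntegral ℚ ω := by
    refine ⟨Polynomial.X^3 - Polynomial.X^2 - Polynomial.X - 1, ?_, ?_⟩
    · monicity!
    · simp; linarith
  rw [← IntermediateField.mem_toSubalgebra,
    IntermediateField.adjoin_simple_toSubalgebra_of_isAlgebraic hint.isAlgebraic,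
    Algebra.adjoin_singleton_eq_range_aeval] at hx
  obtain ⟨f, rfl⟩ := hx
  have hf : ∀ f : Polynomial ℚ, ∃ p q r : ℚ, Polynomial.aeval ω f = (p:ℝ) + q*ω + r*ω^2 := by
    intro f
    induction f using Polynomial.induction_on with
    | C a => exact ⟨a, 0, 0, by simp⟩
    | add f g hf hg =>
      obtain ⟨p, q, r, h⟩ := hf
      obtain ⟨p', q', r', h'⟩ := hg
      refine ⟨p+p', q+q', r+r', ?_⟩
      rw [map_add, h, h']; push_cast; ring
    | monomial n a ih =>
      obtain ⟨p, q, r, h⟩ := ih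
      refine ⟨r, p+r, q+r, ?_⟩
      have : Polynomial.aeval ω (Polynomial.C a * Polynomial.X^(n+1)) =
        Polynomial.aeval ω (Polynomial.C a * Polynomial.X^n) * ω := by
        simp [pow_succ, mul_assoc]
      rw [this, h]; push_cast
      linear_combination r * hω
  exact hf f

lemma om_nsq (ω : ℝ) (hω : ω^3 - ω^2 - ω - 1 = 0) (p q r : ℚ) :
    ((p:ℝ) + q*ω + r*ω^2)^2 ≠ ω := by
  intro h
  obtain ⟨h1, h2, h3⟩ := sq_coords ω hω p q r 1 0 1 0 (by push_cast; linarith)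
  obtain ⟨d, hd, P, Q, R, hP, hQ, hR⟩ : ∃ d : ℤ, d ≠ 0 ∧ ∃ P Q R : ℤ, p * d = P ∧ q*d = Q ∧ r*d=R := by
    refine ⟨p.den*q.den*r.den, ?_, p.num*q.den*r.den, q.num*p.den*r.den, r.num*p.den*q.den, ?_,?_,?_⟩
    · have := p.den_ne_zero; have := q.den_ne_zero; have := r.den_ne_zero; positivity
    · have := Rat.mul_den_eq_num p; push_cast; rw [← this]; ring
    · have := Rat.mul_den_eq_num q; push_cast; rw [← this]; ring
    · have := Rat.mul_den_eq_num r; push_cast; rw [← this]; ring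
  apply hd
  apply om_desc _ P Q R d le_rfl
  · have : ((P:ℚ))^2+2*Q*R+R^2 = 0 := by
      rw [← hP, ← hQ, ← hR]; linear_combination d^2 * h1
    exact_mod_cast this
  · have : 2*(P:ℚ)*Q+2*Q*R+2*R^2 = d^2 := by
      rw [← hP, ← hQ, ← hR]; linear_combination d^2 * h2
    exact_mod_cast this
  · have : (Q:ℚ)^2+2*P*R+2*Q*R+2*R^2 = 0 := by
      rw [← hP, ← hQ, ← hR]; linear_combination d^2 * h3
    exact_mod_cast this

lemma om_nsq5 (ω : ℝ) (hω : ω^3 - ω^2 - ω - 1 = 0) (p q r : ℚ) :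
    5*((p:ℝ) + q*ω + r*ω^2)^2 ≠ ω := by
  intro h
  obtain ⟨h1, h2, h3⟩ := sq_coords ω hω p q r 5 0 1 0 (by push_cast; linarith)
  have := nrm_sq p q r
  have e1 : p^2+2*q*r+r^2 = 0 := by linarith
  have e2 : 2*p*q+2*q*r+2*r^2 = 1/5 := by linarith
  have e3 : q^2+2*p*r+2*q*r+2*r^2 = 0 := by linarith
  rw [e1, e2, e3] at this
  apply five_nsq (25 * nrm p q r)
  rw [mul_pow, ← this]; norm_num [nrm]

lemma five_nsq_om (ω : ℝ) (hω : ω^3 - ω^2 - ω - 1 = 0) (p q r : ℚ) :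
    ((p:ℝ) + q*ω + r*ω^2)^2 ≠ 5 := by
  intro h
  obtain ⟨h1, h2, h3⟩ := sq_coords ω hω p q r 1 5 0 0 (by push_cast; linarith)
  have := nrm_sq p q r
  have e1 : p^2+2*q*r+r^2 = 5 := by linarith
  have e2 : 2*p*q+2*q*r+2*r^2 = 0 := by linarith
  have e3 : q^2+2*p*r+2*q*r+2*r^2 = 0 := by linarith
  rw [e1, e2, e3] at this
  apply five_nsq (nrm p q r / 5)
  rw [div_pow, ← this]; norm_num [nrm]

/-- quadratic extension -/
def qext (K : Subfield ℝ) (b : ℝ) (hb : b^2 ∈ K) : Subfield ℝ where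
  carrier := {x | ∃ u ∈ K, ∃ v ∈ K, x = u + v*b}
  mul_mem' := by
    rintro _ _ ⟨u, hu, v, hv, rfl⟩ ⟨u', hu', v', hv', rfl⟩
    refine ⟨u*u' + v*v'*b^2, ?_, u*v'+v*u', ?_, by ring⟩
    · exact add_mem (mul_mem hu hu') (mul_mem (mul_mem hv hv') hb)
    · exact add_mem (mul_mem hu hv') (mul_mem hv hu')
  one_mem' := ⟨1, one_mem _, 0, zero_mem _, by simp⟩
  add_mem' := by
    rintro _ _ ⟨u, hu, v, hv, rfl⟩ ⟨u', hu', v', hv', rfl⟩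
    exact ⟨u+u', add_mem hu hu', v+v', add_mem hv hv', by ring⟩
  zero_mem' := ⟨0, zero_mem _, 0, zero_mem _, by simp⟩
  neg_mem' := by
    rintro _ ⟨u, hu, v, hv, rfl⟩
    exact ⟨-u, neg_mem hu, -v, neg_mem hv, by ring⟩
  inv_mem' := by
    rintro _ ⟨u, hu, v, hv, rfl⟩
    by_cases h0 : u - v*b = 0
    · by_cases hv0 : v = 0
      · subst hv0
        exact ⟨u⁻¹, inv_mem hu, 0, zero_mem _, by simp⟩
      · have hb' : b = u / v := by field_simp; linarith
        refine ⟨(u+v*b)⁻¹, ?_, 0, zero_mem _, by simp⟩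
        rw [hb']
        exact inv_mem (add_mem hu (mul_mem hv (div_mem hu hv)))
    · have hd : u^2 - v^2*b^2 ∈ K := sub_mem (pow_mem hu 2) (mul_mem (pow_mem hv 2) hb)
      refine ⟨u/(u^2-v^2*b^2), div_mem hu hd, (-v)/(u^2-v^2*b^2), div_mem (neg_mem hv) hd, ?_⟩
      by_cases h1 : u + v*b = 0
      · have : u^2 - v^2*b^2 = 0 := by linear_combination (u-v*b)*h1
        rw [this, h1]; simp
      · have : u^2 - v^2*b^2 ≠ 0 := by
          have := mul_ne_zero h0 h1
          intro h; apply this; linear_combination h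
        field_simp
        ring

lemma le_qext (K : Subfield ℝ) (b : ℝ) (hb : b^2 ∈ K) {x : ℝ} (hx : x ∈ K) : x ∈ qext K b hb :=
  ⟨x, hx, 0, zero_mem _, by simp⟩

lemma self_qext (K : Subfield ℝ) (b : ℝ) (hb : b^2 ∈ K) : b ∈ qext K b hb :=
  ⟨0, zero_mem _, 1, one_mem _, by simp⟩

lemma qext_uniq (K : Subfield ℝ) (b : ℝ) (hbK : b ∉ K) (u v : ℝ) (hu : u ∈ K) (hv : v ∈ K)
    (h : u + v*b = 0) : u = 0 ∧ v = 0 := by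
  have hv0 : v = 0 := by
    by_contra hv0
    apply hbK
    have : b = -u/v := by field_simp; linarith
    rw [this]; exact div_mem (neg_mem hu) hv
  subst hv0
  simp at h
  exact ⟨h, rfl⟩

lemma qext_sq (K : Subfield ℝ) (b : ℝ) (hb : b^2 ∈ K) (hbK : b ∉ K) (c : ℝ) (hc : c ∈ K)
    (x : ℝ) (hx : x ∈ qext K b hb) (h : x^2 = c) (hc0 : c ≠ 0) (hb0 : b ≠ 0) :
    (∃ y ∈ K, y^2 = c) ∨ (∃ y ∈ K, y^2 = c * b^2) := by
  obtain ⟨u, hu, v, hv, rfl⟩ := hx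
  have := qext_uniq K b hbK (u^2+v^2*b^2-c) (2*u*v) 
    (sub_mem (add_mem (pow_mem hu 2) (mul_mem (pow_mem hv 2) hb)) hc)
    (mul_mem (mul_mem (by exact_mod_cast natCast_mem K 2) hu) hv) (by linear_combination h)
  have h2 : u * v = 0 := by linarith [this.2]
  rcases mul_eq_zero.mp h2 with rfl | rfl
  · right
    exact ⟨v*b^2, mul_mem hv hb, by linear_combination b^2 * this.1⟩
  · left
    exact ⟨u, hu, by linear_combination this.1⟩

noncomputable def K0 (ω : ℝ) : Subfield ℝ := (IntermediateField.adjoin ℚ {ω}).toSubfield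

lemma sq5_mem (ω : ℝ) : (Real.sqrt 5)^2 ∈ K0 ω := by
  rw [Real.sq_sqrt (by norm_num)]; exact_mod_cast natCast_mem (K0 ω) 5

noncomputable def KK (ω : ℝ) : Subfield ℝ := qext (K0 ω) (Real.sqrt 5) (sq5_mem ω)

lemma om_mem_K0 (ω : ℝ) : ω ∈ K0 ω := IntermediateField.mem_adjoin_simple_self ℚ ω

lemma s5_notin (ω : ℝ) (hω : ω^3 - ω^2 - ω - 1 = 0) : Real.sqrt 5 ∉ K0 ω := by
  intro h
  obtain ⟨p, q, r, h⟩ := mem_om ω hω _ h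
  apply five_nsq_om ω hω p q r
  rw [← h, Real.sq_sqrt (by norm_num)]

/-- squares in `KK` -/
lemma KK_sq (ω : ℝ) (hω : ω^3 - ω^2 - ω - 1 = 0) (A B x : ℝ) (hA : A ∈ K0 ω) (hB : B ∈ K0 ω)
    (hx : x ∈ KK ω) (h : x^2 = A + B * Real.sqrt 5) :
    ∃ u ∈ K0 ω, ∃ v ∈ K0 ω, u^2 + 5*v^2 = A ∧ 2*u*v = B := by
  obtain ⟨u, hu, v, hv, rfl⟩ := hx
  have s5 : (Real.sqrt 5)^2 = 5 := Real.sq_sqrt (by norm_num)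
  have h5 : (5:ℝ) ∈ K0 ω := by exact_mod_cast natCast_mem (K0 ω) 5
  have h2 : (2:ℝ) ∈ K0 ω := by exact_mod_cast natCast_mem (K0 ω) 2
  have := qext_uniq (K0 ω) _ (s5_notin ω hω) (u^2+5*v^2 - A) (2*u*v - B)
    (sub_mem (add_mem (pow_mem hu 2) (mul_mem h5 (pow_mem hv 2))) hA)
    (sub_mem (mul_mem (mul_mem h2 hu) hv) hB) (by linear_combination h - v^2 * s5)
  exact ⟨u, hu, v, hv, by linarith [this.1], by linarith [this.2]⟩

lemma KK_neg (ω : ℝ) (hω : ω^3 - ω^2 - ω - 1 = 0) (A B x : ℝ) (hA : A ∈ K0 ω) (hB : B ∈ K0 ω)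
    (hx : x ∈ KK ω) (h : x^2 = A + B * Real.sqrt 5) (hneg : A^2 - 5*B^2 < 0) : False := by
  obtain ⟨u, hu, v, hv, h1, h2⟩ := KK_sq ω hω A B x hA hB hx h
  have : (u^2-5*v^2)^2 = A^2 - 5*B^2 := by rw [← h1, ← h2]; ring
  nlinarith [sq_nonneg (u^2-5*v^2)]

lemma KK_five (ω : ℝ) (hω : ω^3 - ω^2 - ω - 1 = 0) (A B x d : ℝ) (hA : A ∈ K0 ω) (hB : B ∈ K0 ω)
    (hx : x ∈ KK ω) (h : x^2 = A + B * Real.sqrt 5) (hd : d ∈ K0 ω) (hd0 : d ≠ 0)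
    (hneg : 5*(A^2 - 5*B^2) = d^2) : False := by
  obtain ⟨u, hu, v, hv, h1, h2⟩ := KK_sq ω hω A B x hA hB hx h
  have e : 5*(u^2-5*v^2)^2 = d^2 := by rw [← hneg, ← h1, ← h2]; ring
  have h5 : (5:ℝ) ∈ K0 ω := by exact_mod_cast natCast_mem (K0 ω) 5
  have hw : u^2-5*v^2 ∈ K0 ω := sub_mem (pow_mem hu 2) (mul_mem h5 (pow_mem hv 2))
  have hw0 : u^2-5*v^2 ≠ 0 := by
    intro h0; rw [h0] at e; apply hd0; simpa using e.symm
  obtain ⟨p, q, r, hh⟩ := mem_om ω hω _ (div_mem hd hw)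
  apply five_nsq_om ω hω p q r
  rw [← hh, div_pow, ← e]
  field_simp

lemma KK_om (ω : ℝ) (hω : ω^3 - ω^2 - ω - 1 = 0) (x : ℝ)
    (hx : x ∈ KK ω) (h : x^2 = ω) : False := by
  obtain ⟨u, hu, v, hv, h1, h2⟩ := KK_sq ω hω ω 0 x (om_mem_K0 ω) (zero_mem _) hx (by simpa using h)
  have h2 : u * v = 0 := by linarith
  rcases mul_eq_zero.mp h2 with rfl | rfl
  · obtain ⟨p, q, r, hh⟩ := mem_om ω hω _ hv
    exact om_nsq5 ω hω p q r (by rw [← hh]; linarith)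
  · obtain ⟨p, q, r, hh⟩ := mem_om ω hω _ hu
    exact om_nsq ω hω p q r (by rw [← hh]; linarith)

lemma kummer (ω b1 b2 b3 : ℝ) (hω : ω^3 - ω^2 - ω - 1 = 0) (hpos : 0 < ω)
    (hδ : 0 < -ω^2 + 4*ω - 1)
    (h1 : b1^2 = (1 + Real.sqrt 5)/2) (h2 : b2^2 = ω) (h3 : b3^2 = (-ω^2+4*ω-1)/Real.sqrt 5)
    (x : Fin 2 → Fin 2 → Fin 2 → ℝ) (hx : ∀ i j k, x i j k ∈ KK ω)
    (h : ∑ i, ∑ j, ∑ k, x i j k * (b1^(i:ℕ) * b2^(j:ℕ) * b3^(k:ℕ)) = 0) (i j k : Fin 2) : x i j k = 0 := by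
  have s5 : (Real.sqrt 5)^2 = 5 := Real.sq_sqrt (by norm_num)
  have s5p : 0 < Real.sqrt 5 := by positivity
  obtain ⟨δ, hδe⟩ : ∃ δ, δ = -ω^2+4*ω-1 := ⟨_, rfl⟩
  rw [← hδe] at hδ h3
  have h5 : (5:ℝ) ∈ K0 ω := by exact_mod_cast natCast_mem (K0 ω) 5
  have h2' : (2:ℝ) ∈ K0 ω := by exact_mod_cast natCast_mem (K0 ω) 2
  have h10 : (10:ℝ) ∈ K0 ω := by exact_mod_cast natCast_mem (K0 ω) 10
  have h4 : (4:ℝ) ∈ K0 ω := by exact_mod_cast natCast_mem (K0 ω) 4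
  have hom := om_mem_K0 ω
  have hδm : δ ∈ K0 ω := by
    rw [hδe]; exact sub_mem (add_mem (neg_mem (pow_mem hom 2)) (mul_mem h4 hom)) (one_mem _)
  have hhalf : (1/2:ℝ) ∈ K0 ω := div_mem (one_mem _) h2'
  have h3' : b3^2 = 0 + (δ/5) * Real.sqrt 5 := by
    rw [h3]; field_simp; linear_combination -δ * s5
  have h1' : b1^2 = 1/2 + 1/2 * Real.sqrt 5 := by rw [h1]; ring
  have h13 : b1^2*b3^2 = δ/2 + (δ/10) * Real.sqrt 5 := by
    rw [h1', h3']; linear_combination δ/10 * s5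
  have K1 : b1^2 ∈ KK ω := ⟨_, hhalf, _, hhalf, h1'⟩
  have K2 : b2^2 ∈ KK ω := ⟨ω, hom, 0, zero_mem _, by rw [h2]; ring⟩
  have K3 : b3^2 ∈ KK ω := ⟨_, zero_mem _, _, div_mem hδm h5, h3'⟩
  have p1 : 0 < b1^2 := by rw [h1]; positivity
  have p2 : 0 < b2^2 := by rw [h2]; positivity
  have p3 : 0 < b3^2 := by rw [h3]; positivity
  -- seven nonsquares
  have n1 : ∀ y ∈ KK ω, y^2 ≠ b1^2 := fun y hy e =>
    KK_neg ω hω (1/2) (1/2) y hhalf hhalf hy (by rw [e, h1']) (by norm_num)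
  have n2 : ∀ y ∈ KK ω, y^2 ≠ b2^2 := fun y hy e => KK_om ω hω y hy (by rw [e, h2])
  have n3 : ∀ y ∈ KK ω, y^2 ≠ b3^2 := fun y hy e =>
    KK_neg ω hω 0 (δ/5) y (zero_mem _) (div_mem hδm h5) hy (by rw [e, h3']) (by
      have : 0 < (δ/5)^2 := by positivity
      linarith)
  have n12 : ∀ y ∈ KK ω, y^2 ≠ b2^2*b1^2 := fun y hy e =>
    KK_neg ω hω (1/2*ω) (1/2*ω) y (mul_mem hhalf hom) (mul_mem hhalf hom) hy
      (by rw [e, h1', h2]; ring) (by nlinarith [pow_pos hpos 2])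
  have n23 : ∀ y ∈ KK ω, y^2 ≠ b3^2*b2^2 := fun y hy e =>
    KK_neg ω hω 0 (δ/5*ω) y (zero_mem _) (mul_mem (div_mem hδm h5) hom) hy
      (by rw [e, h3', h2]; ring) (by
      have : 0 < (δ/5*ω)^2 := by positivity
      linarith)
  have n13 : ∀ y ∈ KK ω, y^2 ≠ b3^2*b1^2 := fun y hy e =>
    KK_five ω hω (δ/2) (δ/10) y δ (div_mem hδm h2') (div_mem hδm h10) hy
      (by rw [e, ← h13]; ring) hδm hδ.ne' (by ring)
  have n123 : ∀ y ∈ KK ω, y^2 ≠ b3^2*b2^2*b1^2 := fun y hy e =>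
    KK_five ω hω (δ/2*ω) (δ/10*ω) y (δ*ω) (mul_mem (div_mem hδm h2') hom)
      (mul_mem (div_mem hδm h10) hom) hy
      (by rw [e, mul_right_comm, mul_comm (b3^2), h13, h2]; ring) (mul_mem hδm hom)
      (mul_pos hδ hpos).ne' (by ring)
  have q1 : b1 ≠ 0 := by rintro rfl; simp at p1
  have q2 : b2 ≠ 0 := by rintro rfl; simp at p2
  have q3 : b3 ≠ 0 := by rintro rfl; simp at p3
  have m1 : b1 ∉ KK ω := fun hh => n1 b1 hh rfl
  let F1 := qext (KK ω) b1 K1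
  have K2' : b2^2 ∈ F1 := le_qext _ _ _ K2
  have K3' : b3^2 ∈ F1 := le_qext _ _ _ K3
  have sqF1 : ∀ c ∈ KK ω, c ≠ 0 → ∀ y ∈ F1, y^2 = c → (∃ y ∈ KK ω, y^2 = c) ∨ ∃ y ∈ KK ω, y^2 = c*b1^2 :=
    fun c hc hc0 y hy e => qext_sq _ b1 K1 m1 c hc y hy e hc0 q1
  have m2 : b2 ∉ F1 := by
    intro hh
    rcases sqF1 _ K2 p2.ne' b2 hh rfl with ⟨y, hy, e⟩ | ⟨y, hy, e⟩
    · exact n2 y hy e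
    · exact n12 y hy e
  let F2 := qext F1 b2 K2'
  have m3 : b3 ∉ F2 := by
    intro hh
    rcases qext_sq F1 b2 K2' m2 _ K3' b3 hh rfl p3.ne' q2 with ⟨y, hy, e⟩ | ⟨y, hy, e⟩
    · rcases sqF1 _ K3 p3.ne' y hy e with ⟨y, hy, e⟩ | ⟨y, hy, e⟩
      · exact n3 y hy e
      · exact n13 y hy e
    · rcases sqF1 _ (mul_mem K3 K2) (by positivity) y hy e with ⟨y, hy, e⟩ | ⟨y, hy, e⟩
      · exact n23 y hy e
      · exact n123 y hy e
  simp only [Fin.sum_univ_two, Fin.val_zero, Fin.val_one, pow_zero, pow_one] at h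
  have a1 : ∀ i j k, x i j k ∈ F1 := fun i j k => le_qext _ _ _ (hx i j k)
  have b1F : b1 ∈ F1 := self_qext _ _ _
  have a2 : ∀ k : Fin 2, (x 0 0 k + x 1 0 k * b1) + (x 0 1 k + x 1 1 k * b1) * b2 ∈ F2 := fun k =>
    ⟨_, add_mem (a1 _ _ _) (mul_mem (a1 _ _ _) b1F), _, add_mem (a1 _ _ _) (mul_mem (a1 _ _ _) b1F), rfl⟩
  have r3 := qext_uniq F2 b3 m3 _ _ (a2 0) (a2 1) (by linear_combination h)
  have r2 : ∀ k : Fin 2, x 0 0 k = 0 ∧ x 1 0 k = 0 ∧ x 0 1 k = 0 ∧ x 1 1 k = 0 := by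
    intro k
    have hk : (x 0 0 k + x 1 0 k * b1) + (x 0 1 k + x 1 1 k * b1) * b2 = 0 := by
      fin_cases k
      · exact r3.1
      · exact r3.2
    have r := qext_uniq F1 b2 m2 _ _ (add_mem (a1 _ _ _) (mul_mem (a1 _ _ _) b1F))
      (add_mem (a1 _ _ _) (mul_mem (a1 _ _ _) b1F)) hk
    have r' := qext_uniq (KK ω) b1 m1 _ _ (hx _ _ _) (hx _ _ _) r.1
    have r'' := qext_uniq (KK ω) b1 m1 _ _ (hx _ _ _) (hx _ _ _) r.2
    exact ⟨r'.1, r'.2, r''.1, r''.2⟩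
  obtain ⟨e1, e2, e3, e4⟩ := r2 k
  fin_cases i <;> fin_cases j <;> assumption

lemma div_one_node (f : ℂ → ℂ) (a : ℂ) (τ : ℕ) (hf : Differentiable ℂ f)
    (ho : (τ:ℕ∞) ≤ analyticOrderAt f a) :
    ∃ h : ℂ → ℂ, Differentiable ℂ h ∧ ∀ z, f z = (z-a)^τ * h z := by
  induction τ generalizing f with
  | zero => exact ⟨f, hf, by simp⟩
  | succ τ ih =>
    have hfa : f a = 0 := by
      by_contra h
      have := (hf.analyticAt a).analyticOrderAt_eq_zero.2 h
      rw [this] at ho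
      simp at ho
    have hd : Differentiable ℂ (dslope f a) := by
      rw [← differentiableOn_univ]
      exact (Complex.differentiableOn_dslope Filter.univ_mem).2 hf.differentiableOn
    have hfe : ∀ z, f z = (z-a) * dslope f a z := by
      intro z
      have := sub_smul_dslope f a z
      rw [hfa, sub_zero, smul_eq_mul] at this
      exact this.symm
    have hfe' : f = (fun z => z - a) * dslope f a := by
      funext z; exact hfe z
    have hord : analyticOrderAt (fun z : ℂ => z - a) a = 1 := by
      have h1 : AnalyticAt ℂ (fun z : ℂ => z - a) a := by fun_prop
      have := (h1.analyticOrderAt_eq_natCast (n := 1)).2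
        ⟨fun _ => 1, analyticAt_const, one_ne_zero, by simp⟩
      exact_mod_cast this
    rw [hfe', analyticOrderAt_mul (by fun_prop) (hd.analyticAt a), hord] at ho
    have ho' : (τ:ℕ∞) ≤ analyticOrderAt (dslope f a) a := by
      push_cast at ho
      rw [add_comm] at ho
      exact (ENat.add_le_add_iff_left (by simp)).1 ho
    obtain ⟨h, hh, he⟩ := ih _ hd ho'
    exact ⟨h, hh, fun z => by rw [hfe, he]; ring⟩

lemma div_nodes (τ : ℕ) (N : Finset ℂ) (f : ℂ → ℂ) (hf : Differentiable ℂ f)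
    (ho : ∀ a ∈ N, (τ:ℕ∞) ≤ analyticOrderAt f a) :
    ∃ h : ℂ → ℂ, Differentiable ℂ h ∧ ∀ z, f z = (∏ a ∈ N, (z-a))^τ * h z := by
  classical
  induction N using Finset.induction_on generalizing f with
  | empty => exact ⟨f, hf, by simp⟩
  | insert a N ha ih =>
    obtain ⟨g, hg, he⟩ := div_one_node f a τ hf (ho a (by simp))
    obtain ⟨h, hh, he'⟩ := ih g hg (by
      intro b hb
      have h1 := ho b (by simp [hb])
      have e : f = (fun z => (z-a)^τ) * g := by funext z; exact he z
      have hne : b - a ≠ 0 := by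
        intro h0; apply ha; rw [← sub_eq_zero.1 h0]; exact hb
      rw [e, analyticOrderAt_mul (by fun_prop) (hg.analyticAt b)] at h1
      have : analyticOrderAt (fun z : ℂ => (z-a)^τ) b = 0 :=
        AnalyticAt.analyticOrderAt_eq_zero (by fun_prop) |>.2 (pow_ne_zero _ hne)
      rwa [this, zero_add] at h1)
    refine ⟨h, hh, fun z => ?_⟩
    rw [he, he', Finset.prod_insert ha, mul_pow]; ring

lemma schwarz (τ m : ℕ) (c : ℕ → ℝ) (S E B : ℝ) (hS : 0 < S) (hE : 1 < E)
    (hc : ∀ i < m, 0 < c i ∧ c i ≤ S) (hinj : ∀ i < m, ∀ j < m, c i = c j → i = j)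
    (f : ℂ → ℂ) (hf : Differentiable ℂ f)
    (ho : ∀ i < m, (τ:ℕ∞) ≤ analyticOrderAt f (c i) ∧ (τ:ℕ∞) ≤ analyticOrderAt f (-(c i)))
    (hB : ∀ z : ℂ, ‖z‖ = E*S → ‖f z‖ ≤ B) (x : ℝ) (hx : |x| ≤ S) :
    ‖f x‖ ≤ B * ((E^2-1)⁻¹)^(m*τ) := by
  classical
  set N1 : Finset ℂ := (Finset.range m).image (fun i => (c i : ℂ)) with hN1
  set N2 : Finset ℂ := (Finset.range m).image (fun i => -(c i : ℂ)) with hN2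
  have hdisj : Disjoint N1 N2 := by
    rw [Finset.disjoint_left]
    intro a h1 h2
    simp only [hN1, hN2, Finset.mem_image, Finset.mem_range] at h1 h2
    obtain ⟨i, hi, rfl⟩ := h1
    obtain ⟨j, hj, h⟩ := h2
    have h : -(c j) = c i := by exact_mod_cast h
    have := (hc i hi).1; have := (hc j hj).1
    linarith
  obtain ⟨h, hh, he⟩ := div_nodes τ (N1 ∪ N2) f hf (by
    intro a ha
    simp only [hN1, hN2, Finset.mem_union, Finset.mem_image, Finset.mem_range] at ha
    rcases ha with ⟨i, hi, rfl⟩ | ⟨i, hi, rfl⟩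
    · exact (ho i hi).1
    · exact (ho i hi).2)
  have hprod : ∀ z : ℂ, ∏ a ∈ N1 ∪ N2, (z-a) = ∏ i ∈ Finset.range m, (z^2 - (c i)^2) := by
    intro z
    rw [Finset.prod_union hdisj, hN1, hN2, Finset.prod_image, Finset.prod_image,
      ← Finset.prod_mul_distrib]
    · apply Finset.prod_congr rfl; intro i _; ring
    · intro i hi j hj hij
      simp only [Finset.coe_range, Set.mem_Iio] at hi hj
      exact hinj i hi j hj (by simpa using hij)
    · intro i hi j hj hij
      simp only [Finset.coe_range, Set.mem_Iio] at hi hj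
      exact hinj i hi j hj (by simpa using hij)
  have hES : 0 < E*S := by positivity
  have hE2 : 0 < E^2 - 1 := by nlinarith
  -- bound on h
  have hlow : ∀ z : ℂ, ‖z‖ = E*S → ((S^2*(E^2-1))^m)^τ ≤ ‖(∏ a ∈ N1 ∪ N2, (z-a))^τ‖ := by
    intro z hz
    rw [hprod, norm_pow, norm_prod]
    apply pow_le_pow_left₀ (by positivity)
    calc (S^2*(E^2-1))^m = ∏ i ∈ Finset.range m, (S^2*(E^2-1)) := by simp
      _ ≤ _ := by
        apply Finset.prod_le_prod (fun i _ => by positivity)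
        intro i hi
        have hi := hc i (Finset.mem_range.1 hi)
        have h1 := norm_sub_norm_le (z^2) ((c i:ℂ)^2)
        rw [norm_pow, norm_pow, hz, Complex.norm_real, Real.norm_of_nonneg hi.1.le] at h1
        have : (c i)^2 ≤ S^2 := by nlinarith [hi.1, hi.2]
        nlinarith
  have hhB : ∀ z : ℂ, ‖z‖ = E*S → ‖h z‖ ≤ B / ((S^2*(E^2-1))^m)^τ := by
    intro z hz
    rw [le_div_iff₀ (by positivity)]
    calc ‖h z‖ * ((S^2*(E^2-1))^m)^τ ≤ ‖h z‖ * ‖(∏ a ∈ N1 ∪ N2, (z-a))^τ‖ := by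
          gcongr; exact hlow z hz
      _ = ‖f z‖ := by rw [he, norm_mul]; ring
      _ ≤ B := hB z hz
  have hxE : ‖(x:ℂ)‖ ≤ E*S := by
    rw [Complex.norm_real, Real.norm_eq_abs]; nlinarith
  have hhx : ‖h x‖ ≤ B / ((S^2*(E^2-1))^m)^τ := by
    apply Complex.norm_le_of_forall_mem_frontier_norm_le (U := Metric.ball (0:ℂ) (E*S))
      Metric.isBounded_ball hh.diffContOnCl
    · intro z hz
      rw [frontier_ball _ hES.ne'] at hz
      exact hhB z (by simpa using hz)
    · rw [closure_ball _ hES.ne']; simpa using hxE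
  have hup : ‖(∏ a ∈ N1 ∪ N2, ((x:ℂ)-a))^τ‖ ≤ ((S^2)^m)^τ := by
    rw [hprod, norm_pow, norm_prod]
    apply pow_le_pow_left₀ (by positivity)
    calc _ ≤ ∏ i ∈ Finset.range m, (S^2) := by
          apply Finset.prod_le_prod (fun i _ => by positivity)
          intro i hi
          have hi := hc i (Finset.mem_range.1 hi)
          have : (x:ℂ)^2 - (c i:ℂ)^2 = ((x^2 - (c i)^2 : ℝ):ℂ) := by push_cast; ring
          rw [this, Complex.norm_real, Real.norm_eq_abs, abs_le]
          have h2 : (c i)^2 ≤ S^2 := by nlinarith [hi.1, hi.2]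
          have h3 : x^2 ≤ S^2 := by rw [← sq_abs x]; nlinarith [abs_nonneg x]
          constructor <;> nlinarith [sq_nonneg x, sq_nonneg (c i)]
      _ = _ := by simp
  have hB0 : 0 ≤ B / ((S^2*(E^2-1))^m)^τ := le_trans (norm_nonneg _) hhx
  rw [he, norm_mul]
  calc _ ≤ ((S^2)^m)^τ * (B / ((S^2*(E^2-1))^m)^τ) := by gcongr
    _ = _ := by
      have h1 : ((S^2)^m)^τ ≠ 0 := by positivity
      have h2 : (E^2-1)^(m*τ) ≠ 0 := by positivity
      rw [mul_pow, mul_pow, ← pow_mul (E^2-1), inv_pow]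
      field_simp

section secE
open Complex in
lemma exists_V (κ : ℕ) : ∃ V : ℂ → ℂ, Differentiable ℂ V ∧ (∀ k : ℤ, V k = k) ∧
    (∀ k : ℤ, ((2*κ:ℕ):ℕ∞) ≤ analyticOrderAt (fun y => V y - k) k) ∧
    ∀ y, ‖V y‖ ≤ ‖y‖ + 2*κ*Real.exp (2*Real.pi*κ*‖y‖) := by
  set c0 : ℂ := (Nat.choose (2*κ) κ : ℂ) * (-1)^κ with hc0
  have hch : 0 < Nat.choose (2*κ) κ := Nat.choose_pos (by omega)
  have hc0n : c0 ≠ 0 := by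
    rw [hc0]; apply mul_ne_zero
    · exact_mod_cast hch.ne'
    · exact pow_ne_zero _ (by norm_num)
  set r : ℕ → ℂ := fun j => (Nat.choose (2*κ) j : ℂ) * (-1)^j / c0 with hr
  have hr1 : ∀ j, ‖r j‖ ≤ 1 := by
    intro j
    simp only [hr, hc0, norm_div, norm_mul, norm_pow, norm_neg, norm_one, one_pow, mul_one, norm_natCast]
    rw [div_le_one (by exact_mod_cast hch)]
    have := Nat.choose_le_centralBinom j κ
    rw [Nat.centralBinom] at this
    exact_mod_cast this
  set e : ℕ → ℂ := fun j => 2*Real.pi*I*((j:ℂ)-κ) with he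
  have he0 : ∀ j, j ≠ κ → e j ≠ 0 := by
    intro j hj
    simp only [he]
    have : (j:ℂ) - κ ≠ 0 := by
      rw [sub_ne_zero]; exact_mod_cast hj
    have h2 := Complex.two_pi_I_ne_zero
    exact mul_ne_zero h2 this
  set J := (Finset.range (2*κ+1)).erase κ with hJ
  have hJc : J.card = 2*κ := by
    rw [hJ, Finset.card_erase_of_mem (by simp; omega)]; simp
  set V : ℂ → ℂ := fun y => y + ∑ j ∈ J, r j * ((exp (e j * y) - 1) / e j) with hV
  have hd : Differentiable ℂ V := by
    simp only [hV]
    apply Differentiable.add differentiable_id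
    apply Differentiable.fun_sum
    intro j _
    fun_prop
  have hder : ∀ y, deriv V y = c0⁻¹ * (exp (Real.pi*I*y) - exp (-(Real.pi*I*y)))^(2*κ) := by
    intro y
    have h1 : HasDerivAt V (1 + ∑ j ∈ J, r j * exp (e j * y)) y := by
      simp only [hV]
      apply HasDerivAt.add (hasDerivAt_id y)
      apply HasDerivAt.fun_sum
      intro j hj
      have hne := he0 j (Finset.ne_of_mem_erase hj)
      have h2 : HasDerivAt (fun y => exp (e j * y)) (exp (e j * y) * (e j * 1)) y :=
        ((hasDerivAt_id y).const_mul (e j)).cexp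
      have := (((h2.sub_const 1).div_const (e j)).const_mul (r j))
      have e5 : r j * (exp (e j * y) * (e j * 1) / e j) = r j * exp (e j * y) := by
        rw [mul_one, mul_div_assoc, div_self hne, mul_one]
      rw [e5] at this
      exact this
    rw [h1.deriv]
    have h2 : (1:ℂ) = r κ * exp (e κ * y) := by
      simp only [hr, he, hc0]; simp
      rw [div_self]; simpa [hc0] using hc0n
    rw [h2, hJ, Finset.add_sum_erase _ (fun j => r j * exp (e j * y)) (by simp; omega)]
    rw [sub_eq_add_neg, add_pow, Finset.mul_sum]
    apply Finset.sum_congr rfl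
    intro j hj
    have hj : j ≤ 2*κ := by simpa [Nat.lt_succ_iff] using hj
    simp only [hr, he]
    rw [neg_pow (exp _), ← exp_nat_mul, ← exp_nat_mul, div_eq_inv_mul]
    have e3 : exp (2*Real.pi*I*((j:ℂ)-κ)*y) = exp ((j:ℂ) * (Real.pi*I*y)) * exp (((2*κ-j:ℕ):ℂ) * -(Real.pi*I*y)) := by
      rw [← exp_add, Nat.cast_sub hj]; push_cast; congr 1; ring
    have e4 : (-1:ℂ)^(2*κ-j) = (-1)^j := by
      rcases Nat.even_or_odd j with h | h
      · rw [h.neg_one_pow, Even.neg_one_pow]; obtain ⟨t, ht⟩ := h; exact ⟨κ-t, by omega⟩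
      · rw [h.neg_one_pow, Odd.neg_one_pow]; obtain ⟨t, ht⟩ := h; exact ⟨κ-t-1, by omega⟩
    rw [e3, e4]; ring
  have hVk : ∀ k : ℤ, V k = k := by
    intro k
    simp only [hV]
    have : ∑ j ∈ J, r j * ((exp (e j * k) - 1) / e j) = 0 := by
      apply Finset.sum_eq_zero
      intro j _
      have : exp (e j * k) = 1 := by
        rw [Complex.exp_eq_one_iff]
        exact ⟨(j-κ)*k, by simp only [he]; push_cast; ring⟩
      rw [this]; simp
    rw [this, add_zero]
  refine ⟨V, hd, hVk, ?_, ?_⟩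
  · intro k
    have h1 := (hd.analyticAt (k:ℂ)).analyticOrderAt_deriv_add_one
    rw [hVk] at h1
    rw [← h1]
    have h2 : deriv V = (fun _ => c0⁻¹) * (fun y : ℂ => (exp (Real.pi*I*y) - exp (-(Real.pi*I*y))))^(2*κ) := by
      funext y; exact hder y
    have ha : AnalyticAt ℂ (fun y : ℂ => (exp (Real.pi*I*y) - exp (-(Real.pi*I*y)))) k := by fun_prop
    rw [h2, analyticOrderAt_mul (by fun_prop) (ha.pow _), analyticOrderAt_pow ha]
    have h3 : analyticOrderAt (fun y : ℂ => (exp (Real.pi*I*y) - exp (-(Real.pi*I*y)))) k ≠ 0 := by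
      rw [ha.analyticOrderAt_ne_zero, sub_eq_zero, Complex.exp_eq_exp_iff_exists_int]
      exact ⟨k, by ring⟩
    have h4 : 1 ≤ analyticOrderAt (fun y : ℂ => (exp (Real.pi*I*y) - exp (-(Real.pi*I*y)))) k :=
      ENat.one_le_iff_ne_zero.2 h3
    calc ((2*κ:ℕ):ℕ∞) ≤ (2*κ:ℕ) • analyticOrderAt (fun y : ℂ => (exp (Real.pi*I*y) - exp (-(Real.pi*I*y)))) k := by
          rw [nsmul_eq_mul]
          exact le_mul_of_one_le_right (by simp) h4
      _ ≤ _ := by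
          rw [add_assoc]
          exact le_trans (le_add_of_nonneg_right (by simp)) (le_add_of_nonneg_left (by simp))
  · intro y
    have hterm : ∀ j ∈ J, ‖r j * ((exp (e j * y) - 1) / e j)‖ ≤ Real.exp (2*Real.pi*κ*‖y‖) := by
      intro j hj
      have hjκ := Finset.ne_of_mem_erase hj
      have hjr : j < 2*κ+1 := Finset.mem_range.1 (Finset.mem_of_mem_erase hj)
      have hnorm : ‖e j‖ = 2*Real.pi*|(j:ℝ)-κ| := by
        simp only [he, norm_mul, Complex.norm_I, Complex.norm_real, Real.norm_eq_abs, abs_of_pos Real.pi_pos]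
        have : (j:ℂ) - κ = (((j:ℝ)-κ:ℝ):ℂ) := by push_cast; ring
        rw [this, Complex.norm_real, Real.norm_eq_abs]; norm_num
      have hge : (1:ℝ) ≤ |(j:ℝ)-κ| := by
        have : (1:ℤ) ≤ |(j:ℤ)-κ| := Int.one_le_abs (by omega)
        exact_mod_cast this
      have hle : |(j:ℝ)-κ| ≤ κ := by
        rw [abs_le]
        have h1 : (j:ℝ) ≤ 2*κ := by exact_mod_cast Nat.lt_succ_iff.1 hjr
        have h2 : (0:ℝ) ≤ j := by positivity
        constructor <;> linarith
      have hpi := Real.pi_gt_three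
      have h2 : (2:ℝ) ≤ ‖e j‖ := by rw [hnorm]; nlinarith
      have h3 : ‖exp (e j * y)‖ ≤ Real.exp (2*Real.pi*κ*‖y‖) := by
        refine (Complex.norm_exp_le_exp_norm _).trans ?_
        rw [norm_mul, hnorm]
        gcongr
      have h4 : (1:ℝ) ≤ Real.exp (2*Real.pi*κ*‖y‖) := Real.one_le_exp (by positivity)
      rw [norm_mul, norm_div (exp (e j * y) - 1)]
      calc ‖r j‖ * (‖exp (e j * y) - 1‖ / ‖e j‖) ≤ 1 * ((Real.exp (2*Real.pi*κ*‖y‖) + Real.exp (2*Real.pi*κ*‖y‖)) / 2) := by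
            gcongr
            · exact hr1 j
            · refine (norm_sub_le _ _).trans ?_
              rw [norm_one]; linarith
        _ = _ := by ring
    calc ‖V y‖ ≤ ‖y‖ + ‖∑ j ∈ J, r j * ((exp (e j * y) - 1) / e j)‖ := norm_add_le _ _
      _ ≤ ‖y‖ + ∑ j ∈ J, Real.exp (2*Real.pi*κ*‖y‖) := by
          gcongr
          exact norm_sum_le_of_le _ hterm
      _ = _ := by rw [Finset.sum_const, hJc, nsmul_eq_mul]; push_cast; ring
end secE

lemma exists_v (κ G : ℕ) (hG : 0 < G) : ∃ v : ℂ → ℂ, Differentiable ℂ v ∧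
    (∀ s : ℤ, Odd s → v (s/G) = s/G ∧
      ((2*κ:ℕ):ℕ∞) ≤ analyticOrderAt (fun z => v z - (s:ℂ)/G) ((s:ℂ)/G)) ∧
    ∀ z, ‖v z‖ ≤ 1 + (G*‖z‖+1) + 4*κ*Real.exp (Real.pi*κ*(G*‖z‖+1)) := by
  obtain ⟨V, hd, hk, ho, hb⟩ := exists_V κ
  have hG' : (G:ℂ) ≠ 0 := by exact_mod_cast hG.ne'
  have hG1 : (1:ℝ) ≤ G := by exact_mod_cast hG
  refine ⟨fun z => (1 + 2 * V ((G*z-1)/2))/G, by fun_prop, ?_, ?_⟩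
  · rintro s ⟨k, rfl⟩
    have e : ((G:ℂ)*(((2*k+1:ℤ):ℂ)/G) - 1)/2 = k := by push_cast; field_simp; ring
    refine ⟨by simp only [e, hk]; push_cast; ring, ?_⟩
    set z0 : ℂ := ((2*k+1:ℤ):ℂ)/G with hz0
    have h1 : (fun z : ℂ => (1 + 2 * V ((G*z-1)/2))/G - z0) =
        (fun _ => (2/G : ℂ)) * ((fun y => V y - k) ∘ (fun z : ℂ => (G*z-1)/2)) := by
      funext z
      simp only [Pi.mul_apply, Function.comp]
      rw [hz0]; push_cast; field_simp; ring
    have hda : ∀ z, DifferentiableAt ℂ (fun z : ℂ => (G*z-1)/2) z := fun z => by fun_prop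
    have hA : AnalyticAt ℂ (fun z : ℂ => (G*z-1)/2) z0 := by fun_prop
    have hV : ∀ x, AnalyticAt ℂ (fun y => V y - (k:ℂ)) x := fun x =>
      (hd.sub_const (k:ℂ)).analyticAt x
    have hder : deriv (fun z : ℂ => (G*z-1)/2) z0 ≠ 0 := by
      have : HasDerivAt (fun z : ℂ => (G*z-1)/2) ((G*1)/2) z0 :=
        (((hasDerivAt_id z0).const_mul (G:ℂ)).sub_const 1).div_const 2
      rw [this.deriv]; simpa using hG.ne'
    rw [h1, analyticOrderAt_mul (by fun_prop) ((hV _).comp hA),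
      analyticOrderAt_comp_of_deriv_ne_zero hA hder, e]
    exact le_trans (ho k) (le_add_of_nonneg_left (by simp))
  · intro z
    have hy : ‖((G:ℂ)*z-1)/2‖ ≤ (G*‖z‖+1)/2 := by
      rw [norm_div]
      have : ‖(G:ℂ)*z-1‖ ≤ G*‖z‖+1 := by
        refine (norm_sub_le _ _).trans ?_; simp
      simp only [Complex.norm_ofNat]; linarith
    have h2 := hb (((G:ℂ)*z-1)/2)
    have h3 : ‖V (((G:ℂ)*z-1)/2)‖ ≤ (G*‖z‖+1)/2 + 2*κ*Real.exp (Real.pi*κ*(G*‖z‖+1)) := by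
      have h6 : 2*Real.pi*κ*‖((G:ℂ)*z-1)/2‖ ≤ Real.pi*κ*(G*‖z‖+1) := by
        calc 2*Real.pi*κ*‖((G:ℂ)*z-1)/2‖ ≤ 2*Real.pi*κ*((G*‖z‖+1)/2) := by gcongr
          _ = _ := by ring
      have h7 := Real.exp_le_exp.2 h6
      have h8 : (0:ℝ) ≤ 2*κ := by positivity
      nlinarith [mul_le_mul_of_nonneg_left h7 h8]
    simp only [norm_div, Complex.norm_natCast]
    rw [div_le_iff₀ (by positivity)]
    have h4 : ‖1 + 2 * V (((G:ℂ)*z-1)/2)‖ ≤ 1 + 2 * ‖V (((G:ℂ)*z-1)/2)‖ := by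
      refine (norm_add_le _ _).trans ?_; simp
    have h5 : 0 ≤ 1 + (G*‖z‖+1) + 4*κ*Real.exp (Real.pi*κ*(G*‖z‖+1)) := by positivity
    nlinarith

lemma siegel_real {ι κ : Type*} [Fintype ι] [Fintype κ] (a : κ → ι → ℝ) (A : ℝ) (hA : 0 < A)
    (ha : ∀ k i, |a k i| ≤ A) (Y r : ℕ) (hY : 2 ≤ Y) (hc : r * Fintype.card κ < Fintype.card ι) :
    ∃ p : ι → ℤ, p ≠ 0 ∧ (∀ i, |p i| ≤ Y) ∧
      ∀ k, |∑ i, (p i : ℝ) * a k i| * (Y:ℝ)^r ≤ Fintype.card ι * A * Y := by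
  classical
  have hN : 0 < Fintype.card ι := by omega
  have hY0 : 0 < Y := by omega
  set ℓ := Y^r with hℓ
  have hℓ0 : 0 < ℓ := by positivity
  set D : ℝ := Fintype.card ι * A * Y with hD
  have hDp : 0 < D := by positivity
  let val : κ → (ι → Fin Y) → ℝ := fun k q => ∑ i, ((q i : ℕ) : ℝ) * a k i
  let lo : κ → ℝ := fun k => ∑ i, ((Y:ℝ)-1) * min (a k i) 0
  have h0 : ∀ k q, 0 ≤ val k q - lo k := by
    intro k q
    simp only [val, lo]
    rw [← Finset.sum_sub_distrib]
    apply Finset.sum_nonneg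
    intro i _
    have h1 : ((q i : ℕ):ℝ) + 1 ≤ Y := by exact_mod_cast (q i).2
    have h2 : (0:ℝ) ≤ ((q i : ℕ):ℝ) := by positivity
    rcases le_total (a k i) 0 with h | h
    · rw [min_eq_left h]; nlinarith
    · rw [min_eq_right h]; nlinarith
  have h1 : ∀ k q, val k q - lo k < D := by
    intro k q
    simp only [val, lo, hD]
    rw [← Finset.sum_sub_distrib]
    have : (Fintype.card ι:ℝ) * A * Y = ∑ i : ι, A * Y := by simp; ring
    rw [this]
    have hne : (Finset.univ : Finset ι).Nonempty := by
      rw [Finset.univ_nonempty_iff]; exact Fintype.card_pos_iff.1 hN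
    apply Finset.sum_lt_sum_of_nonempty hne
    intro i _
    have h1 : ((q i : ℕ):ℝ) + 1 ≤ Y := by exact_mod_cast (q i).2
    have h2 : (0:ℝ) ≤ ((q i : ℕ):ℝ) := by positivity
    have h3 := abs_le.1 (ha k i)
    rcases le_total (a k i) 0 with h | h
    · rw [min_eq_left h]; nlinarith
    · rw [min_eq_right h]; nlinarith
  have h2 : ∀ k q, ⌊(val k q - lo k) / D * ℓ⌋₊ < ℓ := by
    intro k q
    rw [Nat.floor_lt (by have := h0 k q; positivity)]
    have : (val k q - lo k) / D < 1 := by rw [div_lt_one hDp]; exact h1 k q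
    have hl : (0:ℝ) < ℓ := by exact_mod_cast hℓ0
    nlinarith
  let f : (ι → Fin Y) → (κ → Fin ℓ) := fun q k => ⟨_, h2 k q⟩
  have hcard : Fintype.card (κ → Fin ℓ) < Fintype.card (ι → Fin Y) := by
    simp only [Fintype.card_fun, Fintype.card_fin]
    rw [hℓ, ← pow_mul]
    exact Nat.pow_lt_pow_right (by omega) hc
  obtain ⟨q, q', hne, he⟩ := Fintype.exists_ne_map_eq_of_card_lt f hcard
  refine ⟨fun i => (q i : ℤ) - (q' i : ℤ), ?_, ?_, ?_⟩
  · intro h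
    apply hne
    funext i
    have := congrFun h i
    simp only [Pi.zero_apply] at this
    apply Fin.ext
    omega
  · intro i
    have := (q i).2; have := (q' i).2
    show |((q i : ℕ):ℤ) - ((q' i : ℕ):ℤ)| ≤ Y
    rw [abs_le]; omega
  · intro k
    have hk := congrFun he k
    simp only [f, Fin.mk.injEq] at hk
    have hsum : ∑ i, (((q i : ℤ) - (q' i : ℤ) : ℤ) : ℝ) * a k i = val k q - val k q' := by
      simp only [val]
      rw [← Finset.sum_sub_distrib]
      apply Finset.sum_congr rfl
      intro i _
      push_cast; ring
    rw [hsum]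
    have hfl := Int.abs_sub_lt_one_of_floor_eq_floor (R := ℝ) (a := (val k q - lo k) / D * ℓ)
      (b := (val k q' - lo k) / D * ℓ) (by
        have hp : ∀ q, (0:ℝ) ≤ (val k q - lo k) / D * ℓ := fun q => by have := h0 k q; positivity
        rw [← Int.natCast_floor_eq_floor (hp q), ← Int.natCast_floor_eq_floor (hp q'), hk])
    have e : (val k q - lo k) / D * ℓ - (val k q' - lo k) / D * ℓ = (val k q - val k q') * ((ℓ:ℝ)/D) := by ring
    rw [e, abs_mul, abs_of_pos (a := (ℓ:ℝ)/D) (by positivity)] at hfl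
    have : |val k q - val k q'| * (ℓ:ℝ) < D := by
      rw [← mul_div_assoc, div_lt_one hDp] at hfl; exact hfl
    have e2 : (ℓ:ℝ) = (Y:ℝ)^r := by rw [hℓ]; push_cast; rfl
    rw [← e2]
    exact this.le

lemma liouville (F : IntermediateField ℚ ℂ) [FiniteDimensional ℚ F] (d : ℕ)
    (hd : Module.finrank ℚ F ≤ d) (x : F) (hx : IsIntegral ℤ x) (hx0 : x ≠ 0) (B : ℝ) (hB : 1 ≤ B)
    (hσ : ∀ σ : F →ₐ[ℚ] ℂ, ‖σ x‖ ≤ B) : 1 ≤ ‖(x:ℂ)‖ * B^(d-1) := by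
  classical
  obtain ⟨val, hval⟩ : ∃ val : F →ₐ[ℚ] ℂ, ∀ y : F, val y = (y:ℂ) :=
    ⟨(algebraMap F ℂ).toRatAlgHom, fun _ => rfl⟩
  have h1 := Algebra.norm_eq_prod_embeddings ℚ ℂ x
  have hint : IsIntegral ℤ (Algebra.norm ℚ x) := Algebra.isIntegral_norm ℚ hx
  obtain ⟨n, hn⟩ := IsIntegrallyClosed.isIntegral_iff.1 hint
  have hn0 : n ≠ 0 := by
    rintro rfl
    simp at hn
    exact hx0 (Algebra.norm_eq_zero_iff.1 hn.symm)
  have hge : (1:ℝ) ≤ ‖algebraMap ℚ ℂ (Algebra.norm ℚ x)‖ := by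
    rw [← hn]
    simp only [eq_intCast, map_intCast, Complex.norm_intCast]
    exact_mod_cast Int.one_le_abs hn0
  rw [h1, norm_prod] at hge
  have hcard : Fintype.card (F →ₐ[ℚ] ℂ) = Module.finrank ℚ F := AlgHom.card ℚ F ℂ
  rw [← Finset.mul_prod_erase Finset.univ (fun σ : F →ₐ[ℚ] ℂ => ‖σ x‖) (Finset.mem_univ val)] at hge
  refine hge.trans ?_
  rw [hval]
  gcongr
  calc _ ≤ ∏ σ ∈ Finset.univ.erase val, B := Finset.prod_le_prod (fun _ _ => norm_nonneg _) (fun σ _ => hσ σ)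
    _ = B^(Module.finrank ℚ F - 1) := by
      rw [Finset.prod_const, Finset.card_erase_of_mem (Finset.mem_univ _), Finset.card_univ, hcard]
    _ ≤ _ := pow_le_pow_right₀ hB (by omega)

lemma zpow_bound (z : ℂ) (ρ : ℝ) (hρ : 1 ≤ ρ) (h1 : ‖z‖ ≤ ρ) (h2 : ‖z⁻¹‖ ≤ ρ) (P : ℕ) (e : ℤ)
    (he : |e| ≤ P) : ‖z^e‖ ≤ ρ^P := by
  have h3 : ∀ n : ℕ, n ≤ P → ∀ w : ℂ, ‖w‖ ≤ ρ → ‖w^n‖ ≤ ρ^P := by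
    intro n hn w hw
    rw [norm_pow]
    calc ‖w‖^n ≤ ρ^n := pow_le_pow_left₀ (norm_nonneg _) hw n
      _ ≤ ρ^P := pow_le_pow_right₀ hρ hn
  have he' := abs_le.1 he
  rcases Int.le_total 0 e with h | h
  · obtain ⟨n, rfl⟩ := Int.eq_ofNat_of_zero_le h
    rw [zpow_natCast]; exact h3 n (by omega) z h1
  · obtain ⟨n, hn⟩ := Int.eq_ofNat_of_zero_le (neg_nonneg.2 h)
    have : e = -(n:ℤ) := by omega
    rw [this, zpow_neg, zpow_natCast, ← inv_pow]; exact h3 n (by omega) _ h2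

lemma zpow_integral {F : Type*} [Field F] (g : F) (h1 : IsIntegral ℤ g) (h2 : IsIntegral ℤ g⁻¹) (e : ℤ) :
    IsIntegral ℤ (g^e) := by
  rcases Int.le_total 0 e with h | h
  · obtain ⟨n, rfl⟩ := Int.eq_ofNat_of_zero_le h
    rw [zpow_natCast]; exact h1.pow n
  · obtain ⟨n, hn⟩ := Int.eq_ofNat_of_zero_le (neg_nonneg.2 h)
    have : e = -(n:ℤ) := by omega
    rw [this, zpow_neg, zpow_natCast, ← inv_pow]; exact h2.pow n

lemma liouville_sum (F : IntermediateField ℚ ℂ) [FiniteDimensional ℚ F] (d : ℕ)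
    (hd : Module.finrank ℚ F ≤ d) (g1 g2 g3 : F) (ρ1 ρ2 ρ3 : ℝ) (c P : ℕ)
    (hρ1 : 1 ≤ ρ1) (hρ2 : 1 ≤ ρ2) (hρ3 : 1 ≤ ρ3) (hc1 : 1 ≤ c)
    (hi1 : IsIntegral ℤ g1) (hi1' : IsIntegral ℤ g1⁻¹) (hi2 : IsIntegral ℤ g2) (hi2' : IsIntegral ℤ g2⁻¹)
    (hi3 : ∀ k ≤ 2*P, IsIntegral ℤ ((c:F) * g3^k)) (h30 : g3 ≠ 0)
    (hs1 : ∀ σ : F →ₐ[ℚ] ℂ, ‖σ g1‖ ≤ ρ1 ∧ ‖(σ g1)⁻¹‖ ≤ ρ1)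
    (hs2 : ∀ σ : F →ₐ[ℚ] ℂ, ‖σ g2‖ ≤ ρ2 ∧ ‖(σ g2)⁻¹‖ ≤ ρ2)
    (hs3 : ∀ σ : F →ₐ[ℚ] ℂ, ‖σ g3‖ ≤ ρ3)
    {ι : Type*} (s : Finset ι) (C : ι → ℤ) (e1 e2 e3 : ι → ℤ) (A : ℝ) (hA : 1 ≤ A)
    (hC : ∑ i ∈ s, |(C i : ℝ)| ≤ A)
    (he1 : ∀ i ∈ s, |e1 i| ≤ P) (he2 : ∀ i ∈ s, |e2 i| ≤ P) (he3 : ∀ i ∈ s, |e3 i| ≤ P)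
    (hx : ∑ i ∈ s, (C i : ℂ) * ((g1:ℂ)^(e1 i) * (g2:ℂ)^(e2 i) * (g3:ℂ)^(e3 i)) ≠ 0) :
    1 ≤ ‖∑ i ∈ s, (C i : ℂ) * ((g1:ℂ)^(e1 i) * (g2:ℂ)^(e2 i) * (g3:ℂ)^(e3 i))‖ * (c * ‖(g3:ℂ)‖^P) *
      (A * (ρ1^P * ρ2^P * (c * ρ3^(2*P))))^(d-1) := by
  set x : F := ∑ i ∈ s, (C i : F) * (g1^(e1 i) * g2^(e2 i) * (c * g3^(e3 i + P).toNat)) with hxd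
  have h3 : ∀ i ∈ s, (g3:ℂ)^(e3 i + P).toNat = (g3:ℂ)^(e3 i) * (g3:ℂ)^P := by
    intro i hi
    have h := abs_le.1 (he3 i hi)
    have h30' : (g3:ℂ) ≠ 0 := by exact_mod_cast h30
    rw [← zpow_natCast, ← zpow_natCast, ← zpow_add₀ h30', Int.toNat_of_nonneg (by omega)]
  have hxv : (x:ℂ) = (∑ i ∈ s, (C i : ℂ) * ((g1:ℂ)^(e1 i) * (g2:ℂ)^(e2 i) * (g3:ℂ)^(e3 i))) * (c * (g3:ℂ)^P) := by
    rw [hxd, Finset.sum_mul]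
    push_cast
    apply Finset.sum_congr rfl
    intro i hi
    have hz : ∀ (g : F) (e : ℤ), ((g^e : F):ℂ) = (g:ℂ)^e := fun g e => map_zpow₀ F.val g e
    rw [h3 i hi, hz, hz]; ring
  have hx0 : x ≠ 0 := by
    intro h
    have : (x:ℂ) = 0 := by rw [h]; rfl
    rw [hxv] at this
    have h30' : (g3:ℂ) ≠ 0 := by exact_mod_cast h30
    have hc' : (c:ℂ) ≠ 0 := by exact_mod_cast (by omega : c ≠ 0)
    exact mul_ne_zero hx (mul_ne_zero hc' (pow_ne_zero _ h30')) this
  have hxi : IsIntegral ℤ x := by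
    apply IsIntegral.sum
    intro i hi
    have h := abs_le.1 (he3 i hi)
    refine IsIntegral.mul ?_ (((zpow_integral _ hi1 hi1' _).mul (zpow_integral _ hi2 hi2' _)).mul (hi3 _ (by omega)))
    have := isIntegral_algebraMap (R := ℤ) (A := F) (x := C i)
    simpa using this
  have hc1' : (1:ℝ) ≤ c := by exact_mod_cast hc1
  have key := liouville F d hd x hxi hx0 (A * (ρ1^P * ρ2^P * (c * ρ3^(2*P)))) (by
    have a1 := one_le_pow₀ hρ1 (n := P)
    have a2 := one_le_pow₀ hρ2 (n := P)
    have a3 := one_le_pow₀ hρ3 (n := 2*P)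
    exact one_le_mul_of_one_le_of_one_le hA (one_le_mul_of_one_le_of_one_le
      (one_le_mul_of_one_le_of_one_le a1 a2) (one_le_mul_of_one_le_of_one_le hc1' a3))) (by
    intro σ
    rw [hxd, map_sum]
    refine (norm_sum_le _ _).trans ?_
    calc _ ≤ ∑ i ∈ s, |(C i:ℝ)| * (ρ1^P * ρ2^P * (c * ρ3^(2*P))) := by
          apply Finset.sum_le_sum
          intro i hi
          rw [map_mul, map_mul, map_mul, map_mul, map_zpow₀, map_zpow₀, map_pow, map_intCast, map_natCast]
          rw [norm_mul, norm_mul, norm_mul, norm_mul, Complex.norm_intCast, Complex.norm_natCast, norm_pow]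
          gcongr
          · exact zpow_bound _ _ hρ1 (hs1 σ).1 (hs1 σ).2 P _ (he1 i hi)
          · exact zpow_bound _ _ hρ2 (hs2 σ).1 (hs2 σ).2 P _ (he2 i hi)
          · have h := abs_le.1 (he3 i hi)
            calc ‖σ g3‖^(e3 i + P).toNat ≤ ρ3^(e3 i + P).toNat := pow_le_pow_left₀ (norm_nonneg _) (hs3 σ) _
              _ ≤ _ := pow_le_pow_right₀ hρ3 (by omega)
      _ ≤ _ := by
          rw [← Finset.sum_mul]; gcongr)
  rw [hxv, norm_mul, norm_mul, norm_pow, Complex.norm_natCast] at key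
  exact key

section secB
open Polynomial IntermediateField

lemma finrank_adj {K : Type*} [Field K] [Algebra K ℂ] (x : ℂ) (p : K[X]) (hp : p.Monic) (h : aeval x p = 0) :
    FiniteDimensional K K⟮x⟯ ∧ Module.finrank K K⟮x⟯ ≤ p.natDegree := by
  have hx : IsIntegral K x := ⟨p, hp, by simpa [aeval_def] using h⟩
  refine ⟨adjoin.finiteDimensional hx, ?_⟩
  rw [adjoin.finrank hx]
  exact natDegree_le_of_dvd (minpoly.dvd K x h) hp.ne_zero

lemma bd_phi (r φ : ℝ) (hr : 0 ≤ r) (hφ : φ^2 = φ+1) (h1 : 1 < φ) (h : r^2 ≤ r + 1) : r ≤ φ := by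
  by_contra hc
  push Not at hc
  nlinarith

lemma bd_om (r ω : ℝ) (hr : 0 ≤ r) (hω : ω^3 - ω^2 - ω - 1 = 0) (h1 : 1.839 < ω)
    (h : r^3 ≤ r^2 + r + 1) : r ≤ ω := by
  by_contra hc
  push Not at hc
  have : r^3 - r^2 - r - 1 - (ω^3 - ω^2 - ω - 1) = (r-ω)*(r^2+r*ω+ω^2-r-ω-1) := by ring
  have h2 : 0 < r^2+r*ω+ω^2-r-ω-1 := by nlinarith
  have h3 := mul_pos (sub_pos.2 hc) h2
  linarith

lemma bd_de (r : ℝ) (hr : 0 ≤ r) (h : r^3 ≤ 44 + 2*r^2) : r ≤ 4.36 := by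
  by_contra hc
  push Not at hc
  nlinarith [mul_pos (sub_pos.2 hc) (sub_pos.2 hc)]

section
variable {F : Type*} [Field F] [Algebra ℚ F]

lemma conj_phi (g : F) (hg : g^2 = g+1) (φ : ℝ) (hφ : φ^2 = φ+1) (h1 : 1 < φ) (σ : F →ₐ[ℚ] ℂ) :
    ‖σ g‖ ≤ φ ∧ ‖(σ g)⁻¹‖ ≤ φ := by
  have e : (σ g)^2 = σ g + 1 := by rw [← map_pow, hg]; simp
  have h0 : σ g ≠ 0 := by
    intro h; rw [h] at e; norm_num at e
  have e2 : ((σ g)⁻¹)^2 = 1 - (σ g)⁻¹ := by field_simp; linear_combination -e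
  constructor
  · apply bd_phi _ _ (norm_nonneg _) hφ h1
    rw [← norm_pow, e]; refine (norm_add_le _ _).trans ?_; simp
  · apply bd_phi _ _ (norm_nonneg _) hφ h1
    rw [← norm_pow, e2]; refine (norm_sub_le _ _).trans ?_; simp; linarith

lemma conj_om (g : F) (hg : g^3 - g^2 - g - 1 = 0) (ω : ℝ) (hω : ω^3 - ω^2 - ω - 1 = 0) (h1 : 1.839 < ω)
    (σ : F →ₐ[ℚ] ℂ) : ‖σ g‖ ≤ ω ∧ ‖(σ g)⁻¹‖ ≤ ω := by
  have e : (σ g)^3 = (σ g)^2 + σ g + 1 := by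
    have : σ (g^3 - g^2 - g - 1) = 0 := by rw [hg]; simp
    simp only [map_sub, map_pow, map_one] at this
    linear_combination this
  have h0 : σ g ≠ 0 := by
    intro h; rw [h] at e; norm_num at e
  have e2 : ((σ g)⁻¹)^3 = 1 - (σ g)⁻¹ - ((σ g)⁻¹)^2 := by field_simp; linear_combination -e
  constructor
  · apply bd_om _ _ (norm_nonneg _) hω h1
    rw [← norm_pow, e]; refine (norm_add₃_le).trans ?_; simp
  · apply bd_om _ _ (norm_nonneg _) hω h1
    rw [← norm_pow, e2]; refine (norm_sub_le _ _).trans ?_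
    have := norm_sub_le (1:ℂ) (σ g)⁻¹
    rw [norm_one] at this
    rw [norm_pow]; linarith

lemma conj_de (g : F) (hg : g^3 - g^2 - g - 1 = 0) (σ : F →ₐ[ℚ] ℂ) : ‖σ (-g^2+4*g-1)‖ ≤ 4.36 := by
  have e : (-g^2+4*g-1)^3 = 44 - 2 * (-g^2+4*g-1)^2 := by
    linear_combination (-g^3 + 11*g^2 - 39*g + 43)*hg
  have e2 : (σ (-g^2+4*g-1))^3 = 44 - 2 * (σ (-g^2+4*g-1))^2 := by
    rw [← map_pow, e, map_sub, map_mul, map_pow]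
    congr 1
    · exact map_ofNat σ 44
    · congr 1; exact map_ofNat σ 2
  apply bd_de _ (norm_nonneg _)
  rw [← norm_pow, e2]; refine (norm_sub_le _ _).trans ?_
  simp

lemma int_phi (g : F) (hg : g^2 = g+1) : IsIntegral ℤ g ∧ IsIntegral ℤ g⁻¹ := by
  have h0 : g ≠ 0 := by rintro rfl; simp at hg
  have h1 : IsIntegral ℤ g := ⟨X^2 - X - 1, by monicity!, by simp; linear_combination hg⟩
  refine ⟨h1, ?_⟩
  have : g⁻¹ = g - 1 := by field_simp; linear_combination -hg
  rw [this]; exact h1.sub isIntegral_one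

lemma int_om (g : F) (hg : g^3 - g^2 - g - 1 = 0) : IsIntegral ℤ g ∧ IsIntegral ℤ g⁻¹ := by
  have h0 : g ≠ 0 := by rintro rfl; simp at hg
  have h1 : IsIntegral ℤ g := ⟨X^3 - X^2 - X - 1, by monicity!, by simp; linear_combination hg⟩
  refine ⟨h1, ?_⟩
  have : g⁻¹ = g^2 - g - 1 := by field_simp; linear_combination -hg
  rw [this]; exact ((h1.pow 2).sub h1).sub isIntegral_one

lemma int_nat (n : ℕ) : IsIntegral ℤ (n:F) := by
  have := isIntegral_algebraMap (R := ℤ) (A := F) (x := (n:ℤ))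
  simpa using this

lemma int_de (g : F) (hg : g^3 - g^2 - g - 1 = 0) : IsIntegral ℤ (-g^2+4*g-1) := by
  have h1 := (int_om g hg).1
  have h4 : IsIntegral ℤ (4:F) := by exact_mod_cast int_nat (F := F) 4
  exact (((h1.pow 2).neg).add (h4.mul h1)).sub isIntegral_one
end
end secB

section secB2
open Polynomial IntermediateField

section
variable {F : Type*} [Field F] [Algebra ℚ F]

lemma conj_a3 (s g a : F) (hs : s^2 = 5) (hg : g^3 - g^2 - g - 1 = 0) (ha : a * s = -g^2+4*g-1)
    (σ : F →ₐ[ℚ] ℂ) : ‖σ a‖ ≤ 1.95 := by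
  have h1 := conj_de g hg σ
  rw [← ha, map_mul, norm_mul] at h1
  have h2 : (σ s)^2 = 5 := by rw [← map_pow, hs]; exact map_ofNat σ 5
  have h3 : ‖σ s‖^2 = 5 := by rw [← norm_pow, h2]; simp
  have h4 : 2.236 ≤ ‖σ s‖ := by
    by_contra h; push Not at h
    nlinarith [norm_nonneg (σ s)]
  by_contra h; push Not at h
  nlinarith [norm_nonneg (σ s)]

lemma int_a3 (s g a : F) (hs : s^2 = 5) (hg : g^3 - g^2 - g - 1 = 0) (ha : a * s = -g^2+4*g-1)
    (P k : ℕ) (hk : k ≤ 2*P) : IsIntegral ℤ (((5^P:ℕ):F) * a^k) := by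
  have h1 := int_de g hg
  apply IsIntegral.of_pow (n := 2) (by norm_num)
  have h2 : 5 * a^2 = (-g^2+4*g-1)^2 := by rw [← ha, ← hs]; ring
  have : (((5^P:ℕ):F) * a^k)^2 = ((5^(2*P-k):ℕ):F) * ((-g^2+4*g-1)^2)^k := by
    rw [← h2]; push_cast
    have : (5:F)^(2*P) = 5^(2*P-k) * 5^k := by rw [← pow_add]; congr 1; omega
    rw [mul_pow, ← pow_mul, mul_comm P 2, this, mul_pow]; ring
  rw [this]
  exact (int_nat _).mul ((h1.pow 2).pow k)

lemma int_b3 (s g b : F) (hs : s^2 = 5) (hg : g^3 - g^2 - g - 1 = 0) (ha : b^2 * s = -g^2+4*g-1)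
    (P k : ℕ) (hk : k ≤ 4*P) : IsIntegral ℤ (((5^P:ℕ):F) * b^k) := by
  apply IsIntegral.of_pow (n := 2) (by norm_num)
  have h1 := int_de g hg
  apply IsIntegral.of_pow (n := 2) (by norm_num)
  have h2 : 5 * b^4 = (-g^2+4*g-1)^2 := by rw [← ha, ← hs]; ring
  have : ((((5^P:ℕ):F) * b^k)^2)^2 = ((5^(4*P-k):ℕ):F) * ((-g^2+4*g-1)^2)^k := by
    rw [← h2]; push_cast
    have : (5:F)^(4*P) = 5^(4*P-k) * 5^k := by rw [← pow_add]; congr 1; omega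
    have h : (5:F)^(4*P) = ((5^P)^2)^2 := by rw [← pow_mul, ← pow_mul]; congr 1; ring
    rw [mul_pow, mul_pow, ← h, this, mul_pow]; ring
  rw [this]
  exact (int_nat _).mul ((h1.pow 2).pow k)

lemma norm_sq_le {x : ℂ} {r : ℝ} (hr : 0 ≤ r) (h : ‖x^2‖ ≤ r^2) : ‖x‖ ≤ r := by
  rw [norm_pow] at h
  exact le_of_sq_le_sq h hr
end

lemma exp406 : (57.5:ℝ) ≤ Real.exp 4.06 := by
  have : Real.exp 4.06 = Real.exp 1 ^ 4 * Real.exp 0.06 := by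
    rw [← Real.exp_nat_mul, ← Real.exp_add]; norm_num
  rw [this]
  have h1 := Real.exp_one_gt_d9
  have h2 := Real.add_one_le_exp (0.06:ℝ)
  have h3 : (2.7182818283:ℝ)^4 ≤ Real.exp 1 ^ 4 := by gcongr
  nlinarith

lemma exp192 : (6.7:ℝ) ≤ Real.exp 1.92 := by
  have : Real.exp 1.92 = Real.exp 1 ^ 2 * Real.exp (-0.08) := by
    rw [← Real.exp_nat_mul, ← Real.exp_add]; norm_num
  rw [this]
  have h1 := Real.exp_one_gt_d9
  have h2 := Real.add_one_le_exp (-0.08:ℝ)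
  have h3 : (2.7182818283:ℝ)^2 ≤ Real.exp 1 ^ 2 := by gcongr
  nlinarith

lemma s5_bd : 2.236 < √5 ∧ √5 < 2.2361 := by
  constructor
  · apply Real.lt_sqrt_of_sq_lt; norm_num
  · rw [Real.sqrt_lt' (by norm_num)]; norm_num

lemma a3_bd (ω : ℝ) (h1 : 1.839 < ω) (h2 : ω < 1.84) :
    1.329 < (-ω^2+4*ω-1)/√5 ∧ (-ω^2+4*ω-1)/√5 < 1.331 := by
  have := s5_bd
  constructor
  · rw [lt_div_iff₀ (by linarith)]; nlinarith
  · rw [div_lt_iff₀ (by linarith)]; nlinarith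

lemma phi_sq : ((1+√5)/2)^2 = (1+√5)/2 + 1 := by
  have := Real.sq_sqrt (show (0:ℝ) ≤ 5 by norm_num)
  nlinarith
end secB2

section secB3
open Polynomial IntermediateField

lemma fin_s5 : FiniteDimensional ℚ ℚ⟮((√5:ℝ):ℂ)⟯ ∧ Module.finrank ℚ ℚ⟮((√5:ℝ):ℂ)⟯ ≤ 2 := by
  have := finrank_adj (K := ℚ) ((√5:ℝ):ℂ) (X^2 - C 5) (by monicity!) (by
    simp
    have := Real.sq_sqrt (show (0:ℝ) ≤ 5 by norm_num)
    have h2 : ((√5:ℝ):ℂ)^2 = 5 := by exact_mod_cast this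
    rw [h2]; norm_num)
  refine ⟨this.1, this.2.trans ?_⟩
  compute_degree

lemma fin_om (ω : ℝ) (hω : ω^3 - ω^2 - ω - 1 = 0) :
    FiniteDimensional ℚ ℚ⟮(ω:ℂ)⟯ ∧ Module.finrank ℚ ℚ⟮(ω:ℂ)⟯ ≤ 3 := by
  have := finrank_adj (K := ℚ) (ω:ℂ) (X^3 - X^2 - X - 1) (by monicity!) (by
    simp; exact_mod_cast hω)
  refine ⟨this.1, this.2.trans ?_⟩
  compute_degree

lemma fin_sq (E : IntermediateField ℚ ℂ) [FiniteDimensional ℚ E] (d : ℕ) (hd : Module.finrank ℚ E ≤ d)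
    (b : ℂ) (hb : b^2 ∈ E) : ∃ F : IntermediateField ℚ ℂ, E ≤ F ∧ b ∈ F ∧ FiniteDimensional ℚ F ∧
      Module.finrank ℚ F ≤ d * 2 := by
  obtain ⟨h1, h2⟩ := finrank_adj (K := E) b (X^2 - C ⟨b^2, hb⟩) (by monicity!) (by
    simp)
  have h3 : Module.finrank E E⟮b⟯ ≤ 2 := h2.trans (by compute_degree)
  refine ⟨(E⟮b⟯).restrictScalars ℚ, ?_, ?_, ?_, ?_⟩
  · intro x hx
    have := (E⟮b⟯).algebraMap_mem ⟨x, hx⟩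
    exact this
  · exact mem_adjoin_simple_self E b
  · have : FiniteDimensional ℚ E⟮b⟯ := FiniteDimensional.trans ℚ E E⟮b⟯
    exact this
  · have h4 := Module.finrank_mul_finrank ℚ E E⟮b⟯
    have h5 : Module.finrank ℚ ((E⟮b⟯).restrictScalars ℚ) = Module.finrank ℚ E⟮b⟯ := rfl
    rw [h5, ← h4]
    gcongr

lemma fin_base (ω : ℝ) (hω : ω^3 - ω^2 - ω - 1 = 0) : ∃ F : IntermediateField ℚ ℂ, ((√5:ℝ):ℂ) ∈ F ∧ (ω:ℂ) ∈ F ∧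
    FiniteDimensional ℚ F ∧ Module.finrank ℚ F ≤ 6 := by
  obtain ⟨h1, h2⟩ := fin_s5
  obtain ⟨h3, h4⟩ := fin_om ω hω
  refine ⟨ℚ⟮((√5:ℝ):ℂ)⟯ ⊔ ℚ⟮(ω:ℂ)⟯, ?_, ?_, ?_, ?_⟩
  · exact (le_sup_left : ℚ⟮((√5:ℝ):ℂ)⟯ ≤ _) (mem_adjoin_simple_self _ _)
  · exact (le_sup_right : ℚ⟮(ω:ℂ)⟯ ≤ ℚ⟮((√5:ℝ):ℂ)⟯ ⊔ _) (mem_adjoin_simple_self _ _)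
  · exact IntermediateField.finiteDimensional_sup _ _
  · refine (finrank_sup_le _ _).trans ?_
    calc _ ≤ 2*3 := by gcongr
      _ = 6 := rfl

lemma liouville_a (ω : ℝ) (hω : ω^3 - ω^2 - ω - 1 = 0) (hω1 : 1.839 < ω) (hω2 : ω < 1.84) (P : ℕ)
    {ι : Type*} (s : Finset ι) (C e1 e2 e3 : ι → ℤ) (A : ℝ) (hA : 1 ≤ A)
    (hC : ∑ i ∈ s, |(C i : ℝ)| ≤ A)
    (he1 : ∀ i ∈ s, |e1 i| ≤ P) (he2 : ∀ i ∈ s, |e2 i| ≤ P) (he3 : ∀ i ∈ s, |e3 i| ≤ P)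
    (x : ℝ) (hx : x = ∑ i ∈ s, (C i : ℝ) * (((1+√5)/2)^(e1 i) * ω^(e2 i) * ((-ω^2+4*ω-1)/√5)^(e3 i))) (hx0 : x ≠ 0) :
    1 ≤ |x| * Real.exp (1.92*P) * (A * Real.exp (4.06*P))^5 := by
  obtain ⟨F, m5, mo, hfd, hfr⟩ := fin_base ω hω
  set δ := -ω^2+4*ω-1 with hδ
  have s5 := s5_bd
  have a3b := a3_bd ω hω1 hω2
  have s5s := Real.sq_sqrt (show (0:ℝ) ≤ 5 by norm_num)
  have ps := phi_sq
  set φ := (1+√5)/2 with hφ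
  set s' : F := ⟨((√5:ℝ):ℂ), m5⟩
  set g2 : F := ⟨(ω:ℂ), mo⟩
  set g1 : F := (1+s')/2
  set g3 : F := (-g2^2+4*g2-1)/s'
  have c1 : (g1:ℂ) = (φ:ℂ) := by
    rw [hφ]; push_cast; rfl
  have c2 : (g2:ℂ) = (ω:ℂ) := rfl
  have c3 : (g3:ℂ) = ((δ/√5:ℝ):ℂ) := by
    rw [hδ]; push_cast; rfl
  have hs2 : s'^2 = 5 := by
    apply Subtype.ext; push_cast; exact (by exact_mod_cast s5s : ((√5:ℝ):ℂ)^2 = 5)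
  have hs0 : s' ≠ 0 := by intro h; rw [h] at hs2; norm_num at hs2
  have hg2 : g2^3 - g2^2 - g2 - 1 = 0 := by
    apply Subtype.ext; push_cast; rw [c2]; exact_mod_cast hω
  have hg1 : g1^2 = g1 + 1 := by
    apply Subtype.ext; push_cast; rw [c1]; exact_mod_cast ps
  have hg3 : g3 * s' = -g2^2+4*g2-1 := by simp only [g3]; field_simp
  have h30 : g3 ≠ 0 := by
    intro h
    have : (g3:ℂ) = 0 := by rw [h]; rfl
    rw [c3] at this
    have : δ/√5 = 0 := by exact_mod_cast this
    linarith
  have hsum : (∑ i ∈ s, (C i : ℂ) * ((g1:ℂ)^(e1 i) * (g2:ℂ)^(e2 i) * (g3:ℂ)^(e3 i))) = (x:ℂ) := by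
    rw [c1, c2, c3, hx]; push_cast; rfl
  have key := liouville_sum F 6 hfr g1 g2 g3 φ ω 1.95 (5^P) P (by linarith) (by linarith) (by norm_num)
    (Nat.one_le_pow _ _ (by norm_num)) (int_phi g1 hg1).1 (int_phi g1 hg1).2 (int_om g2 hg2).1 (int_om g2 hg2).2
    (fun k hk => int_a3 s' g2 g3 hs2 hg2 hg3 P k hk) h30
    (fun σ => conj_phi g1 hg1 φ ps (by linarith) σ) (fun σ => conj_om g2 hg2 ω hω hω1 σ)
    (fun σ => conj_a3 s' g2 g3 hs2 hg2 hg3 σ) s C e1 e2 e3 A hA hC he1 he2 he3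
    (by rw [hsum]; exact_mod_cast hx0)
  rw [hsum, c3] at key
  simp only [Complex.norm_real, Real.norm_eq_abs] at key
  refine key.trans ?_
  have b1 : ((5^P:ℕ):ℝ) * |δ/√5|^P ≤ Real.exp (1.92*P) := by
    rw [abs_of_pos (by linarith)]; push_cast
    rw [← mul_pow, mul_comm (1.92:ℝ), Real.exp_nat_mul]
    have := exp192
    refine pow_le_pow_left₀ (by linarith) (by linarith) _
  have b2 : φ^P*ω^P*(((5^P:ℕ):ℝ)*1.95^(2*P)) ≤ Real.exp (4.06*P) := by
    push_cast
    rw [pow_mul, ← mul_pow, ← mul_pow, ← mul_pow, mul_comm (4.06:ℝ), Real.exp_nat_mul]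
    have hp : 0 < φ := by linarith
    have hp : 0 < ω := by linarith
    gcongr
    have := exp406
    nlinarith
  have : (0:ℝ) ≤ φ^P*ω^P*(((5^P:ℕ):ℝ)*1.95^(2*P)) := by
    have hp : 0 < φ := by linarith
    have hp : 0 < ω := by linarith
    positivity
  have hA0 : 0 ≤ A := by linarith
  gcongr

lemma liouville_b (ω b1 b2 b3 : ℝ) (hω : ω^3 - ω^2 - ω - 1 = 0) (hω1 : 1.839 < ω) (hω2 : ω < 1.84)
    (hb1 : b1^2 = (1+√5)/2) (hb2 : b2^2 = ω) (hb3 : b3^2 = (-ω^2+4*ω-1)/√5)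
    (h1p : 0 < b1) (h2p : 0 < b2) (h3p : 0 < b3) (P : ℕ)
    {ι : Type*} (s : Finset ι) (C e1 e2 e3 : ι → ℤ) (A : ℝ) (hA : 1 ≤ A)
    (hC : ∑ i ∈ s, |(C i : ℝ)| ≤ A)
    (he1 : ∀ i ∈ s, |e1 i| ≤ (2*P:ℕ)) (he2 : ∀ i ∈ s, |e2 i| ≤ (2*P:ℕ)) (he3 : ∀ i ∈ s, |e3 i| ≤ (2*P:ℕ))
    (x : ℝ) (hx : x = ∑ i ∈ s, (C i : ℝ) * (b1^(e1 i) * b2^(e2 i) * b3^(e3 i))) (hx0 : x ≠ 0) :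
    1 ≤ |x| * Real.exp (1.92*P) * (A * Real.exp (4.06*P))^47 := by
  obtain ⟨F0, m5, mo, hfd0, hfr0⟩ := fin_base ω hω
  set δ := -ω^2+4*ω-1 with hδ
  have s5 := s5_bd
  have a3b := a3_bd ω hω1 hω2
  have s5s := Real.sq_sqrt (show (0:ℝ) ≤ 5 by norm_num)
  have ps := phi_sq
  set φ := (1+√5)/2 with hφ
  have mph : (φ:ℂ) ∈ F0 := by
    rw [hφ]; push_cast
    exact div_mem (add_mem (one_mem _) m5) (by exact_mod_cast _root_.natCast_mem F0 2)
  obtain ⟨F1, le1, mb1, hfd1, hfr1⟩ := fin_sq F0 6 hfr0 (b1:ℂ) (by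
    have : (b1:ℂ)^2 = (φ:ℂ) := by exact_mod_cast hb1
    rw [this]; exact mph)
  obtain ⟨F2, le2, mb2, hfd2, hfr2⟩ := fin_sq F1 _ hfr1 (b2:ℂ) (by
    have : (b2:ℂ)^2 = (ω:ℂ) := by exact_mod_cast hb2
    rw [this]; exact le1 mo)
  obtain ⟨F, le3, mb3, hfd, hfr⟩ := fin_sq F2 _ hfr2 (b3:ℂ) (by
    have : (b3:ℂ)^2 = ((δ/√5:ℝ):ℂ) := by exact_mod_cast hb3
    rw [this]
    apply le2; apply le1
    rw [hδ]; push_cast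
    exact div_mem (sub_mem (add_mem (neg_mem (pow_mem mo 2)) (mul_mem (by exact_mod_cast _root_.natCast_mem F0 4) mo)) (one_mem _)) m5)
  have n5 : ((√5:ℝ):ℂ) ∈ F := le3 (le2 (le1 m5))
  set s' : F := ⟨((√5:ℝ):ℂ), n5⟩
  set g1 : F := ⟨(b1:ℂ), le3 (le2 mb1)⟩
  set g2 : F := ⟨(b2:ℂ), le3 mb2⟩
  set g3 : F := ⟨(b3:ℂ), mb3⟩
  have c1 : (g1:ℂ) = (b1:ℂ) := rfl
  have c2 : (g2:ℂ) = (b2:ℂ) := rfl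
  have c3 : (g3:ℂ) = (b3:ℂ) := rfl
  have hs2 : s'^2 = 5 := by
    apply Subtype.ext; push_cast; exact (by exact_mod_cast s5s : ((√5:ℝ):ℂ)^2 = 5)
  have hg2 : (g2^2)^3 - (g2^2)^2 - g2^2 - 1 = 0 := by
    apply Subtype.ext; push_cast; rw [c2]
    have : (b2^2)^3 - (b2^2)^2 - b2^2 - 1 = 0 := by rw [hb2]; exact hω
    exact_mod_cast this
  have hg1 : (g1^2)^2 = g1^2 + 1 := by
    apply Subtype.ext; push_cast; rw [c1]
    have : (b1^2)^2 = b1^2+1 := by rw [hb1]; exact ps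
    exact_mod_cast this
  have hg3 : g3^2 * s' = -(g2^2)^2+4*g2^2-1 := by
    apply Subtype.ext; push_cast; rw [c2, c3]
    have : b3^2 * √5 = -(b2^2)^2+4*b2^2-1 := by rw [hb2, hb3, hδ]; field_simp
    exact (by exact_mod_cast this : (b3:ℂ)^2 * ((√5:ℝ):ℂ) = -((b2:ℂ)^2)^2+4*(b2:ℂ)^2-1)
  have h30 : g3 ≠ 0 := by
    intro h
    have : (g3:ℂ) = 0 := by rw [h]; rfl
    rw [c3] at this
    have : b3 = 0 := by exact_mod_cast this
    linarith
  have hsum : (∑ i ∈ s, (C i : ℂ) * ((g1:ℂ)^(e1 i) * (g2:ℂ)^(e2 i) * (g3:ℂ)^(e3 i))) = (x:ℂ) := by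
    rw [c1, c2, c3, hx]; push_cast; rfl
  have i1 := int_phi (g1^2) hg1
  have i2 := int_om (g2^2) hg2
  rw [← inv_pow] at i1 i2
  have t1 : ∀ σ : F →ₐ[ℚ] ℂ, ‖σ g1‖ ≤ b1 ∧ ‖(σ g1)⁻¹‖ ≤ b1 := by
    intro σ
    have := conj_phi (g1^2) hg1 φ ps (by linarith) σ
    rw [map_pow, ← inv_pow, ← hb1] at this
    exact ⟨norm_sq_le h1p.le this.1, norm_sq_le h1p.le this.2⟩
  have t2 : ∀ σ : F →ₐ[ℚ] ℂ, ‖σ g2‖ ≤ b2 ∧ ‖(σ g2)⁻¹‖ ≤ b2 := by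
    intro σ
    have := conj_om (g2^2) hg2 ω hω hω1 σ
    rw [map_pow, ← inv_pow, ← hb2] at this
    exact ⟨norm_sq_le h2p.le this.1, norm_sq_le h2p.le this.2⟩
  have t3 : ∀ σ : F →ₐ[ℚ] ℂ, ‖σ g3‖ ≤ 1.4 := by
    intro σ
    have := conj_a3 s' (g2^2) (g3^2) hs2 hg2 hg3 σ
    rw [map_pow] at this
    exact norm_sq_le (by norm_num) (this.trans (by norm_num))
  have key := liouville_sum F 48 hfr g1 g2 g3 b1 b2 1.4 (5^P) (2*P) (by nlinarith) (by nlinarith) (by norm_num)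
    (Nat.one_le_pow _ _ (by norm_num)) (i1.1.of_pow (by norm_num)) (i1.2.of_pow (by norm_num)) (i2.1.of_pow (by norm_num)) (i2.2.of_pow (by norm_num))
    (fun k hk => int_b3 s' (g2^2) g3 hs2 hg2 hg3 P k (by omega)) h30
    t1 t2 t3
    s C e1 e2 e3 A hA hC he1 he2 he3
    (by rw [hsum]; exact_mod_cast hx0)
  rw [hsum, c3] at key
  simp only [Complex.norm_real, Real.norm_eq_abs] at key
  refine key.trans ?_
  have q1 : ((5^P:ℕ):ℝ) * |b3|^(2*P) ≤ Real.exp (1.92*P) := by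
    rw [abs_of_pos h3p]; push_cast
    rw [pow_mul, hb3, ← mul_pow, mul_comm (1.92:ℝ), Real.exp_nat_mul]
    have := exp192
    refine pow_le_pow_left₀ (by linarith) (by linarith) _
  have q2 : b1^(2*P)*b2^(2*P)*(((5^P:ℕ):ℝ)*1.4^(2*(2*P))) ≤ Real.exp (4.06*P) := by
    push_cast
    rw [pow_mul, pow_mul, hb1, hb2, pow_mul, pow_mul, ← pow_mul 1.4, ← mul_pow, ← pow_mul, pow_mul 1.4, ← mul_pow, ← mul_pow,  mul_comm (4.06:ℝ), Real.exp_nat_mul]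
    have hp : 0 < φ := by linarith
    have hp : 0 < ω := by linarith
    gcongr
    have := exp406
    norm_num
    nlinarith
  have hA0 : 0 ≤ A := by linarith
  gcongr
end secB3

lemma zpow_par (b : ℝ) (hb : 0 < b) (e : ℤ) : b^e = (b^2)^(e/2) * b^((e%2).toNat) := by
  rw [← zpow_natCast b 2, ← zpow_mul, ← zpow_natCast, ← zpow_add₀ hb.ne', Int.toNat_of_nonneg (by omega)]
  congr 1; push_cast; omega

lemma sum8 (r1 r2 r3 : Fin 2) (f : Fin 2 → Fin 2 → Fin 2 → ℝ) :
    ∑ i, ∑ j, ∑ k, (if (i = r1 ∧ j = r2 ∧ k = r3) then f i j k else 0) = f r1 r2 r3 := by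
  rw [Finset.sum_eq_single r1, Finset.sum_eq_single r2, Finset.sum_eq_single r3] <;> simp +contextual

def par (e : ℤ) : Fin 2 := ⟨(e%2).toNat, by omega⟩

lemma par_eq (e f : ℤ) : par e = par f ↔ e % 2 = f % 2 := by
  simp only [par, Fin.mk.injEq]; omega

lemma kummer_sum (ω b1 b2 b3 : ℝ) (hω : ω^3-ω^2-ω-1=0) (hpos : 0<ω) (hδ : 0 < -ω^2+4*ω-1)
    (h1 : b1^2=(1+√5)/2) (h2 : b2^2=ω) (h3 : b3^2=(-ω^2+4*ω-1)/√5)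
    (h1p : 0 < b1) (h2p : 0 < b2) (h3p : 0 < b3)
    {ι : Type*} (U : Finset ι) (C e1 e2 e3 : ι → ℤ)
    (h : ∑ i ∈ U, (C i:ℝ) * (b1^(e1 i) * b2^(e2 i) * b3^(e3 i)) = 0) (i0 : ι) :
    ∑ i ∈ U with (e1 i % 2 = e1 i0 % 2 ∧ e2 i % 2 = e2 i0 % 2 ∧ e3 i % 2 = e3 i0 % 2),
      (C i:ℝ) * (b1^(e1 i) * b2^(e2 i) * b3^(e3 i)) = 0 := by
  classical
  have hom : ω ∈ KK ω := le_qext _ _ _ (om_mem_K0 ω)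
  have h5 : √5 ∈ KK ω := self_qext _ _ _
  have n2 : (2:ℝ) ∈ KK ω := by exact_mod_cast natCast_mem (KK ω) 2
  have n4 : (4:ℝ) ∈ KK ω := by exact_mod_cast natCast_mem (KK ω) 4
  have m1 : b1^2 ∈ KK ω := by
    rw [h1]; exact div_mem (add_mem (one_mem _) h5) n2
  have m2 : b2^2 ∈ KK ω := by rw [h2]; exact hom
  have m3 : b3^2 ∈ KK ω := by
    rw [h3]; exact div_mem (sub_mem (add_mem (neg_mem (pow_mem hom 2)) (mul_mem n4 hom)) (one_mem _)) h5
  set D : ι → ℝ := fun i => (C i:ℝ) * ((b1^2)^(e1 i/2) * (b2^2)^(e2 i/2) * (b3^2)^(e3 i/2)) with hD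
  have hDm : ∀ i, D i ∈ KK ω := fun i =>
    mul_mem (intCast_mem _ _) (mul_mem (mul_mem (zpow_mem m1 _) (zpow_mem m2 _)) (zpow_mem m3 _))
  have hDe : ∀ i, (C i:ℝ) * (b1^(e1 i) * b2^(e2 i) * b3^(e3 i)) =
      D i * (b1^((par (e1 i):Fin 2):ℕ) * b2^((par (e2 i):Fin 2):ℕ) * b3^((par (e3 i):Fin 2):ℕ)) := by
    intro i
    rw [zpow_par b1 h1p, zpow_par b2 h2p, zpow_par b3 h3p, hD]
    simp only [par]; ring
  set x : Fin 2 → Fin 2 → Fin 2 → ℝ := fun a b c =>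
    ∑ i ∈ U, if (a = par (e1 i) ∧ b = par (e2 i) ∧ c = par (e3 i)) then D i else 0 with hx
  have hxm : ∀ a b c, x a b c ∈ KK ω := by
    intro a b c
    apply sum_mem
    intro i hi
    split_ifs
    · exact hDm i
    · exact zero_mem _
  have hs : ∑ a, ∑ b, ∑ c, x a b c * (b1^(a:ℕ)*b2^(b:ℕ)*b3^(c:ℕ)) = 0 := by
    rw [← h]
    simp only [hx, Finset.sum_mul]
    simp only [Finset.sum_comm (s := (Finset.univ : Finset (Fin 2))) (t := U)]
    apply Finset.sum_congr rfl
    intro i hi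
    rw [hDe]
    rw [← sum8 (par (e1 i)) (par (e2 i)) (par (e3 i)) (fun a b c => D i * (b1^(a:ℕ) * b2^(b:ℕ) * b3^(c:ℕ)))]
    refine Finset.sum_congr rfl fun a _ => Finset.sum_congr rfl fun b _ => Finset.sum_congr rfl fun c _ => ?_
    rw [ite_mul, zero_mul]
  have key := kummer ω b1 b2 b3 hω hpos hδ h1 h2 h3 x hxm hs (par (e1 i0)) (par (e2 i0)) (par (e3 i0))
  rw [hx] at key
  simp only at key
  rw [← Finset.sum_filter] at key
  have : ∑ i ∈ U with (e1 i % 2 = e1 i0 % 2 ∧ e2 i % 2 = e2 i0 % 2 ∧ e3 i % 2 = e3 i0 % 2),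
      (C i:ℝ) * (b1^(e1 i) * b2^(e2 i) * b3^(e3 i)) =
      (∑ i ∈ U with (par (e1 i0) = par (e1 i) ∧ par (e2 i0) = par (e2 i) ∧ par (e3 i0) = par (e3 i)), D i) *
       (b1^((par (e1 i0):Fin 2):ℕ) * b2^((par (e2 i0):Fin 2):ℕ) * b3^((par (e3 i0):Fin 2):ℕ)) := by
    rw [Finset.sum_mul]
    apply Finset.sum_congr
    · ext i; simp only [Finset.mem_filter, par_eq]
      constructor <;> rintro ⟨a, b, c, d⟩ <;> exact ⟨a, b.symm, c.symm, d.symm⟩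
    · intro i hi
      simp only [Finset.mem_filter] at hi
      rw [hDe, hi.2.1, hi.2.2.1, hi.2.2.2]
  rw [this, key, zero_mul]

lemma emod2 (G l l0 : ℤ) (hG : 0 < G) (h : l % G = l0 % G) (s : ℤ) (hs : s % 2 = 1) :
    (l / G * s) % 2 = (l0 / G * s) % 2 ↔ l % (2*G) = l0 % (2*G) := by
  have h1 := Int.emod_add_mul_ediv l G
  have h2 := Int.emod_add_mul_ediv l0 G
  have e : l - l0 = G * (l/G - l0/G) := by linear_combination -h1 + h2 + h
  have a : (l / G * s) % 2 = (l / G) % 2 := by rw [Int.mul_emod, hs]; simp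
  have b : (l0 / G * s) % 2 = (l0 / G) % 2 := by rw [Int.mul_emod, hs]; simp
  rw [a, b, Int.emod_eq_emod_iff_emod_sub_eq_zero, Int.emod_eq_emod_iff_emod_sub_eq_zero (m := l),
    ← Int.dvd_iff_emod_eq_zero, ← Int.dvd_iff_emod_eq_zero, e, mul_comm 2 G]
  exact (Int.mul_dvd_mul_iff_left hG.ne').symm

lemma exp_node (l : ℝ) (G : ℤ) (hG : 0 < G) (k s : ℤ) :
    Real.exp (k * l * (s / (2*G))) = Real.exp ((k % G : ℤ) * l * (s / (2*G))) * (Real.exp (l/2))^(k / G * s) := by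
  have hz : (Real.exp (l/2))^(k / G * s) = Real.exp (((k/G*s:ℤ):ℝ) * (l/2)) := by
    rw [← Real.rpow_intCast, ← Real.exp_mul, mul_comm]
  rw [hz, ← Real.exp_add]
  congr 1
  have h1 : ((k%G:ℤ):ℝ) + G * ((k/G:ℤ):ℝ) = k := by exact_mod_cast Int.emod_add_mul_ediv k G
  have hG' : (G:ℝ) ≠ 0 := by exact_mod_cast hG.ne'
  rw [← h1]; push_cast; field_simp

lemma pf_bd (G : ℤ) (hG : 0 < G) (s k : ℤ) (l : ℝ) (hl : 0 ≤ l) :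
    -(l * |(s:ℝ)| / 2) ≤ ((k%G:ℤ):ℝ) * l * (s/(2*G)) := by
  have h0 : (0:ℝ) ≤ ((k%G:ℤ):ℝ) := by exact_mod_cast Int.emod_nonneg _ hG.ne'
  have h1 : ((k%G:ℤ):ℝ) ≤ G := by exact_mod_cast (Int.emod_lt_of_pos k hG).le
  have hG' : (0:ℝ) < G := by exact_mod_cast hG
  have : ((k%G:ℤ):ℝ) * l * (s/(2*G)) = (((k%G:ℤ):ℝ)/G) * (l * s / 2) := by field_simp
  rw [this]
  have h2 : ((k%G:ℤ):ℝ)/G ≤ 1 := by rw [div_le_one hG']; exact h1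
  have h3 : 0 ≤ ((k%G:ℤ):ℝ)/G := by positivity
  have h4 := neg_abs_le (s:ℝ)
  have h5 : -(l*|(s:ℝ)|/2) ≤ l*s/2 := by nlinarith
  have h6 : 0 ≤ l*|(s:ℝ)|/2 := by positivity
  nlinarith

lemma logs_bd (ω : ℝ) (hω1 : 1.839 < ω) (hω2 : ω < 1.84) :
    (0 ≤ Real.log ((1+√5)/2) ∧ Real.log ((1+√5)/2) ≤ 0.485) ∧ (0 ≤ Real.log ω ∧ Real.log ω ≤ 0.62) ∧
    (0 ≤ Real.log ((-ω^2+4*ω-1)/√5) ∧ Real.log ((-ω^2+4*ω-1)/√5) ≤ 0.29) := by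
  have s5 := s5_bd
  have a3b := a3_bd ω hω1 hω2
  have e1 := Real.exp_one_gt_d9
  refine ⟨⟨Real.log_nonneg (by linarith), ?_⟩, ⟨Real.log_nonneg (by linarith), ?_⟩, ⟨Real.log_nonneg (by linarith), ?_⟩⟩
  · rw [Real.log_le_iff_le_exp (by linarith)]
    apply le_of_sq_le_sq _ (Real.exp_pos _).le
    rw [← Real.exp_nat_mul, show ((2:ℕ):ℝ)*0.485 = 1 + (-0.03) by norm_num, Real.exp_add]
    have := Real.add_one_le_exp (-0.03:ℝ)
    nlinarith
  · rw [Real.log_le_iff_le_exp (by linarith)]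
    apply le_of_pow_le_pow_left₀ (n := 5) (by norm_num) (Real.exp_pos _).le
    rw [← Real.exp_nat_mul, show ((5:ℕ):ℝ)*0.62 = ((3:ℕ):ℝ)*1 + 0.1 by norm_num, Real.exp_add, Real.exp_nat_mul]
    have := Real.add_one_le_exp (0.1:ℝ)
    have h1 : ω^5 ≤ 1.84^5 := by gcongr
    have h3 : (2.7182818283:ℝ)^3 ≤ Real.exp 1 ^ 3 := by gcongr
    nlinarith
  · rw [Real.log_le_iff_le_exp (by linarith)]
    have := Real.quadratic_le_exp_of_nonneg (show (0:ℝ) ≤ 0.29 by norm_num)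
    linarith

set_option maxHeartbeats 1000000 in
lemma arith_step (ω : ℝ) (hω : ω^3-ω^2-ω-1=0) (hω1 : 1.839 < ω) (hω2 : ω < 1.84)
    (G s : ℤ) (hG : 0 < G) (hs : s % 2 = 1) (P : ℕ)
    {ι : Type*} (U : Finset ι) (C k1 k2 k3 : ι → ℤ) (i0 : ι) (hi0 : i0 ∈ U)
    (hk : ∀ i ∈ U, k1 i % G = k1 i0 % G ∧ k2 i % G = k2 i0 % G ∧ k3 i % G = k3 i0 % G)
    (hb : ∀ i ∈ U, |k1 i / G * s| ≤ (2*P:ℕ) ∧ |k2 i / G * s| ≤ (2*P:ℕ) ∧ |k3 i / G * s| ≤ (2*P:ℕ))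
    (hsP : |s| ≤ 2*P)
    (A : ℝ) (hA : 1 ≤ A) (hC : ∑ i ∈ U, |(C i : ℝ)| ≤ A)
    (hsm : |∑ i ∈ U, (C i:ℝ) * Real.exp ((k1 i * Real.log ((1+√5)/2) + k2 i * Real.log ω
        + k3 i * Real.log ((-ω^2+4*ω-1)/√5)) * (s/(2*G)))| * Real.exp (1.4 * |(s:ℝ)| / 2) *
        Real.exp (1.92*P) * (A * Real.exp (4.06*P))^47 < 1) :
    ∑ i ∈ U with (k1 i % (2*G) = k1 i0 % (2*G) ∧ k2 i % (2*G) = k2 i0 % (2*G) ∧ k3 i % (2*G) = k3 i0 % (2*G)),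
      (C i:ℝ) * Real.exp ((k1 i * Real.log ((1+√5)/2) + k2 i * Real.log ω
        + k3 i * Real.log ((-ω^2+4*ω-1)/√5)) * (s/(2*G))) = 0 := by
  have s5 := s5_bd
  have a3b := a3_bd ω hω1 hω2
  have hδ : 0 < -ω^2+4*ω-1 := by nlinarith
  set l1 := Real.log ((1+√5)/2) with hl1
  set l2 := Real.log ω with hl2
  set l3 := Real.log ((-ω^2+4*ω-1)/√5) with hl3
  have l1b : 0 ≤ l1 ∧ l1 ≤ 0.485 := (logs_bd ω hω1 hω2).1 
  have l2b : 0 ≤ l2 ∧ l2 ≤ 0.62 := (logs_bd ω hω1 hω2).2.1 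
  have l3b : 0 ≤ l3 ∧ l3 ≤ 0.29 := (logs_bd ω hω1 hω2).2.2 
  set b1 := Real.exp (l1/2) with hb1
  set b2 := Real.exp (l2/2) with hb2
  set b3 := Real.exp (l3/2) with hb3
  have q1 : b1^2 = (1+√5)/2 := by
    rw [hb1, ← Real.exp_nat_mul, hl1]; push_cast; rw [mul_div_cancel₀ _ (by norm_num), Real.exp_log (by linarith)]
  have q2 : b2^2 = ω := by
    rw [hb2, ← Real.exp_nat_mul, hl2]; push_cast; rw [mul_div_cancel₀ _ (by norm_num), Real.exp_log (by linarith)]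
  have q3 : b3^2 = (-ω^2+4*ω-1)/√5 := by
    rw [hb3, ← Real.exp_nat_mul, hl3]; push_cast; rw [mul_div_cancel₀ _ (by norm_num), Real.exp_log (by linarith)]
  set pf := Real.exp ((((k1 i0 % G : ℤ):ℝ) * l1 + ((k2 i0 % G:ℤ):ℝ) * l2 + ((k3 i0 % G:ℤ):ℝ) * l3) * (s/(2*G))) with hpf
  have hexp : ∀ i ∈ U, (C i:ℝ) * Real.exp ((k1 i * l1 + k2 i * l2 + k3 i * l3) * (s/(2*G))) =
      pf * ((C i:ℝ) * (b1^(k1 i/G*s) * b2^(k2 i/G*s) * b3^(k3 i/G*s))) := by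
    intro i hi
    have e1 := exp_node l1 G hG (k1 i) s
    have e2 := exp_node l2 G hG (k2 i) s
    have e3 := exp_node l3 G hG (k3 i) s
    rw [(hk i hi).1] at e1
    rw [(hk i hi).2.1] at e2
    rw [(hk i hi).2.2] at e3
    rw [add_mul, add_mul, Real.exp_add, Real.exp_add, e1, e2, e3, hpf, add_mul, add_mul, Real.exp_add, Real.exp_add]
    ring
  have hpf1 : 1 ≤ pf * Real.exp (1.4 * |(s:ℝ)|/2) := by
    rw [hpf, ← Real.exp_add]
    apply Real.one_le_exp
    have c1 := pf_bd G hG s (k1 i0) l1 l1b.1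
    have c2 := pf_bd G hG s (k2 i0) l2 l2b.1
    have c3 := pf_bd G hG s (k3 i0) l3 l3b.1
    have c4 := abs_nonneg (s:ℝ)
    have c5 : l1 * |(s:ℝ)| ≤ 0.485 * |(s:ℝ)| := by nlinarith [l1b.2]
    have c6 : l2 * |(s:ℝ)| ≤ 0.62 * |(s:ℝ)| := by nlinarith [l2b.2]
    have c7 : l3 * |(s:ℝ)| ≤ 0.29 * |(s:ℝ)| := by nlinarith [l3b.2]
    linarith
  have hpos : 0 < pf := Real.exp_pos _
  have hz : ∑ i ∈ U, (C i:ℝ) * (b1^(k1 i/G*s) * b2^(k2 i/G*s) * b3^(k3 i/G*s)) = 0 := by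
    by_contra hne
    have L := liouville_b ω b1 b2 b3 hω hω1 hω2 q1 q2 q3 (Real.exp_pos _) (Real.exp_pos _) (Real.exp_pos _) P U C
      (fun i => k1 i/G*s) (fun i => k2 i/G*s) (fun i => k3 i/G*s) A hA hC (fun i hi => (hb i hi).1)
      (fun i hi => (hb i hi).2.1) (fun i hi => (hb i hi).2.2) _ rfl hne
    rw [Finset.sum_congr rfl hexp, ← Finset.mul_sum, abs_mul, abs_of_pos hpos] at hsm
    set X := |∑ i ∈ U, (C i:ℝ) * (b1^(k1 i/G*s) * b2^(k2 i/G*s) * b3^(k3 i/G*s))|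
    have hA0 : 0 ≤ A := by linarith
    have : X * Real.exp (1.92*P) * (A * Real.exp (4.06*P))^47 ≤
      (pf * Real.exp (1.4 * |(s:ℝ)|/2)) * (X * Real.exp (1.92*P) * (A * Real.exp (4.06*P))^47) := by
      apply le_mul_of_one_le_left _ hpf1
      positivity
    have : (pf * Real.exp (1.4 * |(s:ℝ)|/2)) * (X * Real.exp (1.92*P) * (A * Real.exp (4.06*P))^47) < 1 := by
      calc _ = _ := by ring
        _ < 1 := hsm
    linarith
  have K := kummer_sum ω b1 b2 b3 hω (by linarith) hδ q1 q2 q3 (Real.exp_pos _) (Real.exp_pos _) (Real.exp_pos _) U C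
      (fun i => k1 i/G*s) (fun i => k2 i/G*s) (fun i => k3 i/G*s) hz i0
  have : (U.filter fun i => (k1 i % (2*G) = k1 i0 % (2*G) ∧ k2 i % (2*G) = k2 i0 % (2*G) ∧ k3 i % (2*G) = k3 i0 % (2*G)))
     = U.filter fun i => ((k1 i / G * s) % 2 = (k1 i0 / G * s) % 2 ∧ (k2 i / G * s) % 2 = (k2 i0 / G * s) % 2 ∧
      (k3 i / G * s) % 2 = (k3 i0 / G * s) % 2) := by
    apply Finset.filter_congr
    intro i hi
    obtain ⟨u1, u2, u3⟩ := hk i hi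
    rw [emod2 G _ _ hG u1 s hs, emod2 G _ _ hG u2 s hs, emod2 G _ _ hG u3 s hs]
  rw [this, Finset.sum_congr rfl (fun i hi => hexp i (Finset.mem_filter.1 hi).1), ← Finset.mul_sum, K, mul_zero]

noncomputable def gf {ι : Type*} (U : Finset ι) (q : ι → Polynomial ℂ) (L : ℂ) (a x y w : ι → ℂ) (t0 t1 t2 : ℕ) (z : ℂ) : ℂ :=
  ∑ i ∈ U, a i * ((Polynomial.hasseDeriv t0 (q i)).eval (L*z) * (x i^t1 * y i^t2) * Complex.exp (w i * z))

lemma hasse_deriv (q : Polynomial ℂ) (t : ℕ) :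
    Polynomial.derivative (Polynomial.hasseDeriv t q) = ((t:Polynomial ℂ)+1) * Polynomial.hasseDeriv (t+1) q := by
  have := congrArg (fun f => f q) (Polynomial.hasseDeriv_comp (R := ℂ) 1 t)
  simp only [LinearMap.comp_apply, Polynomial.hasseDeriv_one, LinearMap.smul_apply, Nat.choose_one_right] at this
  rw [this, add_comm 1 t, nsmul_eq_mul]; push_cast; rfl

lemma gf_deriv {ι : Type*} (U : Finset ι) (q : ι → Polynomial ℂ) (L l1 l2 : ℂ) (a x y w : ι → ℂ)
    (hw : ∀ i, w i = x i * l1 + y i * l2) (t0 t1 t2 : ℕ) (z : ℂ) :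
    HasDerivAt (gf U q L a x y w t0 t1 t2)
      (L * (t0+1) * gf U q L a x y w (t0+1) t1 t2 z + l1 * gf U q L a x y w t0 (t1+1) t2 z
        + l2 * gf U q L a x y w t0 t1 (t2+1) z) z := by
  unfold gf
  rw [Finset.mul_sum, Finset.mul_sum, Finset.mul_sum, ← Finset.sum_add_distrib, ← Finset.sum_add_distrib]
  apply HasDerivAt.fun_sum
  intro i hi
  have h1 : HasDerivAt (fun z : ℂ => L*z) L z := by simpa using (hasDerivAt_id z).const_mul L
  have h2 := (Polynomial.hasDerivAt (Polynomial.hasseDeriv t0 (q i)) (L*z)).comp z h1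
  have h3 : HasDerivAt (fun z : ℂ => w i * z) (w i) z := by simpa using (hasDerivAt_id z).const_mul (w i)
  have h4 := ((h2.mul_const (x i^t1 * y i^t2)).mul h3.cexp).const_mul (a i)
  refine h4.congr_deriv ?_
  rw [hasse_deriv, Polynomial.eval_mul]
  simp only [Polynomial.eval_add, Polynomial.eval_natCast, Polynomial.eval_one, Function.comp]
  have := hw i
  rw [pow_succ, pow_succ]
  linear_combination (a i * (Polynomial.hasseDeriv t0 (q i)).eval (L*z) * (x i^t1 * y i^t2) * Complex.exp (w i * z)) * this

lemma gf_diff {ι : Type*} (U : Finset ι) (q : ι → Polynomial ℂ) (L l1 l2 : ℂ) (a x y w : ι → ℂ)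
    (hw : ∀ i, w i = x i * l1 + y i * l2) (t0 t1 t2 : ℕ) : Differentiable ℂ (gf U q L a x y w t0 t1 t2) :=
  fun z => (gf_deriv U q L l1 l2 a x y w hw t0 t1 t2 z).differentiableAt

lemma order_sum {ι : Type*} (U : Finset ι) (f : ι → ℂ → ℂ) (c : ℂ) (k : ℕ∞)
    (h : ∀ i ∈ U, k ≤ analyticOrderAt (f i) c) : k ≤ analyticOrderAt (fun z => ∑ i ∈ U, f i z) c := by
  classical
  induction U using Finset.induction_on with
  | empty => simp [analyticOrderAt_eq_top.2]
  | insert i U hi ih =>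
    simp only [Finset.sum_insert hi]
    refine le_trans (le_min (h i (by simp)) (ih fun j hj => h j (by simp [hj]))) ?_
    exact le_analyticOrderAt_add

lemma order_const_mul (f : ℂ → ℂ) (hf : Differentiable ℂ f) (g : ℂ → ℂ) (hg : Differentiable ℂ g) (c : ℂ) (k : ℕ∞)
    (h : k ≤ analyticOrderAt g c) : k ≤ analyticOrderAt (fun z => f z * g z) c := by
  have := analyticOrderAt_mul (hf.analyticAt c) (hg.analyticAt c)
  change k ≤ analyticOrderAt (f * g) c
  rw [this]
  exact h.trans le_add_self

lemma gf_order {ι : Type*} (U : Finset ι) (q : ι → Polynomial ℂ) (L l1 l2 : ℂ) (a x y w : ι → ℂ)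
    (hw : ∀ i, w i = x i * l1 + y i * l2) (c : ℂ) (k : ℕ) : ∀ t0 t1 t2 : ℕ,
    (∀ u0 u1 u2, u0+u1+u2 < t0+t1+t2+k → gf U q L a x y w u0 u1 u2 c = 0) →
    (k:ℕ∞) ≤ analyticOrderAt (gf U q L a x y w t0 t1 t2) c := by
  induction k with
  | zero => intros; simp
  | succ k ih =>
    intro t0 t1 t2 h
    have hd := gf_diff U q L l1 l2 a x y w hw t0 t1 t2
    have hd0 := gf_diff U q L l1 l2 a x y w hw (t0+1) t1 t2
    have hd1 := gf_diff U q L l1 l2 a x y w hw t0 (t1+1) t2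
    have hd2 := gf_diff U q L l1 l2 a x y w hw t0 t1 (t2+1)
    have h1 := (hd.analyticAt c).analyticOrderAt_deriv_add_one
    rw [h t0 t1 t2 (by omega)] at h1
    simp only [sub_zero] at h1
    have h2 : deriv (gf U q L a x y w t0 t1 t2) = fun z => ((L * (t0+1)) * gf U q L a x y w (t0+1) t1 t2 z + l1 * gf U q L a x y w t0 (t1+1) t2 z)
        + l2 * gf U q L a x y w t0 t1 (t2+1) z := by
      ext z; exact (gf_deriv U q L l1 l2 a x y w hw t0 t1 t2 z).deriv
    have h3 : (k:ℕ∞) ≤ analyticOrderAt (deriv (gf U q L a x y w t0 t1 t2)) c := by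
      rw [h2]
      refine le_trans (le_min (le_trans (le_min ?_ ?_) le_analyticOrderAt_add) ?_) le_analyticOrderAt_add
      · exact order_const_mul _ (differentiable_const _) _ hd0 c _ (ih _ _ _ fun u0 u1 u2 hu => h u0 u1 u2 (by omega))
      · exact order_const_mul _ (differentiable_const _) _ hd1 c _ (ih _ _ _ fun u0 u1 u2 hu => h u0 u1 u2 (by omega))
      · exact order_const_mul _ (differentiable_const _) _ hd2 c _ (ih _ _ _ fun u0 u1 u2 hu => h u0 u1 u2 (by omega))
    have : ((k+1:ℕ):ℕ∞) ≤ analyticOrderAt (deriv (gf U q L a x y w t0 t1 t2)) c + 1 := by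
      push_cast; gcongr
    rw [h1] at this
    exact this

noncomputable def ff {ι : Type*} (U : Finset ι) (q : ι → Polynomial ℂ) (L : ℂ) (a x y w θ : ι → ℂ) (v : ℂ → ℂ) (t0 t1 t2 : ℕ) (z : ℂ) : ℂ :=
  ∑ i ∈ U, a i * ((Polynomial.hasseDeriv t0 (q i)).eval (L*z) * (x i^t1 * y i^t2) * Complex.exp (w i * z)) *
    Complex.exp (θ i * v z)

lemma ff_diff {ι : Type*} (U : Finset ι) (q : ι → Polynomial ℂ) (L : ℂ) (a x y w θ : ι → ℂ) (v : ℂ → ℂ)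
    (hv : Differentiable ℂ v) (t0 t1 t2 : ℕ) : Differentiable ℂ (ff U q L a x y w θ v t0 t1 t2) := by
  unfold ff
  apply Differentiable.fun_sum
  intro i hi
  have := (Polynomial.hasseDeriv t0 (q i)).differentiable
  have h2 : Differentiable ℂ fun z => (Polynomial.hasseDeriv t0 (q i)).eval (L*z) := this.comp (by fun_prop)
  fun_prop

lemma ff_order {ι : Type*} (U : Finset ι) (q : ι → Polynomial ℂ) (L l1 l2 : ℂ) (a x y w θ : ι → ℂ) (v : ℂ → ℂ)
    (hv : Differentiable ℂ v) (hw : ∀ i, w i = x i * l1 + y i * l2) (c : ℂ) (k : ℕ) (hvc : v c = c)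
    (hvo : (k:ℕ∞) ≤ analyticOrderAt (fun z => v z - c) c) (t0 t1 t2 : ℕ)
    (h : ∀ u0 u1 u2, u0+u1+u2 < t0+t1+t2+k → gf U q L a x y (fun i => w i + θ i) u0 u1 u2 c = 0) :
    (k:ℕ∞) ≤ analyticOrderAt (ff U q L a x y w θ v t0 t1 t2) c := by
  have e1 : ∀ u0 u1 u2, gf U q L (fun i => a i * Complex.exp (θ i * c)) x y w u0 u1 u2 c =
      gf U q L a x y (fun i => w i + θ i) u0 u1 u2 c := by
    intro u0 u1 u2
    unfold gf
    apply Finset.sum_congr rfl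
    intro i hi
    rw [add_mul, Complex.exp_add]; ring
  have h1 := gf_order U q L l1 l2 (fun i => a i * Complex.exp (θ i * c)) x y w hw c k t0 t1 t2
    (fun u0 u1 u2 hu => by rw [e1]; exact h u0 u1 u2 hu)
  have e2 : ff U q L a x y w θ v t0 t1 t2 = fun z => gf U q L (fun i => a i * Complex.exp (θ i * c)) x y w t0 t1 t2 z +
     ∑ i ∈ U, (a i * ((Polynomial.hasseDeriv t0 (q i)).eval (L*z) * (x i^t1 * y i^t2) * Complex.exp (w i * z))) *
    (Complex.exp (θ i * v z) - Complex.exp (θ i * c)) := by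
    ext z
    unfold gf ff
    rw [← Finset.sum_add_distrib]
    apply Finset.sum_congr rfl
    intro i hi
    ring
  rw [e2]
  refine le_trans (le_min h1 ?_) le_analyticOrderAt_add
  apply order_sum
  intro i hi
  have d1 : Differentiable ℂ fun z => (Polynomial.hasseDeriv t0 (q i)).eval (L*z) := (Polynomial.hasseDeriv t0 (q i)).differentiable.comp (by fun_prop)
  apply order_const_mul _ (by fun_prop) _ (by fun_prop)
  have h5 : AnalyticAt ℂ (fun u => Complex.exp (θ i * u) - Complex.exp (θ i * c)) (v c) := by fun_prop
  have h6 := h5.analyticOrderAt_comp (hv.analyticAt c)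
  have h7 : analyticOrderAt (fun u => Complex.exp (θ i * u) - Complex.exp (θ i * c)) (v c) ≠ 0 := by
    rw [h5.analyticOrderAt_ne_zero, hvc]; simp
  rw [hvc] at h6 h7
  change _ ≤ analyticOrderAt ((fun u => Complex.exp (θ i * u) - Complex.exp (θ i * c)) ∘ v) c
  rw [h6]
  refine hvo.trans ?_
  exact le_mul_of_one_le_left (by simp) (Order.one_le_iff_pos.2 (pos_iff_ne_zero.2 h7))

lemma anal_step {ι : Type*} (U : Finset ι) (q : ι → Polynomial ℂ) (L l1 l2 : ℂ) (a x y w θ : ι → ℂ)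
    (hw : ∀ i, w i = x i * l1 + y i * l2) (G κ S mm : ℕ) (hG : 0 < G) (hS : 0 < S) (hmm : 2*mm ≤ G*S)
    (M W Θ V : ℝ) (hW : ∀ i ∈ U, ‖w i‖ ≤ W) (hW0 : 0 ≤ W) (hΘ : ∀ i ∈ U, ‖θ i‖ ≤ Θ) (hΘ0 : 0 ≤ Θ)
    (hV : 1+(G*(30*S)+1)+4*κ*Real.exp (Real.pi*κ*(G*(30*S)+1)) ≤ V) (hΘV : Θ*V ≤ 1)
    (hvan : ∀ s : ℤ, Odd s → |s| < G*S → ∀ u0 u1 u2, u0+u1+u2 < 4*κ →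
      gf U q L a x y (fun i => w i + θ i) u0 u1 u2 ((s:ℂ)/G) = 0)
    (hM : ∀ z : ℂ, ‖z‖ ≤ 30*S → ∀ t0 t1 t2, t0+t1+t2 < 2*κ →
      ∑ i ∈ U, ‖a i * ((Polynomial.hasseDeriv t0 (q i)).eval (L*z) * (x i^t1 * y i^t2))‖ ≤ M)
    (x0 : ℝ) (hx0 : |x0| ≤ S) (t0 t1 t2 : ℕ) (ht : t0+t1+t2 < 2*κ) :
    ‖gf U q L a x y (fun i => w i + θ i) t0 t1 t2 x0‖ ≤
      M * Real.exp (30*W*S+1) * ((899:ℝ)⁻¹)^(mm*(2*κ)) + M * Real.exp (W*S) * (4*(Θ*V)) := by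
  obtain ⟨v, hvd, hvn, hvb⟩ := exists_v κ G hG
  have hS' : (0:ℝ) < S := by exact_mod_cast hS
  have hG' : (0:ℝ) < G := by exact_mod_cast hG
  have hG1 : (1:ℝ) ≤ G := by exact_mod_cast hG
  have hvV : ∀ z : ℂ, ‖z‖ ≤ 30*S → ‖v z‖ ≤ V := by
    intro z hz
    refine (hvb z).trans (le_trans ?_ hV)
    gcongr
  have hVS : (S:ℝ) ≤ V := by
    refine le_trans ?_ hV
    have : 0 ≤ 4*κ*Real.exp (Real.pi*κ*(G*(30*S)+1)) := by positivity
    nlinarith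
  have hV0 : 0 ≤ V := hS'.le.trans hVS
  have hnode : ∀ s : ℤ, Odd s → |s| < G*S →
      ((2*κ:ℕ):ℕ∞) ≤ analyticOrderAt (ff U q L a x y w θ v t0 t1 t2) ((s:ℂ)/G) := by
    intro s hs hsb
    apply ff_order U q L l1 l2 a x y w θ v hvd hw _ _ (hvn s hs).1 (hvn s hs).2
    intro u0 u1 u2 hu
    exact hvan s hs hsb u0 u1 u2 (by omega)
  have hx0c : ‖(x0:ℂ)‖ ≤ S := by simpa using hx0
  have hx0c' : ‖(x0:ℂ)‖ ≤ 30*S := by linarith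
  have hf := schwarz (2*κ) mm (fun i => ((2*i+1:ℕ):ℝ)/G) S 30 (M * Real.exp (30*W*S+1)) hS' (by norm_num)
    (by
      intro i hi
      refine ⟨by positivity, ?_⟩
      rw [div_le_iff₀ hG']
      have : 2*i+1 ≤ G*S := by omega
      have : ((2*i+1:ℕ):ℝ) ≤ ((G*S:ℕ):ℝ) := by exact_mod_cast this
      push_cast at this ⊢; linarith [mul_comm (G:ℝ) (S:ℝ)])
    (by
      intro i hi j hj hij
      have := (div_left_inj' hG'.ne').1 hij
      have : 2*i+1 = 2*j+1 := by exact_mod_cast this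
      omega)
    (ff U q L a x y w θ v t0 t1 t2) (ff_diff U q L a x y w θ v hvd t0 t1 t2)
    (by
      intro i hi
      have h1 : (((2*i+1:ℕ):ℤ)) < G*S := by
        have : 2*i+1 < G*S ∨ 2*i+1 = G*S := by omega
        have : 2*i+1 < G*S := by omega
        exact_mod_cast this
      have n1 := hnode ((2*i+1:ℕ):ℤ) ⟨i, by push_cast; ring⟩ (by rw [abs_of_nonneg (by positivity)]; exact h1)
      have n2 := hnode (-((2*i+1:ℕ):ℤ)) ⟨-i-1, by push_cast; ring⟩ (by rw [abs_neg, abs_of_nonneg (by positivity)]; exact h1)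
      constructor
      · convert n1 using 2; push_cast; rfl
      · convert n2 using 2; push_cast; ring)
    (by
      intro z hz
      have hz' : ‖z‖ ≤ 30*S := hz.le
      refine le_trans ?_ (mul_le_mul_of_nonneg_right (hM z hz' t0 t1 t2 ht) (Real.exp_pos _).le)
      unfold ff
      rw [Finset.sum_mul]
      refine (norm_sum_le _ _).trans (Finset.sum_le_sum fun i hi => ?_)
      have : a i * ((Polynomial.hasseDeriv t0 (q i)).eval (L*z) * (x i^t1 * y i^t2) * Complex.exp (w i * z)) * Complex.exp (θ i * v z)
        = a i * ((Polynomial.hasseDeriv t0 (q i)).eval (L*z) * (x i^t1 * y i^t2)) * (Complex.exp (w i * z) * Complex.exp (θ i * v z)) := by ring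
      rw [this, norm_mul _ (_ * _), ← Complex.exp_add]
      gcongr
      refine (Complex.norm_exp_le_exp_norm _).trans (Real.exp_le_exp.2 ?_)
      refine (norm_add_le _ _).trans ?_
      rw [norm_mul, norm_mul]
      have p1 : ‖w i‖ * ‖z‖ ≤ W * (30*S) := by gcongr; exact hW i hi
      have p2 : ‖θ i‖ * ‖v z‖ ≤ Θ * V := by gcongr; exacts [hΘ i hi, hvV z hz']
      linarith)
    x0 hx0
  have hd : ‖gf U q L a x y (fun i => w i + θ i) t0 t1 t2 x0 - ff U q L a x y w θ v t0 t1 t2 x0‖ ≤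
      M * Real.exp (W*S) * (4*(Θ*V)) := by
    rw [mul_assoc]
    refine le_trans ?_ (mul_le_mul_of_nonneg_right (hM x0 hx0c' t0 t1 t2 ht) (by positivity))
    unfold gf ff
    rw [← Finset.sum_sub_distrib, Finset.sum_mul]
    refine (norm_sum_le _ _).trans (Finset.sum_le_sum fun i hi => ?_)
    have : a i * ((Polynomial.hasseDeriv t0 (q i)).eval (L*x0) * (x i^t1 * y i^t2) * Complex.exp ((w i + θ i) * x0)) -
       a i * ((Polynomial.hasseDeriv t0 (q i)).eval (L*x0) * (x i^t1 * y i^t2) * Complex.exp (w i * x0)) * Complex.exp (θ i * v x0)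
        = a i * ((Polynomial.hasseDeriv t0 (q i)).eval (L*x0) * (x i^t1 * y i^t2)) * (Complex.exp (w i * x0) * 
          ((Complex.exp (θ i * x0) - 1) - (Complex.exp (θ i * v x0) - 1))) := by rw [add_mul, Complex.exp_add]; ring
    rw [this, norm_mul _ (_ * _), norm_mul (Complex.exp _)]
    have p0 : ‖Complex.exp (w i * x0)‖ ≤ Real.exp (W*S) := by
      refine (Complex.norm_exp_le_exp_norm _).trans (Real.exp_le_exp.2 ?_)
      rw [norm_mul]; gcongr; exact hW i hi
    have p1 : ‖θ i * x0‖ ≤ Θ * V := by rw [norm_mul]; gcongr; exacts [hΘ i hi, hx0c.trans hVS]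
    have p2 : ‖θ i * v x0‖ ≤ Θ * V := by rw [norm_mul]; gcongr; exacts [hΘ i hi, hvV _ hx0c']
    have p3 := Complex.norm_exp_sub_one_le (p1.trans hΘV)
    have p4 := Complex.norm_exp_sub_one_le (p2.trans hΘV)
    gcongr
    refine (norm_sub_le _ _).trans ?_
    linarith
  have : ((30:ℝ)^2-1)⁻¹ = (899:ℝ)⁻¹ := by norm_num
  rw [this] at hf
  calc _ = ‖ff U q L a x y w θ v t0 t1 t2 x0 + (gf U q L a x y (fun i => w i + θ i) t0 t1 t2 x0 - ff U q L a x y w θ v t0 t1 t2 x0)‖ := by ring_nf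
    _ ≤ _ := (norm_add_le _ _).trans (add_le_add hf hd)

noncomputable def lnp (k : ℕ) : Polynomial ℂ := Polynomial.C (((k:ℂ)+1)⁻¹) * (Polynomial.X - Polynomial.C (k:ℂ))

noncomputable def binp : ℕ → Polynomial ℂ
  | 0 => 1
  | k+1 => binp k * lnp k

noncomputable def rp : ℕ → Polynomial ℂ
  | 0 => 1
  | k+1 => rp k * (Polynomial.C (((k:ℂ)+1)⁻¹) * Polynomial.X - 1)

lemma binp_rp (k : ℕ) : binp (k+1) = Polynomial.C (((k:ℂ)+1)⁻¹) * Polynomial.X * rp k := by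
  induction k with
  | zero => simp [binp, rp, lnp]
  | succ k ih =>
    rw [binp, ih, rp, lnp]
    have h : Polynomial.C (((k:ℂ)+1)⁻¹) * Polynomial.C (((k:ℂ)+1)) = 1 := by
      rw [← Polynomial.C_mul, inv_mul_cancel₀ (by exact_mod_cast Nat.succ_ne_zero k), Polynomial.C_1]
    push_cast
    linear_combination (- Polynomial.C (((k:ℂ)+1+1)⁻¹) * Polynomial.X * rp k) * h

lemma lnp_add (k : ℕ) : Polynomial.taylor 1 (Polynomial.C (((k:ℂ)+1)⁻¹) * Polynomial.X - 1) = lnp k := by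
  have h : Polynomial.C (((k:ℂ)+1)⁻¹) * (Polynomial.C (k:ℂ) + 1) = 1 := by
    rw [← Polynomial.C_1, ← Polynomial.C_add, ← Polynomial.C_mul, inv_mul_cancel₀ (by exact_mod_cast Nat.succ_ne_zero k), Polynomial.C_1]
  have : Polynomial.taylor 1 (1:Polynomial ℂ) = 1 := Polynomial.taylor_one _
  rw [map_sub, this, Polynomial.taylor_mul, Polynomial.taylor_C, Polynomial.taylor_X, lnp, Polynomial.C_1]
  linear_combination h

lemma rp_taylor (k : ℕ) : Polynomial.taylor 1 (rp k) = binp k := by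
  induction k with
  | zero => simp [rp, binp]
  | succ k ih => rw [rp, Polynomial.taylor_mul, ih, lnp_add, binp]

lemma binp_pascal (k : ℕ) : Polynomial.taylor 1 (binp (k+1)) = binp (k+1) + binp k := by
  rw [binp_rp, Polynomial.taylor_mul, rp_taylor, Polynomial.taylor_mul, Polynomial.taylor_C, Polynomial.taylor_X, ← binp_rp, binp, lnp]
  have h : Polynomial.C (((k:ℂ)+1)⁻¹) * (Polynomial.C (k:ℂ) + 1) = 1 := by
    rw [← Polynomial.C_1, ← Polynomial.C_add, ← Polynomial.C_mul, inv_mul_cancel₀ (by exact_mod_cast Nat.succ_ne_zero k), Polynomial.C_1]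
  rw [Polynomial.C_1]
  linear_combination (binp k) * h

def IntAt (ν : ℕ) (u : ℂ) (p : Polynomial ℂ) : Prop := ∀ t, ∃ c : ℤ, (ν:ℂ)^t * (Polynomial.taylor u p).coeff t = c

lemma IntAt.mul {ν u p q} (hp : IntAt ν u p) (hq : IntAt ν u q) : IntAt ν u (p*q) := by
  intro t
  choose f hf using hp
  choose g hg using hq
  refine ⟨∑ x ∈ Finset.HasAntidiagonal.antidiagonal t, f x.1 * g x.2, ?_⟩
  rw [Polynomial.taylor_mul, Polynomial.coeff_mul, Finset.mul_sum]
  push_cast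
  refine Finset.sum_congr rfl fun x hx => ?_
  rw [← hf, ← hg, ← Finset.HasAntidiagonal.mem_antidiagonal.1 hx, pow_add]; ring

lemma IntAt.add {ν u p q} (hp : IntAt ν u p) (hq : IntAt ν u q) : IntAt ν u (p+q) := by
  intro t
  obtain ⟨a, ha⟩ := hp t
  obtain ⟨b, hb⟩ := hq t
  exact ⟨a+b, by rw [map_add, Polynomial.coeff_add, mul_add, ha, hb]; push_cast; rfl⟩

lemma IntAt.sub {ν u p q} (hp : IntAt ν u p) (hq : IntAt ν u q) : IntAt ν u (p-q) := by
  intro t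
  obtain ⟨a, ha⟩ := hp t
  obtain ⟨b, hb⟩ := hq t
  exact ⟨a-b, by rw [map_sub, Polynomial.coeff_sub, mul_sub, ha, hb]; push_cast; rfl⟩

lemma IntAt.one {ν u} : IntAt ν u 1 := by
  intro t
  rw [Polynomial.taylor_one, Polynomial.C_1, Polynomial.coeff_one]
  by_cases h : t = 0
  · exact ⟨1, by simp [h]⟩
  · exact ⟨0, by simp [h]⟩

lemma IntAt.pow {ν u p} (hp : IntAt ν u p) (k : ℕ) : IntAt ν u (p^k) := by
  induction k with
  | zero => simpa using IntAt.one
  | succ k ih => rw [pow_succ]; exact ih.mul hp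

lemma IntAt.lin {ν : ℕ} {k : ℕ} (h : (k+1) ∣ ν) : IntAt ν 0 (Polynomial.C (((k:ℂ)+1)⁻¹) * Polynomial.X) := by
  obtain ⟨d, rfl⟩ := h
  intro t
  rw [Polynomial.taylor_zero, Polynomial.coeff_C_mul, Polynomial.coeff_X]
  by_cases h : 1 = t
  · subst h
    refine ⟨d, ?_⟩
    have : (k:ℂ)+1 ≠ 0 := by exact_mod_cast Nat.succ_ne_zero k
    push_cast; field_simp
  · exact ⟨0, by simp [h]⟩

lemma rp_int {ν h : ℕ} (hν : ∀ k < h, (k+1) ∣ ν) (k : ℕ) (hk : k ≤ h) : IntAt ν 0 (rp k) := by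
  induction k with
  | zero => exact IntAt.one
  | succ k ih => exact (ih (by omega)).mul ((IntAt.lin (hν k (by omega))).sub IntAt.one)

lemma binp_int {ν h : ℕ} (hν : ∀ k < h, (k+1) ∣ ν) (k : ℕ) : k ≤ h → ∀ u : ℤ, IntAt ν u (binp k) := by
  induction k with
  | zero => intros; exact IntAt.one
  | succ k ih =>
    intro hk u
    have hs : ∀ u : ℤ, ∀ p, IntAt ν ((u+1:ℤ):ℂ) p ↔ IntAt ν u (Polynomial.taylor 1 p) := by
      intro u p
      unfold IntAt
      rw [Polynomial.taylor_taylor]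
      push_cast
      rfl
    have ih' := ih (by omega)
    induction u using Int.induction_on with
    | zero =>
      rw [binp_rp]; push_cast
      exact (IntAt.lin (hν k (by omega))).mul (rp_int hν k (by omega))
    | succ u iu => 
      rw [hs, binp_pascal]
      exact iu.add (ih' _)
    | pred u iu =>
      have e : (-(u:ℤ)) = (-(u:ℤ) - 1) + 1 := by ring
      rw [e, hs, binp_pascal] at iu
      have := iu.sub (ih' (-(u:ℤ)-1))
      rwa [add_sub_cancel_right] at this

lemma hasse_int {ν h : ℕ} (hν : ∀ k < h, (k+1) ∣ ν) (a b : ℕ) (ha : a ≤ h) (u : ℤ) (t : ℕ) :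
    ∃ c : ℤ, (ν:ℂ)^t * (Polynomial.hasseDeriv t (binp a * binp h ^ b)).eval (u:ℂ) = c := by
  rw [← Polynomial.taylor_coeff]
  exact ((binp_int hν a ha u).mul ((binp_int hν h le_rfl u).pow b)) t

def Bd (p : Polynomial ℂ) (ζ : ℂ) (B : ℝ) : Prop :=
  ∃ P : Polynomial ℝ, (∀ t, ‖(Polynomial.taylor ζ p).coeff t‖ ≤ P.coeff t) ∧ P.eval 1 ≤ B

lemma eval_nn (P : Polynomial ℝ) (h : ∀ t, 0 ≤ P.coeff t) (t : ℕ) : P.coeff t ≤ P.eval 1 := by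
  rw [Polynomial.eval_eq_sum_range]
  simp only [one_pow, mul_one]
  by_cases ht : t ∈ Finset.range (P.natDegree+1)
  · exact Finset.single_le_sum (f := fun i => P.coeff i) (fun i _ => h i) ht
  · rw [Polynomial.coeff_eq_zero_of_natDegree_lt (by simpa using ht)]
    exact Finset.sum_nonneg fun i _ => h i

lemma Bd.le {p ζ B} (h : Bd p ζ B) (t : ℕ) : ‖(Polynomial.hasseDeriv t p).eval ζ‖ ≤ B := by
  obtain ⟨P, h1, h2⟩ := h
  rw [← Polynomial.taylor_coeff]
  exact (h1 t).trans ((eval_nn P (fun t => (norm_nonneg _).trans (h1 t)) t).trans h2)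

lemma Bd.mul {p q ζ A B} (hp : Bd p ζ A) (hq : Bd q ζ B) : Bd (p*q) ζ (A*B) := by
  obtain ⟨P, h1, h2⟩ := hp
  obtain ⟨Q, g1, g2⟩ := hq
  refine ⟨P*Q, ?_, ?_⟩
  · intro t
    rw [Polynomial.taylor_mul, Polynomial.coeff_mul, Polynomial.coeff_mul]
    refine (norm_sum_le _ _).trans (Finset.sum_le_sum fun x _ => ?_)
    rw [norm_mul]
    exact mul_le_mul (h1 _) (g1 _) (norm_nonneg _) ((norm_nonneg _).trans (h1 _))
  · rw [Polynomial.eval_mul]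
    have e1 := eval_nn P (fun t => (norm_nonneg _).trans (h1 t)) 0
    have e2 := eval_nn Q (fun t => (norm_nonneg _).trans (g1 t)) 0
    have e3 := (norm_nonneg _).trans (h1 0)
    have e4 := (norm_nonneg _).trans (g1 0)
    exact mul_le_mul h2 g2 (e4.trans e2) (e3.trans (e1.trans h2))

lemma Bd.one {ζ} : Bd 1 ζ 1 := by
  refine ⟨1, fun t => ?_, by simp⟩
  rw [Polynomial.taylor_one, Polynomial.C_1, Polynomial.coeff_one, Polynomial.coeff_one]
  split_ifs <;> simp

lemma Bd.mono {p ζ A B} (h : Bd p ζ A) (hAB : A ≤ B) : Bd p ζ B := by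
  obtain ⟨P, h1, h2⟩ := h
  exact ⟨P, h1, h2.trans hAB⟩

lemma Bd.pow {p ζ A} (h : Bd p ζ A) (k : ℕ) : Bd (p^k) ζ (A^k) := by
  induction k with
  | zero => simpa using Bd.one
  | succ k ih => rw [pow_succ, pow_succ]; exact ih.mul h

lemma lnp_bd (k : ℕ) (ζ : ℂ) (X : ℝ) (hX : ‖ζ‖+1 ≤ X) : Bd (lnp k) ζ ((X+k)/(k+1)) := by
  refine ⟨Polynomial.C (((k:ℝ)+1)⁻¹) * (Polynomial.X + Polynomial.C (‖ζ‖+k)), ?_, ?_⟩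
  · intro t
    rw [lnp, Polynomial.taylor_mul, Polynomial.taylor_C, map_sub, Polynomial.taylor_X, Polynomial.taylor_C, Polynomial.coeff_C_mul,
      Polynomial.coeff_C_mul, norm_mul]
    have : ‖((k:ℂ)+1)⁻¹‖ = ((k:ℝ)+1)⁻¹ := by
      rw [norm_inv]; congr 1; exact_mod_cast Complex.norm_natCast (k+1)
    rw [this]
    gcongr
    rw [add_sub_assoc, ← Polynomial.C_sub, Polynomial.coeff_add, Polynomial.coeff_add, Polynomial.coeff_X, Polynomial.coeff_X, Polynomial.coeff_C, Polynomial.coeff_C]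
    have e : ‖ζ - (k:ℂ)‖ ≤ ‖ζ‖ + k := by simpa using norm_sub_le ζ (k:ℂ)
    rcases t with _ | _ | t
    · simpa using e
    · simp
    · simp
  · simp only [Polynomial.eval_mul, Polynomial.eval_C, Polynomial.eval_add, Polynomial.eval_X]
    rw [div_eq_inv_mul]
    refine mul_le_mul_of_nonneg_left ?_ (by positivity)
    linarith

lemma binp_bd (k h : ℕ) (hk : k ≤ h) (ζ : ℂ) (K : ℝ) (hh : 0 < h) (hX : ‖ζ‖+1+h ≤ K*h) :
    Bd (binp k) ζ ((Real.exp 1*K)^h) := by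
  set X := ‖ζ‖+1 with hXd
  have hX1 : 1 ≤ X := by simp [hXd]
  have h1 : ∀ k, Bd (binp k) ζ (∏ i ∈ Finset.range k, (X+i)/(i+1)) := by
    intro k
    induction k with
    | zero => simpa [binp] using Bd.one
    | succ k ih => rw [binp, Finset.prod_range_succ]; exact ih.mul (lnp_bd k ζ X le_rfl)
  have hh' : (0:ℝ) < h := by exact_mod_cast hh
  refine (h1 k).mono ?_
  calc ∏ i ∈ Finset.range k, (X+i)/(i+1) ≤ ∏ i ∈ Finset.range h, (X+i)/(i+1) := by
        obtain ⟨d, rfl⟩ := Nat.exists_eq_add_of_le hk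
        rw [Finset.prod_range_add]
        refine le_mul_of_one_le_right (Finset.prod_nonneg fun i _ => by positivity) ?_
        refine Finset.one_le_prod fun i _ => ?_
        rw [le_div_iff₀ (by positivity)]; linarith
    _ ≤ ∏ i ∈ Finset.range h, (K*h)/(i+1) := by
        apply Finset.prod_le_prod
        · intros; positivity
        · intro i hi
          have : (i:ℝ) ≤ h := by exact_mod_cast (Finset.mem_range.1 hi).le
          gcongr; linarith
    _ = K^h * ((h:ℝ)^h/(h.factorial:ℝ)) := by
        rw [Finset.prod_div_distrib, Finset.prod_const, Finset.card_range, mul_pow, ← Finset.prod_range_add_one_eq_factorial]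
        push_cast; ring
    _ ≤ K^h * Real.exp h := by
        have hK : 0 ≤ K := by
          by_contra hc
          push Not at hc
          nlinarith
        gcongr
        exact Real.pow_div_factorial_le_exp _ hh'.le h
    _ = _ := by rw [mul_pow, ← Real.exp_nat_mul]; simp [mul_comm]

lemma hasse_bd (a b h B : ℕ) (ha : a ≤ h) (hb : b < B) (ζ : ℂ) (K : ℝ) (hK : 1 ≤ K) (hh : 0 < h) (hX : ‖ζ‖+1+h ≤ K*h) (t : ℕ) :
    ‖(Polynomial.hasseDeriv t (binp a * binp h ^ b)).eval ζ‖ ≤ (Real.exp 1*K)^(h*B) := by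
  have h1 := ((binp_bd a h ha ζ K hh hX).mul ((binp_bd h h le_rfl ζ K hh hX).pow b)).le t
  refine h1.trans ?_
  rw [← pow_mul, ← pow_add]
  apply pow_le_pow_right₀
  · have := Real.add_one_le_exp (1:ℝ); nlinarith
  · nlinarith

lemma binp_deg (k : ℕ) : binp k ≠ 0 ∧ (binp k).natDegree = k := by
  have hl : ∀ k : ℕ, lnp k ≠ 0 ∧ (lnp k).natDegree = 1 := by
    intro k
    have h : ((k:ℂ)+1)⁻¹ ≠ 0 := inv_ne_zero (by exact_mod_cast Nat.succ_ne_zero k)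
    constructor
    · exact mul_ne_zero (by simpa using h) (Polynomial.X_sub_C_ne_zero _)
    · rw [lnp, Polynomial.natDegree_C_mul h, Polynomial.natDegree_X_sub_C]
  induction k with
  | zero => simp [binp]
  | succ k ih =>
    refine ⟨mul_ne_zero ih.1 (hl k).1, ?_⟩
    rw [binp, Polynomial.natDegree_mul ih.1 (hl k).1, ih.2, (hl k).2]

lemma delta_deg (a b h : ℕ) : binp a * binp h ^ b ≠ 0 ∧ (binp a * binp h ^ b).natDegree = a + h*b := by
  have h0 := (binp_deg h).1
  refine ⟨mul_ne_zero (binp_deg a).1 (pow_ne_zero _ h0), ?_⟩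
  rw [Polynomial.natDegree_mul (binp_deg a).1 (pow_ne_zero _ h0), Polynomial.natDegree_pow, (binp_deg a).2, (binp_deg h).2, mul_comm]

lemma poly_indep {ι : Type*} (U : Finset ι) (hU : U.Nonempty) (q : ι → Polynomial ℂ) (a : ι → ℂ) (ha : ∀ i ∈ U, a i ≠ 0)
    (hq : ∀ i ∈ U, q i ≠ 0) (hinj : ∀ i ∈ U, ∀ j ∈ U, (q i).natDegree = (q j).natDegree → i = j) (N : ℕ)
    (hN : ∀ i ∈ U, (q i).natDegree < N) (Z : Finset ℂ) (hZ : N ≤ Z.card)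
    (hz : ∀ z ∈ Z, ∑ i ∈ U, a i * (q i).eval z = 0) : False := by
  obtain ⟨i0, hi0, hmax⟩ := Finset.exists_max_image U (fun i => (q i).natDegree) hU
  set p : Polynomial ℂ := ∑ i ∈ U, Polynomial.C (a i) * q i with hp
  have hpd : p.natDegree ≤ (q i0).natDegree := by
    apply Polynomial.natDegree_sum_le_of_forall_le
    intro i hi
    exact (Polynomial.natDegree_C_mul_le _ _).trans (hmax i hi)
  have hp0 : p ≠ 0 := by
    intro h0
    have : p.coeff (q i0).natDegree = a i0 * (q i0).leadingCoeff := by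
      rw [hp, Polynomial.finset_sum_coeff, Finset.sum_eq_single i0]
      · rw [Polynomial.coeff_C_mul]; rfl
      · intro i hi hne
        rw [Polynomial.coeff_C_mul, Polynomial.coeff_eq_zero_of_natDegree_lt, mul_zero]
        exact lt_of_le_of_ne (hmax i hi) fun h => hne (hinj i hi i0 hi0 h)
      · exact fun h => absurd hi0 h
    rw [h0, Polynomial.coeff_zero] at this
    exact mul_ne_zero (ha i0 hi0) (by simpa using hq i0 hi0) this.symm
  have := Polynomial.card_le_degree_of_subset_roots (p := p) (Z := Z) (by
    intro z hz'
    rw [Polynomial.mem_roots hp0, Polynomial.IsRoot, hp, Polynomial.eval_finset_sum]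
    simpa using hz z hz')
  have := hN i0 hi0
  omega

lemma num_stage (Q X Y : ℝ) (hQ : 1000 ≤ Q) (hX : X ≤ Real.exp (-272*Q)) (hY : Y ≤ Real.exp (-1200*Q)) :
    (Real.exp (3*Q) * Real.exp (21*Q+1) * X + Real.exp (3*Q) * Real.exp (0.7*Q) * (4*Y)) * Real.exp Q * Real.exp (0.7*Q) *
      Real.exp (0.96*Q) * (Real.exp (3*Q) * Real.exp (2.03*Q))^47 < 1 := by
  have h4 : (4:ℝ) ≤ Real.exp 3 := by have := Real.add_one_le_exp (3:ℝ); linarith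
  have e1 : Real.exp (-1) < 1/2 := by
    rw [Real.exp_neg, inv_lt_comm₀ (Real.exp_pos _) (by norm_num)]; have := Real.exp_one_gt_d9; norm_num; linarith
  have hY4 : 4*Y ≤ Real.exp 3 * Real.exp (-1200*Q) := by
    calc 4*Y ≤ 4*Real.exp (-1200*Q) := by linarith
      _ ≤ _ := by gcongr
  calc _ ≤ (Real.exp (3*Q) * Real.exp (21*Q+1) * Real.exp (-272*Q) + Real.exp (3*Q) * Real.exp (0.7*Q) * (Real.exp 3 * Real.exp (-1200*Q))) * Real.exp Q * Real.exp (0.7*Q) *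
      Real.exp (0.96*Q) * (Real.exp (3*Q) * Real.exp (2.03*Q))^47 := by gcongr
    _ = Real.exp (-8.93*Q+1) + Real.exp (-957.23*Q+3) := by
      simp only [← Real.exp_add, ← Real.exp_nat_mul, add_mul]
      congr 2 <;> push_cast <;> ring
    _ < 1/2 + 1/2 := by
      have a1 : Real.exp (-8.93*Q+1) ≤ Real.exp (-1) := Real.exp_le_exp.2 (by linarith)
      have a2 : Real.exp (-957.23*Q+3) ≤ Real.exp (-1) := Real.exp_le_exp.2 (by linarith)
      linarith
    _ = 1 := by norm_num

lemma num_899 (k : ℕ) : ((899:ℝ)⁻¹)^(40*k) ≤ Real.exp (-272*k) := by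
  have h : Real.exp 34 ≤ 899^5 := by
    have : Real.exp 34 = (Real.exp 1)^34 := by rw [← Real.exp_nat_mul]; norm_num
    rw [this]
    calc (Real.exp 1)^34 ≤ (2.7182818286:ℝ)^34 := by gcongr; exact Real.exp_one_lt_d9.le
      _ ≤ _ := by norm_num
  have h2 : ((899:ℝ)⁻¹)^5 ≤ Real.exp (-34) := by
    rw [Real.exp_neg, inv_pow]
    exact inv_anti₀ (Real.exp_pos _) h
  calc ((899:ℝ)⁻¹)^(40*k) = (((899:ℝ)⁻¹)^5)^(8*k) := by rw [← pow_mul]; congr 1; ring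
    _ ≤ (Real.exp (-34))^(8*k) := by gcongr
    _ = _ := by rw [← Real.exp_nat_mul]; congr 1; push_cast; ring

lemma lin_exp (Q : ℝ) (hQ : 10000000 ≤ Q) : 200*Q ≤ Real.exp (0.01*Q) := by
  have h := Real.pow_div_factorial_le_exp (0.01*Q) (by linarith) 2
  refine le_trans ?_ h
  norm_num [Nat.factorial]
  nlinarith

lemma num_V (Q κ G S : ℝ) (hκ : 0 ≤ κ) (hG : 0 ≤ G) (hS : 0 ≤ S) (hQ : 10000000 ≤ Q) (h1 : κ*(G*S) = 40*Q) (h2 : κ*100 ≤ Q) (h3 : G*S ≤ Q) :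
    1+(G*(30*S)+1)+4*κ*Real.exp (Real.pi*κ*(G*(30*S)+1)) ≤ Real.exp (3780*Q) := by
  have hpi := Real.pi_lt_d4
  have e : Real.pi*κ*(G*(30*S)+1) ≤ 3779*Q := by
    have : Real.pi*κ*(G*(30*S)+1) = Real.pi*(1200*Q+κ) := by linear_combination 30*Real.pi*h1
    rw [this]
    calc Real.pi*(1200*Q+κ) ≤ 3.1416*(1200*Q+κ) := by gcongr
      _ ≤ _ := by linarith
  have e2 : Real.exp (Real.pi*κ*(G*(30*S)+1)) ≤ Real.exp (3779*Q) := Real.exp_le_exp.2 e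
  have e3 : 1 ≤ Real.exp (3779*Q) := Real.one_le_exp (by linarith)
  calc _ ≤ (1+(30*Q+1)) * Real.exp (3779*Q) + Q * Real.exp (3779*Q) := by
        apply add_le_add
        · have : 0 ≤ 1+(30*Q+1) := by linarith
          nlinarith
        · apply mul_le_mul _ e2 (Real.exp_pos _).le (by linarith)
          linarith
    _ = (31*Q+2) * Real.exp (3779*Q) := by ring
    _ ≤ Real.exp (0.01*Q) * Real.exp (3779*Q) := by
        gcongr; have := lin_exp Q hQ; linarith
    _ ≤ _ := by rw [← Real.exp_add]; apply Real.exp_le_exp.2; linarith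

lemma num_Θ (Q Lh Λ : ℝ) (hQ : 10000000 ≤ Q) (hL : Lh ≤ Q) (hL0 : 0 ≤ Lh) (hΛ : |Λ| ≤ Real.exp (-5000*Q)) :
    Lh * |Λ| * Real.exp (3780*Q) ≤ Real.exp (-1200*Q) ∧ Lh * |Λ| ≤ 0.001 := by
  have h1 := lin_exp Q hQ
  have h2 : Lh ≤ Real.exp (0.01*Q) := by linarith
  have h3 : Lh*|Λ| ≤ Real.exp (-4999*Q) := by
    calc _ ≤ Real.exp (0.01*Q) * Real.exp (-5000*Q) := by gcongr
      _ ≤ _ := by rw [← Real.exp_add]; apply Real.exp_le_exp.2; linarith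
  constructor
  · calc _ ≤ Real.exp (-4999*Q) * Real.exp (3780*Q) := by gcongr
      _ ≤ _ := by rw [← Real.exp_add]; apply Real.exp_le_exp.2; linarith
  · refine h3.trans ?_
    have : -4999*Q = -(4999*Q) := by ring
    rw [this, Real.exp_neg]
    have := Real.add_one_le_exp (4999*Q)
    rw [inv_le_comm₀ (Real.exp_pos _) (by norm_num)]
    linarith

noncomputable def PH {ι : Type*} (ω : ℝ) (U : Finset ι) (q : ι → Polynomial ℂ) (k1 k2 k3 p : ι → ℤ) (n m Lh : ℕ) (t0 t1 t2 : ℕ) (z : ℂ) : ℂ :=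
  gf U q ((2*Lh:ℕ):ℂ) (fun i => (p i:ℂ)) (fun i => ((k1 i - n*k3 i:ℤ):ℂ)) (fun i => ((k2 i + m*k3 i:ℤ):ℂ))
    (fun i => ((k1 i * Real.log ((1+√5)/2) + k2 i * Real.log ω + k3 i * Real.log ((-ω^2+4*ω-1)/√5) : ℝ) : ℂ)) t0 t1 t2 z

/-- link of the integer-coefficient real sum with PH -/
lemma PH_real {ι : Type*} (ω : ℝ) (U : Finset ι) (q : ι → Polynomial ℂ) (k1 k2 k3 p : ι → ℤ) (n m Lh ν : ℕ) (t0 t1 t2 : ℕ)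
    (u : ℤ) (z : ℝ) (hz : (2*Lh:ℕ) * z = u) (c : ι → ℤ)
    (hc : ∀ i, (ν:ℂ)^t0 * (Polynomial.hasseDeriv t0 (q i)).eval (u:ℂ) = c i) :
    ((∑ i ∈ U, ((p i * c i * (k1 i - n*k3 i)^t1 * (k2 i + m*k3 i)^t2 : ℤ):ℝ) * Real.exp ((k1 i * Real.log ((1+√5)/2) + k2 i * Real.log ω + k3 i * Real.log ((-ω^2+4*ω-1)/√5)) * z) : ℝ) : ℂ)
      = (ν:ℂ)^t0 * PH ω U q k1 k2 k3 p n m Lh t0 t1 t2 z := by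
  unfold PH gf
  rw [Finset.mul_sum, Complex.ofReal_sum]
  refine Finset.sum_congr rfl fun i _ => ?_
  have hz' : ((2*Lh:ℕ):ℂ) * z = u := by exact_mod_cast congrArg (fun r : ℝ => (r:ℂ)) hz
  rw [hz']
  have := hc i
  push_cast at this ⊢
  rw [← this]
  ring

lemma C_bd {ι : Type*} (U : Finset ι) (q : ι → Polynomial ℂ) (k1 k2 k3 p : ι → ℤ) (n m Lh ν : ℕ) (t0 t1 t2 : ℕ)
    (u : ℤ) (z : ℝ) (hz : (2*Lh:ℕ) * z = u) (c : ι → ℤ)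
    (hc : ∀ i, (ν:ℂ)^t0 * (Polynomial.hasseDeriv t0 (q i)).eval (u:ℂ) = c i) (A : ℝ)
    (hM : ∑ i ∈ U, (ν:ℝ)^t0 * ‖(p i:ℂ) * ((Polynomial.hasseDeriv t0 (q i)).eval (((2*Lh:ℕ):ℂ)*(z:ℂ)) * (((k1 i - n*k3 i:ℤ):ℂ)^t1 * ((k2 i + m*k3 i:ℤ):ℂ)^t2))‖ ≤ A) :
    ∑ i ∈ U, |((p i * c i * (k1 i - n*k3 i)^t1 * (k2 i + m*k3 i)^t2 : ℤ):ℝ)| ≤ A := by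
  refine le_trans (le_of_eq ?_) hM
  refine Finset.sum_congr rfl fun i _ => ?_
  have hz' : ((2*Lh:ℕ):ℂ) * z = u := by exact_mod_cast congrArg (fun r : ℝ => (r:ℂ)) hz
  rw [hz', ← Complex.norm_natCast, ← norm_pow, ← norm_mul]
  rw [← Complex.norm_intCast]
  · have := hc i
    congr 1
    push_cast at this ⊢
    rw [← this]
    ring

lemma nl_aux (Lh S G d κ : ℝ) (hL : 1000 ≤ Lh) (hS : 10240 ≤ S) (hG : 1 ≤ G) (hd : 1 ≤ d) (hk : 0 ≤ κ) (hκ : κ*G = 80*Lh) (h : Lh = G*d) :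
    10000000 ≤ 2*(Lh*S) ∧ Lh ≤ 2*(Lh*S) ∧ κ*100 ≤ 2*(Lh*S) ∧ 2*G*S ≤ 2*(Lh*S) := by
  have h1 : Lh*10240 ≤ Lh*S := mul_le_mul_of_nonneg_left hS (by linarith)
  have h2 : κ*1 ≤ κ*G := mul_le_mul_of_nonneg_left hG hk
  have h3 : G*1 ≤ G*d := mul_le_mul_of_nonneg_left hd (by linarith)
  have h4 : G*S ≤ Lh*S := mul_le_mul_of_nonneg_right (by linarith) (by linarith)
  refine ⟨by linarith, by linarith, by linarith, by linarith⟩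

set_option maxHeartbeats 1000000 in
lemma stage_step (ω : ℝ) (hω : ω^3-ω^2-ω-1=0) (hω1 : 1.839 < ω) (hω2 : ω < 1.84)
    {ι : Type*} (U : Finset ι) (q : ι → Polynomial ℂ) (k1 k2 k3 p : ι → ℤ) (n m Lh ν S S2 P G d κ : ℕ)
    (hν : 0 < ν) (hG : 0 < G) (hLh : Lh = G*d) (hSS : S = 2*S2) (hP : P = Lh*S) (hκ : κ*G = 80*Lh) (hS : 10240 ≤ S) (hLb : 1000 ≤ Lh)
    (hq : ∀ i (u : ℤ) (t : ℕ), ∃ c : ℤ, (ν:ℂ)^t * (Polynomial.hasseDeriv t (q i)).eval (u:ℂ) = c)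
    (hk : ∀ i ∈ U, |k1 i| ≤ Lh ∧ |k2 i| ≤ Lh ∧ |k3 i| ≤ Lh)
    (hM : ∀ z : ℂ, ‖z‖ ≤ 30*S → ∀ t0 t1 t2, t0+t1+t2 < 2*κ →
      ∑ i ∈ U, (ν:ℝ)^t0 * ‖(p i:ℂ) * ((Polynomial.hasseDeriv t0 (q i)).eval (((2*Lh:ℕ):ℂ)*z) * (((k1 i - n*k3 i:ℤ):ℂ)^t1 * ((k2 i + m*k3 i:ℤ):ℂ)^t2))‖ ≤ Real.exp (3*(2*P)))
    (hνp : ∀ t < 2*κ, (ν:ℝ)^t ≤ Real.exp (2*P))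
    (hΛ : |n * Real.log ((1+√5)/2) - m * Real.log ω + Real.log ((-ω^2+4*ω-1)/√5)| ≤ Real.exp (-5000*(2*P)))
    (hU : U.Nonempty) (hres : ∀ i ∈ U, ∀ j ∈ U, k1 i % G = k1 j % G ∧ k2 i % G = k2 j % G ∧ k3 i % G = k3 j % G)
    (hvan : ∀ s : ℤ, Odd s → |s| < G*S → ∀ t0 t1 t2, t0+t1+t2 < 4*κ → PH ω U q k1 k2 k3 p n m Lh t0 t1 t2 ((s:ℂ)/G) = 0) :
    ∃ U' ⊆ U, U'.Nonempty ∧ (∀ i ∈ U', ∀ j ∈ U', k1 i % (2*G) = k1 j % (2*G) ∧ k2 i % (2*G) = k2 j % (2*G) ∧ k3 i % (2*G) = k3 j % (2*G)) ∧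
    (∀ s : ℤ, Odd s → |s| < (2*G)*S → ∀ t0 t1 t2, t0+t1+t2 < 2*κ → PH ω U' q k1 k2 k3 p n m Lh t0 t1 t2 ((s:ℂ)/(2*G)) = 0) := by
  obtain ⟨i0, hi0⟩ := hU
  obtain ⟨b1, b2, b3⟩ := logs_bd ω hω1 hω2
  set l1 := Real.log ((1+√5)/2) with hl1
  set l2 := Real.log ω with hl2
  set l3 := Real.log ((-ω^2+4*ω-1)/√5) with hl3
  set Λ := n*l1 - m*l2 + l3 with hΛd
  refine ⟨U.filter (fun i => k1 i % (2*G) = k1 i0 % (2*G) ∧ k2 i % (2*G) = k2 i0 % (2*G) ∧ k3 i % (2*G) = k3 i0 % (2*G)), Finset.filter_subset _ _, ⟨i0, by simp [hi0]⟩, ?_, ?_⟩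
  · intro i hi j hj
    have hi := (Finset.mem_filter.1 hi).2
    have hj := (Finset.mem_filter.1 hj).2
    exact ⟨hi.1.trans hj.1.symm, hi.2.1.trans hj.2.1.symm, hi.2.2.trans hj.2.2.symm⟩
  intro s hs hsb t0 t1 t2 ht
  have hGr : (1:ℝ) ≤ G := by exact_mod_cast hG
  have hνr : (1:ℝ) ≤ ν := by exact_mod_cast hν
  have hLr : (1000:ℝ) ≤ Lh := by exact_mod_cast hLb
  have hSr : (10240:ℝ) ≤ S := by exact_mod_cast hS
  have hPr : (P:ℝ) = Lh*S := by exact_mod_cast hP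
  have hκr : (κ:ℝ)*G = 80*Lh := by exact_mod_cast hκ
  have hLGr : (Lh:ℝ) = G*d := by exact_mod_cast hLh
  have hd1 : (1:ℝ) ≤ d := by
    have : d ≠ 0 := by rintro rfl; simp at hLh; omega
    exact_mod_cast Nat.pos_of_ne_zero this
  obtain ⟨hQ, hLP, hκP, hGP⟩ := nl_aux Lh S G d κ hLr hSr hGr hd1 (by positivity) hκr hLGr
  rw [← hPr] at hQ hLP hκP hGP
  have hsr : |(s:ℝ)| ≤ 2*G*S := by exact_mod_cast hsb.le
  set z : ℝ := s/(2*G) with hz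
  have hzS : |z| ≤ S := by
    rw [hz, abs_div, div_le_iff₀ (by positivity), abs_of_nonneg (show (0:ℝ) ≤ 2*G by positivity)]; linarith
  have hzu : ((2*Lh:ℕ):ℝ) * z = ((d*s:ℤ):ℝ) := by
    rw [hz]; push_cast; rw [hLGr]; field_simp
  choose c hc using fun i => hq i (d*s) t0
  have hCb := C_bd U q k1 k2 k3 p n m Lh ν t0 t1 t2 (d*s) z hzu c hc _ (hM z (by rw [Complex.norm_real, Real.norm_eq_abs]; linarith) t0 t1 t2 ht)
  have hlink := fun V : Finset ι => PH_real ω V q k1 k2 k3 p n m Lh ν t0 t1 t2 (d*s) z hzu c hc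
  -- analytic estimate
  have hθ := num_Θ (2*P) Lh Λ hQ hLP (by linarith) hΛ
  have hθ1 : (Lh * |Λ|) * Real.exp (3780*(2*P)) ≤ 1 := hθ.1.trans (Real.exp_le_one_iff.2 (by linarith))
  have hki : ∀ i ∈ U, |(k1 i:ℝ)| ≤ Lh ∧ |(k2 i:ℝ)| ≤ Lh ∧ |(k3 i:ℝ)| ≤ Lh := by
    intro i hi
    have := hk i hi
    exact ⟨by exact_mod_cast this.1, by exact_mod_cast this.2.1, by exact_mod_cast this.2.2⟩
  have han := anal_step U q ((2*Lh:ℕ):ℂ) l1 l2 (fun i => (p i:ℂ)) (fun i => ((k1 i - n*k3 i:ℤ):ℂ)) (fun i => ((k2 i + m*k3 i:ℤ):ℂ))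
    (fun i => ((k1 i - n*k3 i:ℤ):ℂ) * l1 + ((k2 i + m*k3 i:ℤ):ℂ) * l2) (fun i => ((k3 i * Λ : ℝ):ℂ)) (fun i => rfl) G κ S (G*S2) hG (by omega)
    (by rw [hSS]; apply le_of_eq; ring) (Real.exp (3*(2*P))) (1.4*Lh) (Lh * |Λ|) (Real.exp (3780*(2*P)))
    (by
      intro i hi
      obtain ⟨c1, c2, c3⟩ := hki i hi
      have e : ((k1 i - n*k3 i:ℤ):ℂ) * l1 + ((k2 i + m*k3 i:ℤ):ℂ) * l2 = ((k1 i * l1 + k2 i * l2 + k3 i * l3 - k3 i * Λ : ℝ):ℂ) := by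
        rw [hΛd]; push_cast; ring
      simp only [e]
      rw [Complex.norm_real, Real.norm_eq_abs]
      have f1 : |(k1 i:ℝ) * l1| ≤ Lh*0.485 := by rw [abs_mul, abs_of_nonneg b1.1]; exact mul_le_mul c1 b1.2 b1.1 (by linarith)
      have f2 : |(k2 i:ℝ) * l2| ≤ Lh*0.62 := by rw [abs_mul, abs_of_nonneg b2.1]; exact mul_le_mul c2 b2.2 b2.1 (by linarith)
      have f3 : |(k3 i:ℝ) * l3| ≤ Lh*0.29 := by rw [abs_mul, abs_of_nonneg b3.1]; exact mul_le_mul c3 b3.2 b3.1 (by linarith)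
      have f4 : |(k3 i:ℝ) * Λ| ≤ 0.001 := by
        rw [abs_mul]; exact (mul_le_mul_of_nonneg_right c3 (abs_nonneg _)).trans hθ.2
      rw [abs_le] at f1 f2 f3 f4 ⊢
      constructor <;> linarith)
    (by positivity)
    (by
      intro i hi
      rw [Complex.norm_real, Real.norm_eq_abs, abs_mul]
      exact mul_le_mul_of_nonneg_right (hki i hi).2.2 (abs_nonneg _))
    (by positivity)
    (num_V (2*P) κ G S (by positivity) (by positivity) (by positivity) hQ (by rw [hPr]; linear_combination S*hκr)
      hκP (by linarith [hGP, show (0:ℝ) ≤ G*S by positivity]))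
    hθ1
    (by
      intro s hs hsb u0 u1 u2 hu
      have := hvan s hs (by exact_mod_cast hsb) u0 u1 u2 hu
      unfold PH at this
      convert this using 2
      funext i
      rw [← hl1, ← hl2, ← hl3, hΛd]; push_cast; ring)
    (by
      intro z hz u0 u1 u2 hu
      refine le_trans (Finset.sum_le_sum fun i _ => ?_) (hM z hz u0 u1 u2 hu)
      exact le_mul_of_one_le_left (norm_nonneg _) (one_le_pow₀ hνr))
    z hzS t0 t1 t2 ht
  have hPH : gf U q ((2*Lh:ℕ):ℂ) (fun i => (p i:ℂ)) (fun i => ((k1 i - n*k3 i:ℤ):ℂ)) (fun i => ((k2 i + m*k3 i:ℤ):ℂ))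
      (fun i => (((k1 i - n*k3 i:ℤ):ℂ) * l1 + ((k2 i + m*k3 i:ℤ):ℂ) * l2) + ((k3 i * Λ : ℝ):ℂ)) t0 t1 t2 z = PH ω U q k1 k2 k3 p n m Lh t0 t1 t2 z := by
    unfold PH
    congr 1
    funext i
    rw [← hl1, ← hl2, ← hl3, hΛd]; push_cast; ring
  rw [hPH] at han
  have hG2 : ((G:ℤ):ℝ) = G := by push_cast; rfl
  have hkd : ∀ k : ℤ, |k| ≤ Lh → |k / G * s| ≤ (2*P:ℕ) := by
    intro k hk
    have hGz : (0:ℤ) < G := by exact_mod_cast hG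
    have hLz : (Lh:ℤ) = d*G := by rw [hLh]; push_cast; ring
    have h1 : |k/G| ≤ d := by
      rw [abs_le] at hk ⊢
      constructor
      · rw [Int.le_ediv_iff_mul_le hGz]; linarith [hk.1]
      · have := Int.ediv_le_ediv hGz hk.2
        rwa [hLz, Int.mul_ediv_cancel _ hGz.ne'] at this
    rw [abs_mul, hP, hLh]
    push_cast
    calc |k/(G:ℤ)| * |s| ≤ d * (2*G*S) := mul_le_mul h1 hsb.le (abs_nonneg _) (by positivity)
      _ = _ := by ring
  have hst := arith_step ω hω hω1 hω2 (G:ℤ) s (by exact_mod_cast hG) (Int.odd_iff.1 hs) P U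
    (fun i => p i * c i * (k1 i - n*k3 i)^t1 * (k2 i + m*k3 i)^t2) k1 k2 k3 i0 hi0 (fun i hi => hres i hi i0 hi0)
    (fun i hi => ⟨hkd _ (hk i hi).1, hkd _ (hk i hi).2.1, hkd _ (hk i hi).2.2⟩)
    (by
      have : (2*G*S:ℝ) ≤ 2*P := hGP
      exact_mod_cast hsr.trans this)
    (Real.exp (3*(2*P))) (Real.one_le_exp (by positivity)) hCb
    (by
      have e0 : (s:ℝ)/(2*((G:ℤ):ℝ)) = z := by rw [hG2]
      simp only [e0]
      have hl := congrArg norm (hlink U)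
      rw [Complex.norm_real, Real.norm_eq_abs, norm_mul, norm_pow, Complex.norm_natCast] at hl
      rw [hl]
      have hmm : (G*S2)*(2*κ) = 40*(2*P) := by
        rw [hP]
        calc (G*S2)*(2*κ) = (κ*G)*(2*S2) := by ring
          _ = _ := by rw [hκ, ← hSS]; ring
      rw [hmm] at han
      have nX := num_899 (2*P)
      have ns := num_stage (2*P) _ _ (by linarith) (by exact_mod_cast nX) hθ.1
      refine lt_of_le_of_lt ?_ ns
      have g1 : 30*(1.4*(Lh:ℝ))*S+1 = 21*(2*P)+1 := by rw [hPr]; ring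
      have g2 : 1.4*(Lh:ℝ)*S = 0.7*(2*P) := by rw [hPr]; ring
      rw [g1, g2] at han
      have g3 : 1.4*|(s:ℝ)|/2 ≤ 0.7*(2*P) := by linarith
      have g4 : 1.92*(P:ℝ) = 0.96*(2*P) := by ring
      have g5 : 4.06*(P:ℝ) = 2.03*(2*P) := by ring
      rw [g4, g5]
      have hn := (norm_nonneg _).trans han
      have g6 := mul_le_mul han (hνp t0 (by omega)) (by positivity) hn
      rw [mul_comm ‖_‖] at g6
      exact mul_le_mul_of_nonneg_right (mul_le_mul_of_nonneg_right (mul_le_mul g6 (Real.exp_le_exp.2 g3) (Real.exp_pos _).le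
        (mul_nonneg hn (Real.exp_pos _).le)) (Real.exp_pos _).le) (pow_nonneg (mul_nonneg (Real.exp_pos _).le (Real.exp_pos _).le) _))
  have hz' : (z:ℂ) = (s:ℂ)/(2*G) := by rw [hz]; push_cast; rfl
  have e0 : (s:ℝ)/(2*((G:ℤ):ℝ)) = z := by rw [hG2]
  simp only [e0] at hst
  have hl := hlink (U.filter (fun i => k1 i % (2*G) = k1 i0 % (2*G) ∧ k2 i % (2*G) = k2 i0 % (2*G) ∧ k3 i % (2*G) = k3 i0 % (2*G)))
  rw [hst, Complex.ofReal_zero] at hl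
  rw [← hz']
  have hνc : (ν:ℂ)^t0 ≠ 0 := pow_ne_zero _ (by exact_mod_cast hν.ne')
  exact (mul_eq_zero.1 hl.symm).resolve_left hνc

lemma mod_eq_aux (a b L : ℤ) (ha : -L ≤ a ∧ a < L) (hb : -L ≤ b ∧ b < L) (h : a % (2*L) = b % (2*L)) : a = b := by
  have h1 : (2*L) ∣ a - b := Int.ModEq.dvd (Int.ModEq.symm h)
  have := Int.eq_zero_of_abs_lt_dvd h1 (by rw [abs_lt]; constructor <;> linarith)
  linarith

lemma descent (ω : ℝ) (hω : ω^3-ω^2-ω-1=0) (hω1 : 1.839 < ω) (hω2 : ω < 1.84)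
    {ι : Type*} (U0 : Finset ι) (q : ι → Polynomial ℂ) (k1 k2 k3 p : ι → ℤ) (n m Lh ν S S2 P e N : ℕ)
    (hν : 0 < ν) (hLh : Lh = 2^e) (hSS : S = 2*S2) (hP : P = Lh*S) (hS : 10240 ≤ S) (hLb : 1000 ≤ Lh)
    (hq : ∀ i (u : ℤ) (t : ℕ), ∃ c : ℤ, (ν:ℂ)^t * (Polynomial.hasseDeriv t (q i)).eval (u:ℂ) = c)
    (hk : ∀ i, (-(Lh:ℤ) ≤ k1 i ∧ k1 i < Lh) ∧ (-(Lh:ℤ) ≤ k2 i ∧ k2 i < Lh) ∧ (-(Lh:ℤ) ≤ k3 i ∧ k3 i < Lh))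
    (hM : ∀ z : ℂ, ‖z‖ ≤ 30*S → ∀ t0 t1 t2, t0+t1+t2 < 160*2^(e+1) →
      ∑ i ∈ U0, (ν:ℝ)^t0 * ‖(p i:ℂ) * ((Polynomial.hasseDeriv t0 (q i)).eval (((2*Lh:ℕ):ℂ)*z) * (((k1 i - n*k3 i:ℤ):ℂ)^t1 * ((k2 i + m*k3 i:ℤ):ℂ)^t2))‖ ≤ Real.exp (3*(2*P)))
    (hνp : ∀ t < 160*2^(e+1), (ν:ℝ)^t ≤ Real.exp (2*P))
    (hΛ : |n * Real.log ((1+√5)/2) - m * Real.log ω + Real.log ((-ω^2+4*ω-1)/√5)| ≤ Real.exp (-5000*(2*P)))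
    (hU : U0.Nonempty) (hp : ∀ i ∈ U0, p i ≠ 0)
    (hq0 : ∀ i, q i ≠ 0) (hN : ∀ i, (q i).natDegree < N) (hNS : N ≤ 2^(e+1)*S)
    (hinj : ∀ i j, k1 i = k1 j → k2 i = k2 j → k3 i = k3 j → (q i).natDegree = (q j).natDegree → i = j)
    (hvan : ∀ s : ℤ, Odd s → |s| < S → ∀ t0 t1 t2, t0+t1+t2 < 160*2^(e+1) → PH ω U0 q k1 k2 k3 p n m Lh t0 t1 t2 (s:ℂ) = 0) :
    False := by
  have key : ∀ J, J ≤ e+1 → ∃ U ⊆ U0, U.Nonempty ∧ (∀ i ∈ U, ∀ j ∈ U, k1 i % ((2^J:ℕ):ℤ) = k1 j % ((2^J:ℕ):ℤ) ∧ k2 i % ((2^J:ℕ):ℤ) = k2 j % ((2^J:ℕ):ℤ) ∧ k3 i % ((2^J:ℕ):ℤ) = k3 j % ((2^J:ℕ):ℤ)) ∧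
      (∀ s : ℤ, Odd s → |s| < ((2^J:ℕ):ℤ)*S → ∀ t0 t1 t2, t0+t1+t2 < 160*2^(e+1-J) → PH ω U q k1 k2 k3 p n m Lh t0 t1 t2 ((s:ℂ)/((2^J:ℕ):ℂ)) = 0) := by
    intro J
    induction J with
    | zero =>
      intro _
      refine ⟨U0, subset_rfl, hU, by simp [Int.emod_one], ?_⟩
      intro s hs hsb t0 t1 t2 ht
      have := hvan s hs (by simpa using hsb) t0 t1 t2 ht
      simpa using this
    | succ J ih =>
      intro hJ
      obtain ⟨U, hU0, hUn, hres, hv⟩ := ih (by omega)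
      have e1 : e+1-J = (e-J)+1 := by omega
      have e2 : 160*2^(e-J+1) ≤ 160*2^(e+1) := Nat.mul_le_mul_left _ (Nat.pow_le_pow_right (by norm_num) (by omega))
      have e3 : 4*(80*2^(e-J)) = 160*2^(e+1-J) := by rw [e1, pow_succ]; ring
      have e4 : 2*(80*2^(e-J)) ≤ 160*2^(e+1) := by rw [pow_succ] at e2; omega
      have e5 : e+1-(J+1) = e-J := by omega
      have e6 : 2^e = 2^J*2^(e-J) := by rw [← pow_add]; congr 1; omega
      obtain ⟨U', h1, h2, h3, h4⟩ := stage_step ω hω hω1 hω2 U q k1 k2 k3 p n m Lh ν S S2 P (2^J) (2^(e-J)) (80*2^(e-J)) hν (by positivity)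
        (by rw [hLh, e6]) hSS hP (by rw [hLh, e6]; ring) hS hLb hq
        (by
          intro i hi
          obtain ⟨⟨a1, a2⟩, ⟨a3, a4⟩, ⟨a5, a6⟩⟩ := hk i
          exact ⟨abs_le.2 ⟨a1, a2.le⟩, abs_le.2 ⟨a3, a4.le⟩, abs_le.2 ⟨a5, a6.le⟩⟩)
        (by
          intro z hz t0 t1 t2 ht
          refine le_trans ?_ (hM z hz t0 t1 t2 (by omega))
          exact Finset.sum_le_sum_of_subset_of_nonneg hU0 fun i _ _ => by positivity)
        (fun t ht => hνp t (by omega)) hΛ hUn hres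
        (by
          intro s hs hsb t0 t1 t2 ht
          exact hv s hs hsb t0 t1 t2 (by omega))
      have e7 : ((2^(J+1):ℕ):ℤ) = 2*((2^J:ℕ):ℤ) := by rw [pow_succ]; push_cast; ring
      have e8 : ((2^(J+1):ℕ):ℂ) = 2*((2^J:ℕ):ℂ) := by rw [pow_succ]; push_cast; ring
      refine ⟨U', h1.trans hU0, h2, ?_, ?_⟩
      · rw [e7]; exact h3
      · intro s hs hsb t0 t1 t2 ht
        rw [e8]
        exact h4 s hs (by rw [e7] at hsb; exact hsb) t0 t1 t2 (by rw [e5] at ht; omega)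
  obtain ⟨U, hU0, ⟨i0, hi0⟩, hres, hv⟩ := key (e+1) le_rfl
  have e7 : ((2^(e+1):ℕ):ℤ) = 2*(Lh:ℤ) := by rw [pow_succ, hLh]; push_cast; ring
  have e7' : ((2^(e+1):ℕ):ℂ) = ((2*Lh:ℕ):ℂ) := by rw [pow_succ, hLh]; push_cast; ring
  have hkk : ∀ i ∈ U, ∀ j ∈ U, k1 i = k1 j ∧ k2 i = k2 j ∧ k3 i = k3 j := by
    intro i hi j hj
    have := hres i hi j hj
    rw [e7] at this
    exact ⟨mod_eq_aux _ _ _ (hk i).1 (hk j).1 this.1, mod_eq_aux _ _ _ (hk i).2.1 (hk j).2.1 this.2.1, mod_eq_aux _ _ _ (hk i).2.2 (hk j).2.2 this.2.2⟩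
  have hL0 : ((2*Lh:ℕ):ℂ) ≠ 0 := by
    have : 2*Lh ≠ 0 := by omega
    exact_mod_cast this
  have hz : ∀ s : ℤ, Odd s → |s| < ((2^(e+1):ℕ):ℤ)*S → ∑ i ∈ U, (p i:ℂ) * (q i).eval (s:ℂ) = 0 := by
    intro s hs hsb
    have h1 := hv s hs hsb 0 0 0 (by positivity)
    unfold PH gf at h1
    rw [e7', mul_div_cancel₀ _ hL0] at h1
    simp only [Polynomial.hasseDeriv_zero, pow_zero, mul_one, LinearMap.id_apply] at h1
    set E := Complex.exp (((k1 i0 * Real.log ((1+√5)/2) + k2 i0 * Real.log ω + k3 i0 * Real.log ((-ω^2+4*ω-1)/√5) : ℝ) : ℂ) * ((s:ℂ)/((2*Lh:ℕ):ℂ))) with hE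
    have h2 : (∑ i ∈ U, (p i:ℂ) * (q i).eval (s:ℂ)) * E = 0 := by
      rw [← h1, Finset.sum_mul]
      refine Finset.sum_congr rfl fun i hi => ?_
      obtain ⟨a1, a2, a3⟩ := hkk i hi i0 hi0
      rw [a1, a2, a3, hE]; ring
    exact (mul_eq_zero.1 h2).resolve_right (Complex.exp_ne_zero _)
  obtain ⟨D, hD⟩ : ∃ D, D = 2^(e+1)*S := ⟨_, rfl⟩
  obtain ⟨D2, hD2⟩ : ∃ D2, D = 2*D2 := ⟨2^e*S, by rw [hD, pow_succ]; ring⟩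
  rw [← hD] at hNS
  have hDz : ((2^(e+1):ℕ):ℤ)*S = D := by rw [hD]; push_cast; rfl
  rw [hDz] at hz
  have finj : Function.Injective (fun i : ℕ => ((2*i+1-D:ℤ):ℂ)) := by
    intro i j h
    have : (2*i+1-D:ℤ) = 2*j+1-D := Int.cast_injective (α := ℂ) h
    omega
  refine poly_indep U ⟨i0, hi0⟩ q (fun i => (p i:ℂ)) (fun i hi => by exact_mod_cast hp i (hU0 hi)) (fun i _ => hq0 i)
    (fun i hi j hj h => hinj i j (hkk i hi j hj).1 (hkk i hi j hj).2.1 (hkk i hi j hj).2.2 h) N (fun i _ => hN i)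
    ((Finset.range D).map ⟨_, finj⟩) (by simpa using hNS) ?_
  intro z hz'
  obtain ⟨i, hi, rfl⟩ := Finset.mem_map.1 hz'
  have hi := Finset.mem_range.1 hi
  refine hz (2*i+1-D) ⟨i-D2, by rw [hD2]; push_cast; ring⟩ ?_
  rw [abs_lt]; constructor <;> omega

def tset (T : ℕ) : Finset (Σ _ : ℕ, Σ _ : ℕ, ℕ) :=
  (Finset.range T).sigma fun a => (Finset.range (T-a)).sigma fun b => Finset.range (T-a-b)

lemma mem_tset (T a b c : ℕ) : (⟨a, b, c⟩ : Σ _ : ℕ, Σ _ : ℕ, ℕ) ∈ tset T ↔ a+b+c < T := by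
  simp only [tset, Finset.mem_sigma, Finset.mem_range]
  omega

lemma card_tset (T : ℕ) : 6 * (tset T).card = T*(T+1)*(T+2) := by
  have h1 : ∀ T, 2 * ∑ b ∈ Finset.range T, (T-b) = T*(T+1) := by
    intro T
    induction T with
    | zero => simp
    | succ T ih =>
      rw [Finset.sum_range_succ']
      simp only [Nat.add_sub_add_right, Nat.sub_zero]
      rw [mul_add, ih]; ring
  have h2 : ∀ T, 6 * ∑ a ∈ Finset.range T, ∑ b ∈ Finset.range (T-a), (T-a-b) = T*(T+1)*(T+2) := by
    intro T
    induction T with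
    | zero => simp
    | succ T ih =>
      rw [Finset.sum_range_succ']
      simp only [Nat.add_sub_add_right, Nat.sub_zero]
      rw [mul_add, ih]
      have := h1 (T+1)
      linarith
  rw [← h2 T, tset, Finset.card_sigma]
  simp only [Finset.card_sigma, Finset.card_range]

lemma zexp (a : ℝ) (ha : 0 < a) (k : ℤ) : a^k = Real.exp (k * Real.log a) := by
  rw [mul_comm, ← Real.rpow_intCast, Real.rpow_def_of_pos ha]

lemma num3 (k : ℕ) : (3:ℝ)^k ≤ Real.exp (1.0987*k) ∧ Real.exp (1.09*k) ≤ 3^k := by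
  have h1 : Real.exp (1.0987*k) = (Real.exp 1.0987)^k := by rw [← Real.exp_nat_mul]; ring_nf
  have h2 : Real.exp (1.09*k) = (Real.exp 1.09)^k := by rw [← Real.exp_nat_mul]; ring_nf
  rw [h1, h2]
  have l3 : Real.log 3 < 1.0987 ∧ 1.09 < Real.log 3 := by
    have e3 : ∀ r : ℕ, Real.log 3 * r = Real.log (3^r) := by intro r; rw [Real.log_pow]; ring
    have ha := Real.log_two_gt_d9
    have hb := Real.log_two_lt_d9
    have h20 : (3:ℝ)^12 < 2^19 * (1.01364327) := by norm_num
    have h21 : (2:ℝ)^19 * 1.0136 < 3^12 := by norm_num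
    have u := Real.log_lt_log (by positivity) h20
    have v := Real.log_lt_log (by positivity) h21
    rw [Real.log_mul (by positivity) (by positivity), Real.log_pow, Real.log_pow] at u v
    have u2 := Real.log_le_sub_one_of_pos (show (0:ℝ) < 1.01364327 by norm_num)
    have v2 := Real.log_nonneg (show (1:ℝ) ≤ 1.0136 by norm_num)
    push_cast at u v
    constructor <;> norm_num at * <;> linarith
  constructor
  · gcongr
    rw [← Real.log_le_iff_le_exp (by norm_num)]; exact l3.1.le
  · gcongr
    exact (Real.le_log_iff_exp_le (by norm_num)).1 l3.2.le

lemma num_siegel (Q x Y N : ℝ) (hQ : 1000 ≤ Q) (hY : Real.exp (1.09*Q) ≤ Y) (hN : N ≤ Real.exp (0.1*Q))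
    (h : |x| * Y^35 ≤ N * Real.exp (2.45*Q) * Y) : |x| * Real.exp (0.96*Q) * (Real.exp (3*Q) * Real.exp (2.03*Q))^5 < 1 := by
  have hY0 : 0 < Y := (Real.exp_pos _).trans_le hY
  have h1 : |x| * Y^34 ≤ N * Real.exp (2.45*Q) := by
    have : |x| * Y^34 * Y ≤ N * Real.exp (2.45*Q) * Y := by calc _ = |x| * Y^35 := by ring
          _ ≤ _ := h
    exact le_of_mul_le_mul_right this hY0
  have h2 : |x| * (Real.exp (1.09*Q))^34 ≤ Real.exp (0.1*Q) * Real.exp (2.45*Q) := by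
    calc _ ≤ |x| * Y^34 := by gcongr
      _ ≤ N * Real.exp (2.45*Q) := h1
      _ ≤ _ := by gcongr
  rw [← Real.exp_nat_mul, ← Real.exp_add] at h2
  have h3 : |x| ≤ Real.exp (-34*Q) := by
    have : |x| ≤ Real.exp (0.1*Q + 2.45*Q) * Real.exp (-(((34:ℕ):ℝ)*(1.09*Q))) := by
      rw [Real.exp_neg, ← div_eq_mul_inv, le_div_iff₀ (Real.exp_pos _)]; exact h2
    refine this.trans ?_
    rw [← Real.exp_add]; apply Real.exp_le_exp.2; push_cast; linarith
  calc _ ≤ Real.exp (-34*Q) * Real.exp (0.96*Q) * (Real.exp (3*Q) * Real.exp (2.03*Q))^5 := by gcongr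
    _ = Real.exp (-7.89*Q) := by
      simp only [← Real.exp_add, ← Real.exp_nat_mul]; congr 1; push_cast; ring
    _ < 1 := by rw [Real.exp_lt_one_iff]; linarith

set_option maxHeartbeats 1000000 in
lemma stage0 (ω : ℝ) (hω : ω^3-ω^2-ω-1=0) (hω1 : 1.839 < ω) (hω2 : ω < 1.84)
    {ι : Type*} [Fintype ι] [DecidableEq ι] (q : ι → Polynomial ℂ) (k1 k2 k3 : ι → ℤ) (n m Lh ν S S2 P T : ℕ)
    (hν : 0 < ν) (hSS : S = 2*S2) (hP : P = Lh*S) (hP1 : 1000 ≤ P)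
    (hq : ∀ i (u : ℤ) (t : ℕ), ∃ c : ℤ, (ν:ℂ)^t * (Polynomial.hasseDeriv t (q i)).eval (u:ℂ) = c)
    (hk : ∀ i, |k1 i| ≤ Lh ∧ |k2 i| ≤ Lh ∧ |k3 i| ≤ Lh)
    (hD : ∀ i, ∀ z : ℂ, ‖z‖ ≤ 30*S → ∀ t0 t1 t2, t0+t1+t2 < T →
      (ν:ℝ)^t0 * ‖(Polynomial.hasseDeriv t0 (q i)).eval (((2*Lh:ℕ):ℂ)*z) * (((k1 i - n*k3 i:ℤ):ℂ)^t1 * ((k2 i + m*k3 i:ℤ):ℂ)^t2)‖ ≤ Real.exp (1.75*(2*P)))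
    (hcard : (Fintype.card ι : ℝ) ≤ Real.exp (0.1*(2*P)))
    (hcount : 35*(S*(tset T).card) < Fintype.card ι) :
    ∃ p : ι → ℤ, p ≠ 0 ∧ 
      (∀ z : ℂ, ‖z‖ ≤ 30*S → ∀ t0 t1 t2, t0+t1+t2 < T →
      ∑ i, (ν:ℝ)^t0 * ‖(p i:ℂ) * ((Polynomial.hasseDeriv t0 (q i)).eval (((2*Lh:ℕ):ℂ)*z) * (((k1 i - n*k3 i:ℤ):ℂ)^t1 * ((k2 i + m*k3 i:ℤ):ℂ)^t2))‖ ≤ Real.exp (3*(2*P))) ∧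
      (∀ s : ℤ, Odd s → |s| < S → ∀ t0 t1 t2, t0+t1+t2 < T → PH ω Finset.univ q k1 k2 k3 p n m Lh t0 t1 t2 (s:ℂ) = 0) := by
  obtain ⟨b1, b2, b3⟩ := logs_bd ω hω1 hω2
  have hPr : (P:ℝ) = Lh*S := by exact_mod_cast hP
  have hP1r : (1000:ℝ) ≤ P := by exact_mod_cast hP1
  choose c hc using hq
  -- forms
  let w : ι → ℝ := fun i => k1 i * Real.log ((1+√5)/2) + k2 i * Real.log ω + k3 i * Real.log ((-ω^2+4*ω-1)/√5)
  let cf : ℤ → ℕ → ℕ → ℕ → ι → ℤ := fun s t0 t1 t2 i => c i ((2*Lh:ℕ)*s) t0 * ((k1 i - n*k3 i)^t1 * (k2 i + m*k3 i)^t2)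
  have hcf : ∀ (s : ℤ), |s| ≤ S → ∀ t0 t1 t2, t0+t1+t2 < T → ∀ i, |(cf s t0 t1 t2 i:ℝ)| ≤ Real.exp (1.75*(2*P)) := by
    intro s hs t0 t1 t2 ht i
    have hs' : ‖(s:ℂ)‖ ≤ 30*S := by
      rw [Complex.norm_intCast]
      have : |(s:ℝ)| ≤ S := by exact_mod_cast hs
      linarith [abs_nonneg (s:ℝ)]
    refine le_trans (le_of_eq ?_) (hD i s hs' t0 t1 t2 ht)
    rw [← Complex.norm_natCast, ← norm_pow, ← norm_mul, ← Complex.norm_intCast]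
    congr 1
    have := hc i ((2*Lh:ℕ)*s) t0
    simp only [cf]
    push_cast at this ⊢
    rw [← this]; ring
  have hw : ∀ s : ℤ, |s| ≤ S → ∀ i, Real.exp (w i * s) ≤ Real.exp (0.7*(2*P)) := by
    intro s hs i
    apply Real.exp_le_exp.2
    obtain ⟨c1, c2, c3⟩ := hk i
    have c1 : |(k1 i:ℝ)| ≤ Lh := by exact_mod_cast c1
    have c2 : |(k2 i:ℝ)| ≤ Lh := by exact_mod_cast c2
    have c3 : |(k3 i:ℝ)| ≤ Lh := by exact_mod_cast c3
    have hL0 : (0:ℝ) ≤ Lh := by positivity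
    have f1 : |(k1 i:ℝ) * Real.log ((1+√5)/2)| ≤ Lh*0.485 := by rw [abs_mul, abs_of_nonneg b1.1]; exact mul_le_mul c1 b1.2 b1.1 hL0
    have f2 : |(k2 i:ℝ) * Real.log ω| ≤ Lh*0.62 := by rw [abs_mul, abs_of_nonneg b2.1]; exact mul_le_mul c2 b2.2 b2.1 hL0
    have f3 : |(k3 i:ℝ) * Real.log ((-ω^2+4*ω-1)/√5)| ≤ Lh*0.29 := by rw [abs_mul, abs_of_nonneg b3.1]; exact mul_le_mul c3 b3.2 b3.1 hL0
    have f4 : |w i| ≤ 1.4*Lh := by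
      rw [abs_le] at f1 f2 f3 ⊢
      simp only [w]
      constructor <;> linarith
    have hs' : |(s:ℝ)| ≤ S := by exact_mod_cast hs
    calc w i * s ≤ |w i * s| := le_abs_self _
      _ = |w i| * |(s:ℝ)| := abs_mul _ _
      _ ≤ (1.4*Lh) * S := mul_le_mul f4 hs' (abs_nonneg _) (by positivity)
      _ = _ := by rw [hPr]; ring
  obtain ⟨p, hp0, hpY, hps⟩ := siegel_real (κ := Fin S × {x // x ∈ tset T}) (ι := ι)
    (fun κ i => (cf (2*(κ.1:ℕ)+1-S) κ.2.1.1 κ.2.1.2.1 κ.2.1.2.2 i : ℝ) * Real.exp (w i * ((2*(κ.1:ℕ)+1-S : ℤ):ℝ)))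
    (Real.exp (2.45*(2*P))) (Real.exp_pos _)
    (by
      rintro ⟨j, ⟨⟨t0, t1, t2⟩, ht⟩⟩ i
      have ht' := (mem_tset T t0 t1 t2).1 ht
      have hj := j.2
      have hs : |(2*((j:ℕ):ℤ)+1-S : ℤ)| ≤ S := by rw [abs_le]; constructor <;> omega
      rw [abs_mul, abs_of_pos (Real.exp_pos (w i * _))]
      refine (mul_le_mul (hcf _ hs t0 t1 t2 ht' i) (hw _ hs i) (Real.exp_pos _).le (Real.exp_pos _).le).trans ?_
      rw [← Real.exp_add]; apply Real.exp_le_exp.2; linarith)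
    (3^(2*P)) 35 (by
      calc 2 ≤ 3^1 := by norm_num
        _ ≤ _ := Nat.pow_le_pow_right (by norm_num) (by omega))
    (by rw [Fintype.card_prod, Fintype.card_fin, Fintype.card_coe]; exact hcount)
  have n3 := num3 (2*P)
  push_cast at n3
  have hpY' : ∀ i, |(p i:ℝ)| ≤ Real.exp (1.0987*(2*P)) := by
    intro i
    have h1 : |(p i:ℝ)| ≤ ((3^(2*P):ℕ):ℝ) := by exact_mod_cast hpY i
    refine h1.trans ?_
    push_cast; exact n3.1
  have hMM : ∀ (B : ι → ℝ), (∀ i, 0 ≤ B i ∧ B i ≤ Real.exp (1.75*(2*P))) → ∑ i, |(p i:ℝ)| * B i ≤ Real.exp (3*(2*P)) := by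
    intro B hB
    calc ∑ i, |(p i:ℝ)| * B i ≤ ∑ i : ι, Real.exp (1.0987*(2*P)) * Real.exp (1.75*(2*P)) :=
          Finset.sum_le_sum fun i _ => mul_le_mul (hpY' i) (hB i).2 (hB i).1 (Real.exp_pos _).le
      _ = Fintype.card ι * (Real.exp (1.0987*(2*P)) * Real.exp (1.75*(2*P))) := by rw [Finset.sum_const, nsmul_eq_mul]; rfl
      _ ≤ Real.exp (0.1*(2*P)) * (Real.exp (1.0987*(2*P)) * Real.exp (1.75*(2*P))) := by gcongr
      _ ≤ _ := by rw [← Real.exp_add, ← Real.exp_add]; apply Real.exp_le_exp.2; linarith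
  refine ⟨p, hp0, ?_, ?_⟩
  · intro z hz t0 t1 t2 ht
    refine le_trans (le_of_eq ?_) (hMM _ fun i => ⟨?_, hD i z hz t0 t1 t2 ht⟩)
    · refine Finset.sum_congr rfl fun i _ => ?_
      rw [norm_mul (p i:ℂ), Complex.norm_intCast]; ring
    · positivity
  · intro s hs hsb t0 t1 t2 ht
    obtain ⟨j, hj, hjs⟩ : ∃ j : ℕ, j < S ∧ (2*(j:ℤ)+1-S) = s := by
      obtain ⟨a, rfl⟩ := hs
      rw [abs_lt] at hsb
      refine ⟨(a+S2).toNat, ?_, ?_⟩ <;> omega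
    have h1 := hps (⟨j, hj⟩, ⟨⟨t0, t1, t2⟩, (mem_tset T t0 t1 t2).2 ht⟩)
    simp only at h1
    rw [hjs] at h1
    set x := ∑ i, (p i:ℝ) * ((cf s t0 t1 t2 i:ℝ) * Real.exp (w i * s)) with hx
    push_cast at h1
    have h2 := num_siegel (2*P) x (3^(2*P)) _ (by linarith) n3.2 hcard h1
    have hx2 : x = ∑ i, ((p i * cf s t0 t1 t2 i : ℤ):ℝ) * (((1+√5)/2)^(k1 i * s) * ω^(k2 i * s) * ((-ω^2+4*ω-1)/√5)^(k3 i * s)) := by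
      rw [hx]
      refine Finset.sum_congr rfl fun i _ => ?_
      have a3b := a3_bd ω hω1 hω2
      rw [zexp _ (by positivity), zexp ω (by linarith), zexp _ (by linarith), ← Real.exp_add, ← Real.exp_add]
      push_cast
      rw [mul_assoc]
      congr 3
      simp only [w]; ring
    have hks : ∀ k : ℤ, |k| ≤ Lh → |k*s| ≤ P := by
      intro k hk
      rw [abs_mul, hP]; push_cast
      exact mul_le_mul hk hsb.le (abs_nonneg _) (by positivity)
    have hx0 : x = 0 := by
      by_contra hne
      have h3 := liouville_a ω hω hω1 hω2 P Finset.univ (fun i => p i * cf s t0 t1 t2 i) (fun i => k1 i * s) (fun i => k2 i * s) (fun i => k3 i * s)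
        (Real.exp (3*(2*P))) (Real.one_le_exp (by positivity))
        (by
          refine le_trans (le_of_eq ?_) (hMM (fun i => |(cf s t0 t1 t2 i:ℝ)|) fun i => ⟨abs_nonneg _, hcf s hsb.le t0 t1 t2 ht i⟩)
          refine Finset.sum_congr rfl fun i _ => ?_
          push_cast; rw [abs_mul])
        (fun i _ => hks _ (hk i).1) (fun i _ => hks _ (hk i).2.1) (fun i _ => hks _ (hk i).2.2) x hx2 hne
      have g4 : 1.92*(P:ℝ) = 0.96*(2*P) := by ring
      have g5 : 4.06*(P:ℝ) = 2.03*(2*P) := by ring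
      rw [g4, g5] at h3
      linarith
    have hl := PH_real ω Finset.univ q k1 k2 k3 p n m Lh ν t0 t1 t2 ((2*Lh:ℕ)*s) s (by push_cast; ring) (fun i => c i ((2*Lh:ℕ)*s) t0) (fun i => hc i _ t0)
    have hl2 : (∑ i, ((p i * c i ((2*Lh:ℕ)*s) t0 * (k1 i - n*k3 i)^t1 * (k2 i + m*k3 i)^t2 : ℤ):ℝ) * Real.exp ((k1 i * Real.log ((1+√5)/2) + k2 i * Real.log ω + k3 i * Real.log ((-ω^2+4*ω-1)/√5)) * s)) = x := by
      rw [hx]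
      refine Finset.sum_congr rfl fun i _ => ?_
      simp only [w, cf]
      push_cast; ring
    rw [hl2, hx0, Complex.ofReal_zero, Complex.ofReal_intCast] at hl
    have hνc : (ν:ℂ)^t0 ≠ 0 := pow_ne_zero _ (by exact_mod_cast hν.ne')
    exact (mul_eq_zero.1 hl.symm).resolve_left hνc

lemma num_count (h0 c T L B : ℕ) (hh : 1 ≤ h0) (hT : T = 160*2^(29+1)) (hL : L = 2*2^29) (hB : B = 24500000000) (hc : 6*c = T*(T+1)*(T+2)) :
    35*((1024*h0)*c) < B*(h0*(L*(L*L))) := by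
  subst hT hL hB
  norm_num at hc ⊢
  have h1 : 35*(1024*c) < 24500000000*(1073741824*(1073741824*1073741824)) := by omega
  calc 35*(1024*h0*c) = h0*(35*(1024*c)) := by ring
    _ < h0*(24500000000*(1073741824*(1073741824*1073741824))) := Nat.mul_lt_mul_of_pos_left h1 (by omega)
    _ = _ := by ring

lemma num_K : (2^30*30720+2:ℝ) ≤ Real.exp 31.2 := by
  have : Real.exp 31.2 = (Real.exp 1)^31 * Real.exp 0.2 := by rw [← Real.exp_nat_mul, ← Real.exp_add]; norm_num
  rw [this]
  have h2 := Real.add_one_le_exp (0.2:ℝ)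
  calc (2^30*30720+2:ℝ) ≤ 2.718^31 * 1.2 := by norm_num
    _ ≤ _ := by
      gcongr
      · have := Real.exp_one_gt_d9; linarith
      · linarith

lemma num_e22 : (2:ℝ)^30 ≤ Real.exp 22 := by
  have : Real.exp 22 = (Real.exp 1)^22 := by rw [← Real.exp_nat_mul]; norm_num
  rw [this]
  calc (2:ℝ)^30 ≤ 2.718^22 := by norm_num
    _ ≤ _ := by
      gcongr
      have := Real.exp_one_gt_d9; linarith

lemma num_card (Q : ℝ) (hQ : 1000000000 ≤ Q) : Q^5 ≤ Real.exp (0.1*Q) := by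
  have h := Real.pow_div_factorial_le_exp (0.1*Q) (by linarith) 6
  refine le_trans ?_ h
  have e : (0.1*Q)^6/((Nat.factorial 6:ℕ):ℝ) = Q^5 * (Q/720000000) := by
    norm_num [Nat.factorial]; ring
  rw [e]
  have : 1 ≤ Q/720000000 := by rw [le_div_iff₀ (by norm_num)]; linarith
  exact le_mul_of_one_le_right (by positivity) this

lemma lcm_bd (h : ℕ) : (Nat.lcmUpto h:ℝ) ≤ Real.exp (6.2*h) := by
  have h1 := Chebyshev.psi_eq_log_lcmUpto h
  have h2 := Chebyshev.psi_le_const_mul_self (x := (h:ℝ)) (by positivity)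
  have h4 : Real.log 4 ≤ 1.4 := by
    have : Real.log 4 = 2*Real.log 2 := by
      rw [show (4:ℝ) = 2^2 by norm_num, Real.log_pow]; push_cast; ring
    rw [this]; have := Real.log_two_lt_d9; linarith
  rw [← Real.log_le_iff_le_exp (by exact_mod_cast Nat.lcmUpto_pos h), ← h1]
  refine h2.trans ?_
  gcongr; linarith

lemma lcmUpto_dvd_aux (h : ℕ) : ∀ k < h, (k+1) ∣ Nat.lcmUpto h := by
  intro k hk
  exact Finset.dvd_lcm (f := id) (Finset.mem_Icc.2 ⟨by omega, by omega⟩)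

lemma pow3_bd (R a b c : ℝ) (hR : 1 ≤ R) (ha : 0 ≤ a) (hb : 0 ≤ b) (hc : 0 ≤ c) (haR : a ≤ R) (hbR : b ≤ R) (hcR : c ≤ R) (t0 t1 t2 T : ℕ) (h : t0+t1+t2 < T) :
    a^t0 * (b^t1 * c^t2) ≤ R^T := by
  calc a^t0 * (b^t1 * c^t2) ≤ R^t0 * (R^t1 * R^t2) := by gcongr
    _ = R^(t0+t1+t2) := by rw [pow_add, pow_add]; ring
    _ ≤ _ := pow_le_pow_right₀ hR h.le

set_option maxHeartbeats 1000000 in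
lemma main_thm (ω : ℝ) (hω : ω^3-ω^2-ω-1=0) (hω1 : 1.839 < ω) (hω2 : ω < 1.84)
    (n m h0 P : ℕ) (hh0 : 10 ≤ h0) (hn1 : 1 ≤ n) (hmn : m ≤ n) (hn : (n:ℝ) ≤ Real.exp (4*h0)) (hP : P = 2^29*(1024*h0))
    (hΛ : |n * Real.log ((1+√5)/2) - m * Real.log ω + Real.log ((-ω^2+4*ω-1)/√5)| ≤ Real.exp (-5000*(2*P))) : False := by
  obtain ⟨Lh, hLh⟩ : ∃ Lh : ℕ, Lh = 2^29 := ⟨_, rfl⟩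
  obtain ⟨S, hS⟩ : ∃ S : ℕ, S = 1024*h0 := ⟨_, rfl⟩
  obtain ⟨B, hB⟩ : ∃ B : ℕ, B = 24500000000 := ⟨_, rfl⟩
  obtain ⟨T, hT⟩ : ∃ T : ℕ, T = 160*2^(29+1) := ⟨_, rfl⟩
  obtain ⟨L, hL⟩ : ∃ L : ℕ, L = 2*Lh := ⟨_, rfl⟩
  obtain ⟨ν, hν⟩ : ∃ ν : ℕ, ν = Nat.lcmUpto h0 := ⟨_, rfl⟩
  have hνdvd : ∀ k < h0, (k+1) ∣ ν := by rw [hν]; exact lcmUpto_dvd_aux h0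
  have hνb : (ν:ℝ) ≤ Real.exp (6.2*h0) := by rw [hν]; exact lcm_bd h0
  have hν0 : 0 < ν := by rw [hν]; exact Nat.lcmUpto_pos h0
  have hPLS : P = Lh*S := by rw [hP, hLh, hS]
  have hh0r : (10:ℝ) ≤ h0 := by exact_mod_cast hh0
  have hPr : (P:ℝ) = 2^29*(1024*h0) := by rw [hP]; push_cast; ring
  have hLhr : (Lh:ℝ) = 2^29 := by rw [hLh]; push_cast; ring
  have hSr : (S:ℝ) = 1024*h0 := by rw [hS]; push_cast; ring
  have hBr : (B:ℝ) = 24500000000 := by rw [hB]; push_cast; ring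
  have hTr : (T:ℝ) = 160*2^30 := by rw [hT]; push_cast; ring
  have hLr : (L:ℝ) = 2^30 := by rw [hL]; push_cast; rw [hLhr]; norm_num
  let ι := Fin B × Fin h0 × Fin L × Fin L × Fin L
  let q : ι → Polynomial ℂ := fun i => binp i.2.1 * binp h0 ^ (i.1:ℕ)
  let k1 : ι → ℤ := fun i => (i.2.2.1:ℕ) - (Lh:ℤ)
  let k2 : ι → ℤ := fun i => (i.2.2.2.1:ℕ) - (Lh:ℤ)
  let k3 : ι → ℤ := fun i => (i.2.2.2.2:ℕ) - (Lh:ℤ)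
  have hfb : ∀ j : Fin L, -(Lh:ℤ) ≤ ((j:ℕ):ℤ) - (Lh:ℤ) ∧ ((j:ℕ):ℤ) - (Lh:ℤ) < Lh := by
    intro j; have := j.2; omega
  have hk : ∀ i, (-(Lh:ℤ) ≤ k1 i ∧ k1 i < Lh) ∧ (-(Lh:ℤ) ≤ k2 i ∧ k2 i < Lh) ∧ (-(Lh:ℤ) ≤ k3 i ∧ k3 i < Lh) :=
    fun i => ⟨hfb _, hfb _, hfb _⟩
  have hk' : ∀ i, |k1 i| ≤ Lh ∧ |k2 i| ≤ Lh ∧ |k3 i| ≤ Lh := by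
    intro i
    obtain ⟨⟨a1, a2⟩, ⟨a3, a4⟩, ⟨a5, a6⟩⟩ := hk i
    exact ⟨abs_le.2 ⟨a1, a2.le⟩, abs_le.2 ⟨a3, a4.le⟩, abs_le.2 ⟨a5, a6.le⟩⟩
  have hq : ∀ i (u : ℤ) (t : ℕ), ∃ c : ℤ, (ν:ℂ)^t * (Polynomial.hasseDeriv t (q i)).eval (u:ℂ) = c :=
    fun i u t => hasse_int hνdvd _ _ (i.2.1.2.le) u t
  have hcardι : Fintype.card ι = B*(h0*(L*(L*L))) := by
    simp only [ι, Fintype.card_prod, Fintype.card_fin]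
  -- R bound
  have hR1 : (1:ℝ) ≤ Real.exp (6.2*h0) := Real.one_le_exp (by positivity)
  have hxy : ∀ (N : ℕ) (a b : ℤ), N ≤ n → |a| ≤ Lh → |b| ≤ Lh → ∀ σ : ℤ, |σ| = 1 → ‖((a + σ * (N*b) : ℤ):ℂ)‖ ≤ Real.exp (6.2*h0) := by
    intro N a b hN ha hb σ hσ
    rw [Complex.norm_intCast]
    have h1 : |a + σ*(N*b)| ≤ Lh + n*Lh := by
      refine (abs_add_le _ _).trans ?_
      rw [abs_mul, hσ, one_mul, abs_mul, Nat.abs_cast]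
      have : (N:ℤ) ≤ n := by exact_mod_cast hN
      gcongr
    have h2 : |((a + σ*(N*b):ℤ):ℝ)| ≤ Lh + n*Lh := by exact_mod_cast h1
    refine h2.trans ?_
    have hn1r : (1:ℝ) ≤ n := by exact_mod_cast hn1
    calc (Lh:ℝ) + n*Lh ≤ n * 2^30 := by rw [hLhr]; linarith
      _ ≤ Real.exp (4*h0) * Real.exp 22 := mul_le_mul hn num_e22 (by positivity) (Real.exp_pos _).le
      _ ≤ _ := by rw [← Real.exp_add]; apply Real.exp_le_exp.2; linarith
  have hRT : (Real.exp (6.2*h0))^T ≤ Real.exp (0.97*(2*P)) := by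
    rw [← Real.exp_nat_mul]; apply Real.exp_le_exp.2
    rw [hTr, hPr]; linarith
  have hD : ∀ i, ∀ z : ℂ, ‖z‖ ≤ 30*S → ∀ t0 t1 t2, t0+t1+t2 < T →
      (ν:ℝ)^t0 * ‖(Polynomial.hasseDeriv t0 (q i)).eval (((2*Lh:ℕ):ℂ)*z) * (((k1 i - n*k3 i:ℤ):ℂ)^t1 * ((k2 i + m*k3 i:ℤ):ℂ)^t2)‖ ≤ Real.exp (1.75*(2*P)) := by
    intro i z hz t0 t1 t2 ht
    have d1 := hasse_bd i.2.1 i.1 h0 B i.2.1.2.le i.1.2 (((2*Lh:ℕ):ℂ)*z) (2^30*30720+2) (by norm_num) (by omega)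
      (by
        rw [norm_mul, Complex.norm_natCast, ← hL, hLr]
        rw [hSr] at hz
        nlinarith) t0
    have d2 : (Real.exp 1 * (2^30*30720+2:ℝ))^(h0*B) ≤ Real.exp (0.75*(2*P)) := by
      calc (Real.exp 1 * (2^30*30720+2:ℝ))^(h0*B) ≤ (Real.exp 1 * Real.exp 31.2)^(h0*B) := by gcongr; exact num_K
        _ = Real.exp (((h0*B:ℕ):ℝ)*(1+31.2)) := by rw [← Real.exp_add, ← Real.exp_nat_mul]
        _ ≤ _ := by
          apply Real.exp_le_exp.2
          push_cast; rw [hBr, hPr]; linarith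
    have x1 := hxy n (k1 i) (k3 i) le_rfl (hk' i).1 (hk' i).2.2 (-1) (by simp)
    have y1 := hxy m (k2 i) (k3 i) hmn (hk' i).2.1 (hk' i).2.2 1 (by simp)
    rw [show k1 i + -1*(n*k3 i) = k1 i - n*k3 i by ring] at x1
    rw [one_mul] at y1
    have d3 := pow3_bd _ _ _ _ hR1 (by positivity) (norm_nonneg _) (norm_nonneg _) hνb x1 y1 t0 t1 t2 T ht
    rw [norm_mul, norm_mul, norm_pow, norm_pow]
    calc _ = ‖(Polynomial.hasseDeriv t0 (q i)).eval (((2*Lh:ℕ):ℂ)*z)‖ * ((ν:ℝ)^t0 * (‖((k1 i - n*k3 i:ℤ):ℂ)‖^t1 * ‖((k2 i + m*k3 i:ℤ):ℂ)‖^t2)) := by ring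
      _ ≤ Real.exp (0.75*(2*P)) * Real.exp (0.97*(2*P)) :=
        mul_le_mul (d1.trans d2) (d3.trans hRT) (by positivity) (Real.exp_pos _).le
      _ ≤ _ := by
        rw [← Real.exp_add]; apply Real.exp_le_exp.2
        have : (0:ℝ) ≤ P := by positivity
        linarith
  have hQb : (1000000000:ℝ) ≤ 2*P := by rw [hPr]; linarith
  have hcard : (Fintype.card ι : ℝ) ≤ Real.exp (0.1*(2*P)) := by
    refine le_trans ?_ (num_card (2*P) hQb)
    rw [hcardι]; push_cast
    have c1 : (B:ℝ) ≤ 2*P := by rw [hBr, hPr]; linarith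
    have c2 : (h0:ℝ) ≤ 2*P := by rw [hPr]; linarith
    have c3 : (L:ℝ) ≤ 2*P := by rw [hLr, hPr]; linarith
    calc (B:ℝ)*(h0*(L*(L*L))) ≤ (2*P)*((2*P)*((2*P)*((2*P)*(2*P)))) := by gcongr
      _ = _ := by ring
  have hSS : S = 2*(512*h0) := by rw [hS]; ring
  obtain ⟨p, hp0, hM, hvan⟩ := stage0 ω hω hω1 hω2 q k1 k2 k3 n m Lh ν S (512*h0) P T hν0 hSS hPLS
    (by rw [hP]; omega) hq hk' hD hcard
    (by rw [hcardι, hS]; exact num_count h0 _ T L B (by omega) hT (by rw [hL, hLh]) hB (card_tset T))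
  have hνp : ∀ t < 160*2^(29+1), (ν:ℝ)^t ≤ Real.exp (2*P) := by
    intro t ht
    calc (ν:ℝ)^t ≤ (Real.exp (6.2*h0))^t := by gcongr
      _ ≤ (Real.exp (6.2*h0))^T := pow_le_pow_right₀ hR1 (by rw [hT]; exact ht.le)
      _ ≤ _ := hRT.trans (Real.exp_le_exp.2 (by linarith))
  let U0 : Finset ι := Finset.univ.filter (fun i => p i ≠ 0)
  rw [hT] at hM hvan
  refine descent ω hω hω1 hω2 U0 q k1 k2 k3 p n m Lh ν S (512*h0) P 29 (h0*B) hν0 hLh hSS hPLS (by omega) (by rw [hLh]; norm_num) hq hk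
    ?_ hνp hΛ ?_ ?_ ?_ ?_ ?_ ?_ ?_
  · intro z hz t0 t1 t2 ht
    refine le_trans ?_ (hM z hz t0 t1 t2 ht)
    exact Finset.sum_le_sum_of_subset_of_nonneg (Finset.filter_subset _ _) fun i _ _ => by positivity
  · obtain ⟨i, hi⟩ := Function.ne_iff.1 hp0
    exact ⟨i, Finset.mem_filter.2 ⟨Finset.mem_univ _, hi⟩⟩
  · intro i hi; exact (Finset.mem_filter.1 hi).2
  · intro i; exact (delta_deg _ _ _).1
  · intro i
    rw [(delta_deg _ _ _).2]
    have a1 := i.1.2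
    have a2 := i.2.1.2
    calc (i.2.1:ℕ) + h0*(i.1:ℕ) < h0 + h0*(i.1:ℕ) := by omega
      _ = h0*((i.1:ℕ)+1) := by ring
      _ ≤ h0*B := Nat.mul_le_mul_left _ a1
  · rw [hB, hS]; omega
  · rintro ⟨b, a, x1, x2, x3⟩ ⟨b', a', y1, y2, y3⟩ e1 e2 e3 e4
    rw [(delta_deg _ _ _).2, (delta_deg _ _ _).2] at e4
    simp only [k1, k2, k3] at e1 e2 e3 e4
    have g1 : x1 = y1 := Fin.ext (by omega)
    have g2 : x2 = y2 := Fin.ext (by omega)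
    have g3 : x3 = y3 := Fin.ext (by omega)
    have m1 := congrArg (· % h0) e4
    simp only [Nat.add_mul_mod_self_left, Nat.mod_eq_of_lt a.2, Nat.mod_eq_of_lt a'.2] at m1
    have m2 : h0*(b:ℕ) = h0*(b':ℕ) := by omega
    have g4 : a = a' := Fin.ext m1
    have g5 : b = b' := Fin.ext (Nat.eq_of_mul_eq_mul_left (by omega) m2)
    rw [g1, g2, g3, g4, g5]
  · intro s hs hsb t0 t1 t2 ht
    rw [← hvan s hs hsb t0 t1 t2 ht]
    unfold PH gf
    apply Finset.sum_subset (Finset.filter_subset _ _)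
    intro i _ hi
    have : p i = 0 := by
      by_contra hne
      exact hi (Finset.mem_filter.2 ⟨Finset.mem_univ _, hne⟩)
    simp [this]

lemma root_bds (w : ℝ) (h : w^3-w^2-w-1=0) : 1.839 < w ∧ w < 1.84 := by
  have h1 : 1 < w := by
    by_contra hc
    push Not at hc
    have : (w+1)*(w-1)^2 = 2*1 + (w^3-w^2-w-1) := by ring
    nlinarith [sq_nonneg (w-1), sq_nonneg (w+1), mul_nonneg (sub_nonneg.2 hc) (sq_nonneg (w+1)), sq_nonneg w, mul_nonneg (sub_nonneg.2 hc) (sq_nonneg w)]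
  constructor
  · by_contra hc
    push Not at hc
    nlinarith [mul_nonneg (sub_nonneg.2 hc) (sq_nonneg w), mul_nonneg (sub_nonneg.2 hc) (sub_nonneg.2 h1.le)]
  · by_contra hc
    push Not at hc
    nlinarith [mul_nonneg (sub_nonneg.2 hc) (sq_nonneg w), mul_nonneg (sub_nonneg.2 hc) (sub_nonneg.2 h1.le)]

lemma trib_err2 (w : ℝ) (h : w^3-w^2-w-1=0) (k : ℕ) :
    w*((-w^2+4*w-1)*trib (k+2) - w^(k+2)) =
      -w*(w-1)*((-w^2+4*w-1)*trib (k+1) - w^(k+1)) - ((-w^2+4*w-1)*trib k - w^k) := by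
  induction k with
  | zero => simp [trib]; linear_combination (1-w)*h
  | succ k ih =>
    have : trib (k+1+2) = trib (k+2) + trib (k+1) + trib k := by rw [trib]
    rw [this]; push_cast
    linear_combination w * ih - ((-w^2+4*w-1)*(trib (k+1):ℝ) - w^(k+1) + w^(k+1)) * h

lemma trib_err (w : ℝ) (h : w^3-w^2-w-1=0) (k : ℕ) : |(-w^2+4*w-1)*trib k - w^k| ≤ 2 := by
  obtain ⟨h1, h2⟩ := root_bds w h
  obtain ⟨e, he⟩ : ∃ e : ℕ → ℝ, ∀ k, e k = (-w^2+4*w-1)*trib k - w^k := ⟨_, fun _ => rfl⟩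
  have hrec : ∀ k, w * e (k+2) = -w*(w-1)*e (k+1) - e k := by
    intro k; rw [he, he, he]; exact trib_err2 w h k
  have hQ : ∀ k, w*e (k+1)^2 + w*(w-1)*e (k+1)*e k + e k^2 ≤ 2 := by
    intro k
    induction k with
    | zero =>
      have e0 : e 0 = -1 := by rw [he]; simp [trib]
      have e1 : e 1 = -w^2+3*w-1 := by rw [he]; simp [trib]; ring
      rw [zero_add, e0, e1]
      have ha : 1.1 ≤ -w^2+3*w-1 := by nlinarith
      have hb : -w^2+3*w-1 ≤ 1.15 := by nlinarith
      have : (-w^2+3*w-1)^2 ≤ 1.15^2 := by gcongr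
      have h3 : w*(w-1) ≥ 1.5 := by nlinarith
      nlinarith
    | succ k ih =>
      have hr := hrec k
      have hid : w*(w*e (k+2)^2 + w*(w-1)*e (k+2)*e (k+1) + e (k+1)^2) = w*e (k+1)^2 + w*(w-1)*e (k+1)*e k + e k^2 := by
        linear_combination (w*e (k+2) - e k) * hr
      have hn : 0 ≤ w*e (k+2)^2 + w*(w-1)*e (k+2)*e (k+1) + e (k+1)^2 := by
        have h4 : 0 ≤ 1 - w*(w-1)^2/4 := by nlinarith
        have : w*e (k+2)^2 + w*(w-1)*e (k+2)*e (k+1) + e (k+1)^2 = w*(e (k+2) + (w-1)/2*e (k+1))^2 + (1-w*(w-1)^2/4)*e (k+1)^2 := by ring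
        rw [this]; positivity
      change w*e (k+2)^2 + w*(w-1)*e (k+2)*e (k+1) + e (k+1)^2 ≤ 2
      nlinarith
  rw [← he]
  have h4 : 1/2 ≤ 1 - w*(w-1)^2/4 := by nlinarith
  have := hQ k
  have hid : w*e (k+1)^2 + w*(w-1)*e (k+1)*e k + e k^2 = w*(e (k+1) + (w-1)/2*e k)^2 + (1-w*(w-1)^2/4)*e k^2 := by ring
  have h5 : 0 ≤ w*(e (k+1) + (w-1)/2*e k)^2 := by positivity
  have h6 : 1/2*e k^2 ≤ (1-w*(w-1)^2/4)*e k^2 := by gcongr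
  exact abs_le_of_sq_le_sq (by linarith) (by norm_num)

lemma fib_err (k : ℕ) : |√5 * Nat.fib k - ((1+√5)/2)^k| ≤ 1 := by
  have h5 : (0:ℝ) < √5 := by positivity
  rw [Real.coe_fib_eq]
  have : √5 * ((((1+√5)/2)^k - ((1-√5)/2)^k)/√5) - ((1+√5)/2)^k = -((1-√5)/2)^k := by
    field_simp; ring
  have hb : |(1-√5)/2| ≤ 1 := by
    have h1 := Real.sq_sqrt (show (0:ℝ) ≤ 5 by norm_num)
    rw [abs_le]; constructor <;> nlinarith
  have h2 : |√5 * ((((1+√5)/2)^k - ((1-√5)/2)^k)/√5) - ((1+√5)/2)^k| = |(1-√5)/2|^k := by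
    rw [this, abs_neg, abs_pow]
  have h3 : |(1-√5)/2|^k ≤ 1 := pow_le_one₀ (abs_nonneg _) hb
  exact h2.le.trans h3

lemma log_close (U V t : ℝ) (hU : 0 < U) (hV : 0 < V) (ht0 : 0 ≤ t) (ht : t ≤ 1/10) (h : |U-V| ≤ t*(U+V)) :
    |Real.log U - Real.log V| ≤ 3*t := by
  have key : ∀ U V : ℝ, 0 < U → 0 < V → U - V ≤ t*(U+V) → Real.log U - Real.log V ≤ 3*t := by
    intro U V hU hV h
    have h1 : U ≤ V*(1+3*t) := by
      have h2 : U*(1-t) ≤ V*(1+t) := by linarith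
      have h3 : V*(1+t) ≤ V*((1+3*t)*(1-t)) := by
        gcongr; nlinarith
      have : 0 < 1-t := by linarith
      nlinarith
    rw [← Real.log_div hU.ne' hV.ne']
    have h4 : U/V ≤ 1+3*t := by rw [div_le_iff₀ hV]; linarith
    have := Real.log_le_sub_one_of_pos (div_pos hU hV)
    linarith
  have ha := abs_le.1 h
  rw [abs_le]
  have h1 := key U V hU hV ha.2
  have h2 := key V U hV hU (by linarith)
  constructor <;> linarith

lemma log_n_big (x : ℝ) (hx3 : 3 ≤ x) (h : 2.03*10^15*Real.log x ≤ x*0.62) : 39 ≤ Real.log x := by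
  have e1 := Real.exp_one_lt_d9
  have hx0 : 0 < x := by linarith
  have ha : 1 ≤ Real.log x := by
    rw [Real.le_log_iff_exp_le hx0]; linarith
  have hb : 35 ≤ Real.log x := by
    rw [Real.le_log_iff_exp_le hx0]
    have : Real.exp 35 = Real.exp 1 ^ 35 := by rw [← Real.exp_nat_mul]; norm_num
    rw [this]
    have : Real.exp 1 ^ 35 ≤ 2.7182818286^35 := by gcongr
    have h3 : (2.7182818286:ℝ)^35 ≤ 3*10^15 := by norm_num
    linarith
  rw [Real.le_log_iff_exp_le hx0]
  have : Real.exp 39 = Real.exp 1 ^ 39 := by rw [← Real.exp_nat_mul]; norm_num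
  rw [this]
  have : Real.exp 1 ^ 39 ≤ 2.7182818286^39 := by gcongr
  have h3 : (2.7182818286:ℝ)^39 ≤ 9*10^16 := by norm_num
  linarith

lemma pow_small (b X : ℝ) (hb : 0 < b) (n k : ℕ) (h : X ≤ ((n:ℝ)-k)*Real.log b) :
    b^k ≤ b^n * Real.exp (-X) := by
  have e : ∀ j : ℕ, b^j = Real.exp (j*Real.log b) := by
    intro j; rw [Real.exp_nat_mul, Real.exp_log hb]
  rw [e k, e n, ← Real.exp_add]
  apply Real.exp_le_exp.2; linarith

lemma dv1 (s x y : ℝ) (hs : 2 ≤ s) (h1 : -2 ≤ s*x - s*y) (h2 : s*x - s*y ≤ 2) : |x-y| ≤ 1 := by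
  rw [abs_le]
  constructor
  · by_contra hc
    push Not at hc
    nlinarith
  · by_contra hc
    push Not at hc
    nlinarith

lemma dv2 (s x A : ℝ) (hs : 2 ≤ s) (h1 : -2 ≤ s*x - A) (h2 : s*x - A ≤ 2) (hA : 1 ≤ A) : |x| ≤ 2*A := by
  rw [abs_le]
  constructor
  · by_contra hc
    push Not at hc
    nlinarith
  · by_contra hc
    push Not at hc
    nlinarith

set_option maxHeartbeats 1000000 in
theorem fib_trib_min_bound (α αT : ℝ)
    (hα : α = (1 + Real.sqrt 5) / 2)
    (hroot : αT ^ 3 - αT ^ 2 - αT - 1 = 0)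
    (huniq : ∀ x : ℝ, x ^ 3 - x ^ 2 - x - 1 = 0 → x = αT)
    (n m n₁ m₁ : ℕ) (hn₁ : 2 ≤ n₁) (hn : n₁ < n) (hm₁ : 2 ≤ m₁) (hm : m₁ < m)
    (h : (Nat.fib n : ℤ) - Nat.fib n₁ = trib m - trib m₁) :
    min (((n : ℝ) - n₁) * Real.log α) (((m : ℝ) - m₁) * Real.log αT) <
      2.03 * 10 ^ 15 * Real.log n := by
  by_contra hcon
  push Not at hcon
  obtain ⟨X, hX⟩ : ∃ X : ℝ, X = 2.03 * 10 ^ 15 * Real.log n := ⟨_, rfl⟩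
  rw [← hX] at hcon
  obtain ⟨hc1, hc2⟩ := le_min_iff.1 hcon
  obtain ⟨w1, w2⟩ := root_bds αT hroot
  have s5 := Real.sq_sqrt (show (0:ℝ) ≤ 5 by norm_num)
  have s0 : 0 ≤ √5 := Real.sqrt_nonneg 5
  have s1 : 2.236 < √5 := by nlinarith
  have s2 : √5 < 2.237 := by nlinarith
  have a1 : 1.618 ≤ α := by rw [hα]; linarith
  have a2 : α ≤ 1.62 := by rw [hα]; linarith
  have hα0 : 0 < α := by linarith
  have hw0 : 0 < αT := by linarith
  obtain ⟨δ, hδ⟩ : ∃ δ : ℝ, δ = -αT^2+4*αT-1 := ⟨_, rfl⟩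
  have d1 : 2.9 < δ := by rw [hδ]; nlinarith
  have d2 : δ < 3 := by rw [hδ]; nlinarith
  have hn3 : (3:ℝ) ≤ n := by exact_mod_cast (by omega : 3 ≤ n)
  have hlogα : Real.log α ≤ 0.62 := by
    have := Real.log_le_sub_one_of_pos hα0
    linarith
  have hlogα0 : 0 ≤ Real.log α := Real.log_nonneg (by linarith)
  have hn10 : (0:ℝ) ≤ n₁ := Nat.cast_nonneg _
  have hlog : 39 ≤ Real.log n := by
    apply log_n_big _ hn3
    rw [← hX]
    calc X ≤ ((n:ℝ)-n₁)*Real.log α := hc1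
      _ ≤ n*Real.log α := by gcongr; linarith
      _ ≤ n*0.62 := by gcongr
  have hp1 := pow_small α X hα0 n n₁ hc1
  have hp2 := pow_small αT X hw0 m m₁ hc2
  obtain ⟨ε, hε⟩ : ∃ ε : ℝ, ε = Real.exp (-X) := ⟨_, rfl⟩
  rw [← hε] at hp1 hp2
  have hε0 : 0 < ε := by rw [hε]; exact Real.exp_pos _
  have hX5 : 10^4 ≤ X := by rw [hX]; linarith
  have hεs : ε ≤ 1/1000 := by
    have : Real.exp X ≥ 1000 := by have := Real.add_one_le_exp X; linarith
    rw [hε, Real.exp_neg, inv_eq_one_div]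
    exact one_div_le_one_div_of_le (by norm_num) this
  have fe1 := abs_le.1 (fib_err n)
  have fe2 := abs_le.1 (fib_err n₁)
  have te1 := abs_le.1 (trib_err αT hroot m)
  have te2 := abs_le.1 (trib_err αT hroot m₁)
  rw [← hα] at fe1 fe2
  rw [← hδ] at te1 te2
  have hR : (Nat.fib n : ℝ) - Nat.fib n₁ = trib m - trib m₁ := by exact_mod_cast h
  have q1 : 1 ≤ α^n₁ := one_le_pow₀ (by linarith)
  have q2 : 1 ≤ αT^m₁ := one_le_pow₀ (by linarith)
  obtain ⟨U, hU⟩ : ∃ U : ℝ, U = α^n/√5 := ⟨_, rfl⟩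
  obtain ⟨V, hV⟩ : ∃ V : ℝ, V = αT^m/δ := ⟨_, rfl⟩
  have hs0 : 0 < √5 := by linarith
  have hδ0 : 0 < δ := by linarith
  have hU' : α^n = √5*U := by rw [hU]; field_simp
  have hV' : αT^m = δ*V := by rw [hV]; field_simp
  have hUp : 0 < U := by rw [hU]; positivity
  have hVp : 0 < V := by rw [hV]; positivity
  rw [hU'] at fe1 hp1
  rw [hV'] at te1 hp2
  have b1 : |(Nat.fib n:ℝ) - U| ≤ 1 := dv1 √5 _ _ (by linarith) (by linarith) (by linarith)
  have b2 : |(trib m:ℝ) - V| ≤ 1 := dv1 δ _ _ (by linarith) te1.1 te1.2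
  have b3 : (Nat.fib n₁:ℝ) ≤ 2*α^n₁ :=
    (le_abs_self _).trans (dv2 √5 _ _ (by linarith) (by linarith) (by linarith) q1)
  have b4 : |(trib m₁:ℝ)| ≤ 2*αT^m₁ := dv2 δ _ _ (by linarith) te2.1 te2.2 q2
  have b5 : (0:ℝ) ≤ Nat.fib n₁ := Nat.cast_nonneg _
  have r1 : α^n₁ ≤ 3*U*ε := hp1.trans (by gcongr; linarith)
  have r2 : αT^m₁ ≤ 3*V*ε := hp2.trans (by gcongr)
  have hclose : |U-V| ≤ (9*ε)*(U+V) := by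
    have := abs_le.1 b1
    have := abs_le.1 b2
    have := abs_le.1 b4
    have c : |U-V| ≤ 3*α^n₁ + 3*αT^m₁ := by
      rw [abs_le]; constructor <;> linarith
    linarith
  have hlc := log_close U V (9*ε) hUp hVp (by linarith) (by linarith) hclose
  have hmn : m ≤ n := by
    by_contra hc
    push Not at hc
    have hc' := (abs_le.1 hclose).1
    have k1 : V*0.99 ≤ U*1.01 := by
      have : 9*ε*(U+V) ≤ 0.009*(U+V) := by gcongr; linarith
      linarith
    have k2 : αT^(n+1) ≤ αT^m := pow_le_pow_right₀ (by linarith) hc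
    have k3 : α^n ≤ αT^n := pow_le_pow_left₀ hα0.le (by linarith) n
    rw [pow_succ] at k2
    rw [hV'] at k2
    rw [hU'] at k3
    have k4 : √5*U*1.839 ≤ αT^n*αT := by gcongr
    have k5 : 2.236*U*1.839 ≤ √5*U*1.839 := by gcongr
    have k6 : δ*V ≤ 3*V := by gcongr
    linarith
  have hexp : (n:ℝ) = Real.exp (Real.log n) := (Real.exp_log (by linarith)).symm
  have hceil1 := Nat.le_ceil (Real.log n/4)
  have hceil2 := Nat.ceil_lt_add_one (show 0 ≤ Real.log n/4 by linarith)
  obtain ⟨h0, hh0⟩ : ∃ h0 : ℕ, h0 = ⌈Real.log n/4⌉₊ := ⟨_, rfl⟩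
  rw [← hh0] at hceil1 hceil2
  have h10 : 10 ≤ h0 := by
    have : (9:ℝ) < h0 := by linarith
    exact_mod_cast this
  refine main_thm αT hroot w1 w2 n m h0 _ h10 (by omega) hmn ?_ rfl ?_
  · conv_lhs => rw [hexp]
    apply Real.exp_le_exp.2; linarith
  · rw [← hα, ← hδ]
    have e : n * Real.log α - m * Real.log αT + Real.log (δ/√5) = Real.log U - Real.log V := by
      rw [hU, hV, Real.log_div (pow_pos hα0 n).ne' hs0.ne', Real.log_div (pow_pos hw0 m).ne' hδ0.ne', Real.log_div hδ0.ne' hs0.ne', Real.log_pow, Real.log_pow]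
      ring
    rw [e]
    refine hlc.trans ?_
    have l27 : (27:ℝ) ≤ Real.exp 27 := by have := Real.add_one_le_exp (27:ℝ); linarith
    calc 3*(9*ε) = 27*ε := by ring
      _ ≤ Real.exp 27 * ε := by gcongr
      _ = Real.exp (27 - X) := by rw [hε, ← Real.exp_add]; congr 1
      _ ≤ _ := by
        apply Real.exp_le_exp.2
        rw [hX]; push_cast
        linarith
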